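/- Rationality and p-adic divisibility over the affine base (Theorem 1.2(a) for tensor powers): the power series L_k(T)^{(−1)^{s+1}} is the expansion at T = 0 of a rational function with coefficients in ℚ(ζ_p); write it in reduced form as Π_{i=1}^R(1−α_i T)/Π_{j=1}^S(1−β_j T) with nonzero α_i, β_j ∈ ℂ and α_i ≠ β_j for all i,j. Then all α_i, β_j are algebraic integers, and for every number field F ⊂ ℂ containing ℚ(ζ_p) and all the α_i and β_j, and every maximal ideal 𝔭 of the ring of integers of F lying over p, one has ord_q(α_i) ≥ w(Γ) and ord_q(β_j) ≥ w(Γ) for all i, j, where ord_q := v_𝔭/(e·a) with v_𝔭 the 𝔭-adic valuation and e the absolute ramification index of 𝔭 over p (so ord_q(q) = 1). -/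

import Mathlib

open scoped BigOperators Classical Pointwise

set_option maxHeartbeats 1000000
set_option synthInstance.maxHeartbeats 400000

noncomputable section

namespace HS

/-- A fixed algebraic closure of the prime field `F_p`. -/
abbrev Omg (p : ℕ) [Fact p.Prime] : Type := AlgebraicClosure (ZMod p)

/-- The absolute trace `Tr_{F_{p^d}/F_p}(y) = ∑_{j<d} y^{p^j}`, read back in `ZMod p`
via the (injective) structure map `ZMod p → Omg p`. -/
def traceZmod (p : ℕ) [Fact p.Prime] (d : ℕ) (y : Omg p) : ZMod p :=
  Function.invFun (algebraMap (ZMod p) (Omg p)) (∑ j ∈ Finset.range d, y ^ p ^ j)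

/-- Value of the Laurent monomial `x^μ`. -/
def mon {K : Type} [Field K] {n : ℕ} (x : Fin n → K) (μ : Fin n → ℤ) : K :=
  ∏ i, x i ^ μ i

/-- Value of the Laurent polynomial `Ḡ(x,t) = f̄(x) + P̄(x,t)`, where `f̄` and `P̄` are given
by their (finitely supported) coefficient functions: for `P̄`, the index `(μ, γ)` records the
`x`-exponent `μ` and the `t`-exponent `γ`. -/
def Gval {K : Type} [Field K] {n s : ℕ} (f : (Fin n → ℤ) →₀ K)
    (P : ((Fin n → ℤ) × (Fin s → ℤ)) →₀ K) (x : Fin n → K) (t : Fin s → K) : K :=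
  (f.sum fun μ c => c * mon x μ) + P.sum fun gm c => c * mon x gm.1 * mon t gm.2

/-- View an integral exponent vector as a real vector. -/
def toR {n : ℕ} (u : Fin n → ℤ) : Fin n → ℝ := fun i => (u i : ℝ)

/-- The Newton polyhedron at infinity `Δ_∞(f̄)`: convex hull of the origin and the
exponent vectors of the monomials of `f̄`. -/
def NewtonPoly {K : Type} [Field K] {n : ℕ} (f : (Fin n → ℤ) →₀ K) : Set (Fin n → ℝ) :=
  convexHull ℝ (insert 0 (toR '' (f.support : Set (Fin n → ℤ))))

/-- The value at `x` of `x_i ∂f̄^σ/∂x_i`, where `f̄^σ` is the sum of the terms of `f̄`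
whose exponent vector lies in the face `σ`. -/
def faceSum {K : Type} [Field K] {n : ℕ} (f : (Fin n → ℤ) →₀ K) (σ : Set (Fin n → ℝ))
    (i : Fin n) (x : Fin n → K) : K :=
  ∑ μ ∈ f.support.filter (fun μ => toR μ ∈ σ), (μ i : K) * f μ * mon x μ

/-- Nondegeneracy of `f̄` with respect to its Newton polyhedron at infinity: for every
closed face (= exposed subset) not containing the origin, the logarithmic partials of
`f̄^σ` have no common zero with all coordinates nonzero. -/
def Nondeg {K : Type} [Field K] {n : ℕ} (f : (Fin n → ℤ) →₀ K) : Prop :=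
  ∀ σ : Set (Fin n → ℝ), IsExposed ℝ (NewtonPoly f) σ → σ.Nonempty → (0 : Fin n → ℝ) ∉ σ →
    ¬ ∃ x : Fin n → K, (∀ i, x i ≠ 0) ∧ ∀ i, faceSum f σ i x = 0

/-- The relative polytope `Γ`: convex hull of the origin and the points `(1/(1-w(μ)))•γ`
for `(μ,γ)` running over the exponents of `P̄`; here `w` is the gauge of `Δ_∞(f̄)`. -/
def relPoly {K : Type} [Field K] {n s : ℕ} (f : (Fin n → ℤ) →₀ K)
    (P : ((Fin n → ℤ) × (Fin s → ℤ)) →₀ K) : Set (Fin s → ℝ) :=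
  convexHull ℝ (insert 0 ((fun gm : (Fin n → ℤ) × (Fin s → ℤ) =>
    (1 - gauge (NewtonPoly f) (toR gm.1))⁻¹ • toR gm.2) '' (P.support : Set _)))

/-- Dimension of the smallest linear subspace containing a set. -/
def dimSpan {s : ℕ} (Γ : Set (Fin s → ℝ)) : ℕ :=
  Module.finrank ℝ (Submodule.span ℝ Γ)

/-- The lattice-normalized `d`-dimensional volume of a rational polytope `Γ`, defined
(Ehrhart-style) as `lim_{m→∞} #(mΓ ∩ ℤ^s)/m^d`.  When `d` is the dimension of the span of
`Γ`, this is the volume of `Γ` computed in that span with respect to the Haar measure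
normalized so that a fundamental domain of the lattice has volume 1. -/
def latticeVol {s : ℕ} (Γ : Set (Fin s → ℝ)) (d : ℕ) : ℝ :=
  Filter.limUnder Filter.atTop fun m : ℕ =>
    (Nat.card {u : Fin s → ℤ // toR u ∈ (m : ℝ) • Γ} : ℝ) / (m : ℝ) ^ d

/-- The cone over a set: union of the rays from the origin through its points. -/
def coneOf {s : ℕ} (Γ : Set (Fin s → ℝ)) : Set (Fin s → ℝ) :=
  {v | ∃ c : ℝ, 0 ≤ c ∧ ∃ γ ∈ Γ, v = c • γ}

/-- `w(Γ) = min { w_Γ(u) : u ∈ ℤ^s ∩ Cone(Γ), all coordinates of u ≥ 1 }`,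
where `w_Γ` is the gauge of `Γ`. -/
def wMin {s : ℕ} (Γ : Set (Fin s → ℝ)) : ℝ :=
  sInf {r : ℝ | ∃ u : Fin s → ℤ, (∀ i, (1 : ℤ) ≤ u i) ∧ toR u ∈ coneOf Γ ∧ r = gauge Γ (toR u)}

/-- The cyclotomic field `ℚ(ζ)` inside `ℂ`. -/
def cyclo (ζ : ℂ) : Subfield ℂ := Subfield.closure {ζ}

/-- The toric exponential sum `∑_{x ∈ (F_{p^d}^×)^n} Θ(Tr(Ḡ(x,t)))`. -/
def torSum (p : ℕ) [Fact p.Prime] {n s : ℕ} (Θ : AddChar (ZMod p) ℂ)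
    (f : (Fin n → ℤ) →₀ Omg p) (P : ((Fin n → ℤ) × (Fin s → ℤ)) →₀ Omg p)
    (d : ℕ) (t : Fin s → Omg p) : ℂ :=
  ∑ᶠ (x : Fin n → Omg p) (_ : ∀ i, x i ^ p ^ d = x i ∧ x i ≠ 0),
    Θ (traceZmod p d (Gval f P x t))

/-- `N_m` for the `k`-th tensor power family over the torus `G_m^s`. -/
def Ntor (p a : ℕ) [Fact p.Prime] {n s : ℕ} (Θ : AddChar (ZMod p) ℂ)
    (f : (Fin n → ℤ) →₀ Omg p) (P : ((Fin n → ℤ) × (Fin s → ℤ)) →₀ Omg p)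
    (k m : ℕ) : ℂ :=
  ∑ᶠ (t : Fin s → Omg p) (_ : ∀ j, t j ^ p ^ (a * m) = t j ∧ t j ≠ 0),
    ((-1 : ℂ) ^ n * torSum p Θ f P (a * m) t) ^ k

/-- `N_m` for the `k`-th tensor power family over the affine base `A^s`. -/
def Naff (p a : ℕ) [Fact p.Prime] {n s : ℕ} (Θ : AddChar (ZMod p) ℂ)
    (f : (Fin n → ℤ) →₀ Omg p) (P : ((Fin n → ℤ) × (Fin s → ℤ)) →₀ Omg p)
    (k m : ℕ) : ℂ :=
  ∑ᶠ (t : Fin s → Omg p) (_ : ∀ j, t j ^ p ^ (a * m) = t j),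
    ((-1 : ℂ) ^ n * torSum p Θ f P (a * m) t) ^ k

/-- The `𝔭`-adic valuation of an algebraic number `x` lying in the ring of integers of a
subfield `F ⊆ ℂ`: the largest `t` with `x ∈ 𝔭^t`. -/
def ordIn (F : Subfield ℂ) (Pid : Ideal (NumberField.RingOfIntegers F)) (x : ℂ) : ℕ :=
  sSup {t : ℕ | ∃ y : NumberField.RingOfIntegers F,
    ((algebraMap (NumberField.RingOfIntegers F) F y : F) : ℂ) = x ∧ y ∈ Pid ^ t}

/-- The `𝔭`-adic valuation on a subring of `ℂ`. -/
def ordSub (R0 : Subring ℂ) (Pid : Ideal R0) (x : ℂ) : ℕ :=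
  sSup {t : ℕ | ∃ y : R0, (y : ℂ) = x ∧ y ∈ Pid ^ t}

/-- The degree `[F_q(λ):F_q]` of a point `λ ∈ F̄_q^s`, where `q = p^a`. -/
def degOf (p a : ℕ) [Fact p.Prime] {s : ℕ} (lam : Fin s → Omg p) : ℕ :=
  sInf {d : ℕ | 0 < d ∧ ∀ j, lam j ^ p ^ (a * d) = lam j}

/-!
Expanding the `k`-th power turns `N_m` into one exponential sum over `k` copies of the torus and
one affine space, and stratifying the affine space by its vanishing coordinates reduces rationality
to toric sums. There Dwork's argument applies, with the splitting function replaced by a polynomial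
splitting the additive character modulo a prescribed power of `p`: a finite trace formula for the
Frobenius operator writes each toric sum as a combination of power sums of eigenvalues of matrices
with `p`-adically decaying rows, so the `L`-function is a quotient of `p`-adically approximable
power series. Together with its integrality and its archimedean growth this makes the Hankel
determinants of the coefficients vanish, by the product formula.

For the divisibility, expand the split characters into monomials. Only terms satisfying a system of
congruences modulo `q^m - 1` survive, and the base-`p` digits of such a solution, averaged over
their cyclic rotations, form a nonnegative combination of exponents with positive integral
coordinates. Hence `q^{m w(Γ)}` divides `N_m`. A bound `|N_m|_v ≤ c ^ m` on signed power sums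
passes to each reciprocal root and pole, at every finite place `v`; this yields both integrality
and the lower bound on the order at `𝔭`.
-/

/-! ### Logarithmic derivatives of power series -/

section LogDeriv

open PowerSeries Finset

variable {A : Type*} [CommRing A]

/-- `f' = f · ∑ s (m + 1) Xᵐ`: a denominator-free way to say that `f` is a constant multiple of
`exp (∑_{m ≥ 1} s m Xᵐ / m)`. The value `s 0` is irrelevant. -/
def HasLogDeriv (f : A⟦X⟧) (s : ℕ → A) : Prop :=
  derivative A f = f * mk fun m => s (m + 1)

namespace HasLogDeriv

variable {f g : A⟦X⟧} {s t : ℕ → A}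

lemma iff_coeff : HasLogDeriv f s ↔ ∀ m, coeff (m + 1) f * ((m : A) + 1) =
    ∑ x ∈ antidiagonal m, coeff x.1 f * s (x.2 + 1) := by
  simp only [HasLogDeriv, PowerSeries.ext_iff, coeff_derivative, coeff_mul, coeff_mk]

lemma congr (hf : HasLogDeriv f s) (h : ∀ m, 1 ≤ m → s m = t m) : HasLogDeriv f t := by
  have : (mk fun m => s (m + 1)) = mk fun m => t (m + 1) :=
    congrArg mk (funext fun m => h _ m.succ_pos)
  rwa [HasLogDeriv, ← this]

lemma one : HasLogDeriv (1 : A⟦X⟧) fun _ => 0 := by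
  have : (mk fun _ => (0 : A)) = 0 := by ext; simp
  simp [HasLogDeriv, this]

lemma mul (hf : HasLogDeriv f s) (hg : HasLogDeriv g t) :
    HasLogDeriv (f * g) fun m => s m + t m := by
  have : (mk fun m => s (m + 1) + t (m + 1)) =
      (mk fun m => s (m + 1)) + mk fun m => t (m + 1) := by ext; simp
  rw [HasLogDeriv, this, Derivation.leibniz, hf, hg, smul_eq_mul, smul_eq_mul]
  ring

lemma pow (hf : HasLogDeriv f s) (c : ℕ) : HasLogDeriv (f ^ c) fun m => (c : A) * s m := by
  induction c with
  | zero => simpa using one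
  | succ c ih =>
    rw [pow_succ]
    exact (ih.mul hf).congr fun m _ => by push_cast; ring

lemma prod {ι : Type*} (I : Finset ι) {f : ι → A⟦X⟧} {s : ι → ℕ → A}
    (hf : ∀ i ∈ I, HasLogDeriv (f i) (s i)) :
    HasLogDeriv (∏ i ∈ I, f i) fun m => ∑ i ∈ I, s i m := by
  induction I using Finset.induction_on with
  | empty => simpa using one
  | insert a I ha ih =>
    simp only [prod_insert ha, sum_insert ha]
    exact (hf a (mem_insert_self a I)).mul (ih fun i hi => hf i (mem_insert_of_mem hi))

lemma map {B : Type*} [CommRing B] (φ : A →+* B) (hf : HasLogDeriv f s) :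
    HasLogDeriv (PowerSeries.map φ f) fun m => φ (s m) :=
  iff_coeff.2 fun m => by simpa [map_sum] using congrArg φ (iff_coeff.1 hf m)

lemma of_mul_eq_one (hf : HasLogDeriv f s) (h : f * g = 1) : HasLogDeriv g fun m => -s m := by
  have hneg : (mk fun m => -s (m + 1)) = -mk fun m => s (m + 1) := by ext; simp
  have hleib : f * derivative A g + g * derivative A f = 0 := by
    simpa [Derivation.leibniz] using congrArg (derivative A) h
  rw [HasLogDeriv, hneg]
  rw [hf] at hleib
  linear_combination g * hleib - (derivative A g + g * mk fun m => s (m + 1)) * h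

/-- The recursion for the coefficients of `f` loses a factor `m` at step `m`, whence `m!`. -/
lemma dvd_factorial_mul_coeff_sub (hf : HasLogDeriv f s) (hg : HasLogDeriv g t)
    (h0 : coeff 0 f = coeff 0 g) (D : A) (M : ℕ) (h : ∀ m, 1 ≤ m → m ≤ M → D ∣ s m - t m) :
    ∀ m ≤ M, D ∣ (m.factorial : A) * (coeff m f - coeff m g) := by
  intro m
  induction m using Nat.strong_induction_on with
  | _ m ih =>
    intro hm
    rcases m with _ | m
    · simp [h0]
    have expand : (((m + 1).factorial : ℕ) : A) * (coeff (m + 1) f - coeff (m + 1) g) =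
        ∑ x ∈ antidiagonal m,
          ((m.factorial : A) * coeff x.1 f * (s (x.2 + 1) - t (x.2 + 1))
            + (m.factorial : A) * (coeff x.1 f - coeff x.1 g) * t (x.2 + 1)) := by
      calc _ = (m.factorial : A) *
            (coeff (m + 1) f * ((m : A) + 1) - coeff (m + 1) g * ((m : A) + 1)) := by
            rw [Nat.factorial_succ]; push_cast; ring
        _ = _ := by
            rw [iff_coeff.1 hf, iff_coeff.1 hg, ← sum_sub_distrib, mul_sum]
            exact sum_congr rfl fun x _ => by ring
    rw [expand]
    refine dvd_sum fun x hx => ?_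
    have hx' : x.1 + x.2 = m := mem_antidiagonal.1 hx
    refine dvd_add ((h _ (by omega) (by omega)).mul_left _) (Dvd.dvd.mul_right ?_ _)
    obtain ⟨c, hc⟩ := Nat.factorial_dvd_factorial (show x.1 ≤ m by omega)
    rw [hc, Nat.cast_mul, mul_right_comm]
    exact (ih x.1 (by omega) (by omega)).mul_right _

lemma coeff_eq [IsDomain A] [CharZero A] (hf : HasLogDeriv f s) (hg : HasLogDeriv g t)
    (h0 : coeff 0 f = coeff 0 g) (M : ℕ) (h : ∀ m, 1 ≤ m → m ≤ M → s m = t m) :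
    ∀ m ≤ M, coeff m f = coeff m g := by
  intro m hm
  have := dvd_factorial_mul_coeff_sub hf hg h0 0 M (fun m h1 h2 => by rw [h m h1 h2, sub_self]) m hm
  rw [zero_dvd_iff, mul_eq_zero] at this
  exact sub_eq_zero.1 (this.resolve_left (Nat.cast_ne_zero.2 m.factorial_ne_zero))

lemma one_sub_C_mul_X_pow (a : A) {n : ℕ} (hn : 1 ≤ n) :
    HasLogDeriv (1 - C a * X ^ n) fun m => if n ∣ m then -(n : A) * a ^ (m / n) else 0 := by
  obtain ⟨n, rfl⟩ := Nat.exists_eq_add_of_le' hn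
  refine iff_coeff.2 fun m => ?_
  set S : A⟦X⟧ := mk fun m =>
    if n + 1 ∣ m + 1 then -((n + 1 : ℕ) : A) * a ^ ((m + 1) / (n + 1)) else 0
  have hsum : ∑ x ∈ antidiagonal m, coeff x.1 (1 - C a * X ^ (n + 1)) *
      (if n + 1 ∣ x.2 + 1 then -((n + 1 : ℕ) : A) * a ^ ((x.2 + 1) / (n + 1)) else 0) =
      coeff m S - if n + 1 ≤ m then a * coeff (m - (n + 1)) S else 0 := by
    calc _ = coeff m ((1 - C a * X ^ (n + 1)) * S) := by simp only [coeff_mul, S, coeff_mk]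
      _ = _ := by
        rw [sub_mul, one_mul, map_sub, mul_assoc, coeff_C_mul, coeff_X_pow_mul', mul_ite, mul_zero]
  rw [hsum]
  simp only [S, coeff_mk, map_sub, coeff_one, coeff_C_mul, coeff_X_pow, Nat.succ_ne_zero,
    if_false, zero_sub, Nat.add_left_inj]
  rcases lt_trichotomy m n with h | rfl | h
  · have hdvd : ¬ n + 1 ∣ m + 1 := fun hd => by have := Nat.le_of_dvd m.succ_pos hd; omega
    simp [h.ne, hdvd, show ¬ n + 1 ≤ m by omega]
  · simp; ring
  · obtain ⟨r, rfl⟩ := Nat.exists_eq_add_of_le (show n + 1 ≤ m by omega)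
    have hr : n + 1 + r + 1 = n + 1 + (r + 1) := by ring
    simp only [hr, Nat.dvd_add_right (dvd_refl (n + 1)), Nat.add_sub_cancel_left,
      Nat.add_div_left _ n.succ_pos, pow_succ, if_pos (Nat.le_add_right (n + 1) r)]
    split_ifs <;> first | omega | simp_all [pow_succ, mul_comm, mul_left_comm]

end HasLogDeriv

end LogDeriv

section CharpolyRev

open PowerSeries Finset Matrix

lemma derivation_prod {R B M ι : Type*} [DecidableEq ι] [CommRing R] [CommRing B] [Algebra R B]
    [AddCommGroup M] [Module R M] [Module B M] (D : Derivation R B M) (I : Finset ι) (f : ι → B) :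
    D (∏ i ∈ I, f i) = ∑ i ∈ I, (∏ j ∈ I.erase i, f j) • D (f i) := by
  induction I using Finset.induction_on with
  | empty => simp
  | insert a I ha ih =>
    rw [prod_insert ha, D.leibniz, ih, sum_insert ha, erase_insert ha, smul_sum, add_comm]
    refine congrArg₂ _ rfl (sum_congr rfl fun i hi => ?_)
    have hai : a ≠ i := fun h => ha (h ▸ hi)
    rw [erase_insert_of_ne hai, prod_insert (fun h => ha (mem_of_mem_erase h)), mul_smul]

lemma trace_adjugate_mul {B n : Type*} [CommRing B] [Fintype n] [DecidableEq n]
    (M N : Matrix n n B) :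
    (M.adjugate * N).trace = ∑ i, (M.updateCol i fun j => N j i).det := by
  refine sum_congr rfl fun i _ => ?_
  rw [← cramer_apply, cramer_eq_adjugate_mulVec]
  simp only [diag_apply, mul_apply, mulVec, dotProduct]

lemma derivation_det {R B n : Type*} [CommRing R] [CommRing B] [Algebra R B] [Fintype n]
    [DecidableEq n] (D : Derivation R B B) (M : Matrix n n B) :
    D M.det = (M.adjugate * M.map D).trace := by
  simp_rw [trace_adjugate_mul, det_apply, map_sum]
  rw [sum_comm]
  refine sum_congr rfl fun σ _ => ?_
  rw [← smul_sum, Units.smul_def, Units.smul_def, map_zsmul, derivation_prod]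
  refine congrArg _ (sum_congr rfl fun i _ => ?_)
  rw [← prod_erase_mul _ _ (mem_univ i), smul_eq_mul]
  refine congrArg₂ _ (prod_congr rfl fun j hj => ?_) (by simp)
  rw [updateCol_ne (ne_of_mem_erase hj)]

variable {A n : Type*} [CommRing A] [Fintype n] [DecidableEq n] (M : Matrix n n A)

lemma coe_charpolyRev :
    (M.charpolyRev : A⟦X⟧) = (1 - (X : A⟦X⟧) • M.map (C (R := A))).det := by
  rw [charpolyRev, ← Polynomial.coeToPowerSeries.ringHom_apply, RingHom.map_det]
  congr 1
  ext i j : 1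
  rcases eq_or_ne i j with rfl | h <;>
    simp [*, Polynomial.coeToPowerSeries.ringHom_apply, (commute_X _).eq]

lemma coeff_zero_coe_charpolyRev : coeff 0 (M.charpolyRev : A⟦X⟧) = 1 := by
  rw [Polynomial.coeff_coe, Polynomial.coeff_zero_eq_eval_zero, eval_charpolyRev]

lemma one_sub_X_smul_mul_geom : (1 - (X : A⟦X⟧) • M.map (C (R := A))) *
    Matrix.of (fun i j => PowerSeries.mk fun m => (M ^ m) i j) = 1 := by
  ext i j m
  rw [sub_mul, one_mul, Matrix.smul_mul, Matrix.sub_apply, Matrix.smul_apply, map_sub, smul_eq_mul]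
  rcases m with _ | m
  · rcases eq_or_ne i j with rfl | h <;> simp [*]
  · rw [coeff_succ_X_mul, mul_apply, map_sum]
    rcases eq_or_ne i j with rfl | h <;> simp [*, pow_succ', mul_apply]

lemma hasLogDeriv_charpolyRev : HasLogDeriv (M.charpolyRev : A⟦X⟧) fun m => -(M ^ m).trace := by
  set N : Matrix n n A⟦X⟧ := 1 - (X : A⟦X⟧) • M.map (C (R := A)) with hN
  set G : Matrix n n A⟦X⟧ := Matrix.of fun i j => PowerSeries.mk fun m => (M ^ m) i j with hG
  have hadj : N.adjugate = N.det • G := by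
    calc N.adjugate = N.adjugate * (N * G) := by rw [one_sub_X_smul_mul_geom, mul_one]
      _ = N.det • G := by rw [← mul_assoc, adjugate_mul, Matrix.smul_mul, one_mul]
  have hderiv : N.map (derivative A) = -M.map (C (R := A)) := by
    ext i j m
    have hone : derivative A ((1 : Matrix n n A⟦X⟧) i j) = 0 := by
      rcases eq_or_ne i j with rfl | h <;> simp [*]
    simp only [hN, map_apply, Matrix.sub_apply, Matrix.smul_apply, map_sub, hone, smul_eq_mul,
      Derivation.leibniz, derivative_C, derivative_X, Matrix.neg_apply]
    simp
  rw [HasLogDeriv, coe_charpolyRev, derivation_det, hadj, hderiv, Matrix.smul_mul, trace_smul,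
    smul_eq_mul]
  congr 1
  ext m
  simp [trace, mul_apply, hG, pow_succ]

end CharpolyRev

/-! ### Hankel determinants and rationality -/

section Hankel

open PowerSeries Finset

/-- The Hankel determinant `det (L_{i+j})_{0 ≤ i, j ≤ M}` of the coefficients of a power series. -/
def hankelDet {R : Type*} [CommRing R] (L : R⟦X⟧) (M : ℕ) : R :=
  (Matrix.of fun i j : Fin (M + 1) => coeff ((i : ℕ) + j) L).det

lemma hankelDet_map {R S : Type*} [CommRing R] [CommRing S] (φ : R →+* S) (L : R⟦X⟧) (M : ℕ) :
    hankelDet (PowerSeries.map φ L) M = φ (hankelDet L M) := by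
  rw [hankelDet, hankelDet, RingHom.map_det]
  rfl

variable {K : Type*} [Field K]

/-- `P / Q` is a Padé approximant of `L` of type `(M - 1, M)` that is exact to order one more
than generically possible, which is what the vanishing of a Hankel determinant provides. -/
structure IsPadeApproximant (L : K⟦X⟧) (M : ℕ) (P Q : Polynomial K) : Prop where
  ne_zero : Q ≠ 0
  natDegree_le : Q.natDegree ≤ M
  degree_lt : P.degree < M
  dvd : (X : K⟦X⟧) ^ (2 * M + 1) ∣ (Q : K⟦X⟧) * L - P

lemma exists_isPadeApproximant {L : K⟦X⟧} {M : ℕ} (h : hankelDet L M = 0) :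
    ∃ P Q : Polynomial K, IsPadeApproximant L M P Q := by
  obtain ⟨v, hv, hv0⟩ := Matrix.exists_mulVec_eq_zero_iff.2 h
  set Q : Polynomial K := ∑ j : Fin (M + 1), Polynomial.monomial (M - (j : ℕ)) (v j) with hQ
  have hQcoeff (j : Fin (M + 1)) : Q.coeff (M - (j : ℕ)) = v j := by
    rw [hQ, Polynomial.finsetSum_coeff, sum_eq_single j]
    · simp
    · intro b _ hb
      rw [Polynomial.coeff_monomial, if_neg]
      exact fun h => hb (Fin.ext (by omega))
    · simp
  have hQcoe : (Q : K⟦X⟧) = ∑ j : Fin (M + 1), C (v j) * X ^ (M - (j : ℕ)) := by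
    rw [← Polynomial.coeToPowerSeries.ringHom_apply, map_sum]
    refine sum_congr rfl fun j _ => ?_
    simp [← Polynomial.C_mul_X_pow_eq_monomial, Polynomial.coeToPowerSeries.ringHom_apply]
  have hvanish (i : ℕ) (hi : i ≤ M) : coeff (M + i) ((Q : K⟦X⟧) * L) = 0 := by
    have hrow := congrFun hv0 (⟨i, by omega⟩ : Fin (M + 1))
    simp only [Matrix.mulVec, dotProduct, Matrix.of_apply, Pi.zero_apply] at hrow
    rw [hQcoe, sum_mul, map_sum, ← hrow]
    refine sum_congr rfl fun j _ => ?_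
    rw [mul_assoc, coeff_C_mul, coeff_X_pow_mul', if_pos (by omega), mul_comm,
      show M + i - (M - (j : ℕ)) = i + j by omega]
  refine ⟨trunc M ((Q : K⟦X⟧) * L), Q, ?_, ?_, degree_trunc_lt _ _, ?_⟩
  · rintro h0
    exact hv (funext fun j => by rw [← hQcoeff, h0, Polynomial.coeff_zero, Pi.zero_apply])
  · exact Polynomial.natDegree_sum_le_of_forall_le _ _ fun j _ =>
      (Polynomial.natDegree_monomial_le _).trans (M.sub_le j)
  · rw [X_pow_dvd_iff]
    intro m hm
    rw [map_sub, Polynomial.coeff_coe, coeff_trunc]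
    split_ifs with hlt
    · exact sub_self _
    · obtain ⟨i, rfl⟩ := Nat.exists_eq_add_of_le (not_lt.1 hlt)
      rw [hvanish i (by omega), sub_zero]

namespace IsPadeApproximant

variable {L : K⟦X⟧} {M : ℕ} {P Q P' Q' : Polynomial K}

lemma cross_mul_succ (h : IsPadeApproximant L M P Q) (h' : IsPadeApproximant L (M + 1) P' Q') :
    P * Q' = P' * Q := by
  have hdvd : (Polynomial.X : Polynomial K) ^ (2 * M + 1) ∣ P * Q' - P' * Q := by
    have : (X : K⟦X⟧) ^ (2 * M + 1) ∣ ((P * Q' - P' * Q : Polynomial K) : K⟦X⟧) := by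
      have hcomb : ((P * Q' - P' * Q : Polynomial K) : K⟦X⟧) =
          ((Q' : K⟦X⟧) * L - P') * Q - ((Q : K⟦X⟧) * L - P) * Q' := by push_cast; ring
      rw [hcomb]
      exact (((pow_dvd_pow _ (by omega)).trans h'.dvd).mul_right _).sub (h.dvd.mul_right _)
    simpa only [X_pow_dvd_iff, Polynomial.X_pow_dvd_iff, Polynomial.coeff_coe] using this
  have hdeg {A B : Polynomial K} {a b : ℕ} (hA : A.degree < a) (hB : B.natDegree ≤ b)
      (hab : a + b = 2 * M + 1) : (A * B).degree < (2 * M + 1 : ℕ) := by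
    rcases eq_or_ne A 0 with rfl | hA0
    · rw [zero_mul, Polynomial.degree_zero]; exact WithBot.bot_lt_coe _
    · have hA' := (Polynomial.natDegree_lt_iff_degree_lt hA0).2 hA
      refine Polynomial.degree_le_natDegree.trans_lt (Nat.cast_lt.2 ?_)
      have := Polynomial.natDegree_mul_le (p := A) (q := B)
      omega
  refine sub_eq_zero.1 (Polynomial.eq_zero_of_dvd_of_degree_lt hdvd ?_)
  rw [Polynomial.degree_X_pow]
  exact (Polynomial.degree_sub_le _ _).trans_lt (max_lt
    (hdeg h.degree_lt h'.natDegree_le (by ring)) (hdeg h'.degree_lt h.natDegree_le (by ring)))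

lemma X_pow_dvd_of_cross_mul (h : IsPadeApproximant L M P Q)
    (hcross : P * Q' = P' * Q) : (X : K⟦X⟧) ^ (M + 1) ∣ (Q' : K⟦X⟧) * L - P' := by
  set Z := (Q' : K⟦X⟧) * L - P' with hZ
  have hQZ : (X : K⟦X⟧) ^ (2 * M + 1) ∣ (Q : K⟦X⟧) * Z := by
    have hcoe : (P : K⟦X⟧) * Q' = P' * Q := by
      rw [← Polynomial.coe_mul, ← Polynomial.coe_mul, hcross]
    have : (Q : K⟦X⟧) * Z = ((Q : K⟦X⟧) * L - P) * Q' := by rw [hZ]; linear_combination hcoe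
    rw [this]
    exact h.dvd.mul_right _
  have hordQ : (Q : K⟦X⟧).order ≤ M := by
    refine (order_le Q.natDegree ?_).trans (by exact_mod_cast h.natDegree_le)
    rw [Polynomial.coeff_coe]
    exact Polynomial.leadingCoeff_ne_zero.2 h.ne_zero
  have hadd : (M : ℕ∞) + (M + 1 : ℕ) ≤ M + Z.order := by
    calc (M : ℕ∞) + (M + 1 : ℕ) = (2 * M + 1 : ℕ) := by push_cast; ring
      _ ≤ ((Q : K⟦X⟧) * Z).order := nat_le_order _ _ (X_pow_dvd_iff.1 hQZ)
      _ = (Q : K⟦X⟧).order + Z.order := order_mul _ _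
      _ ≤ M + Z.order := by gcongr
  have hordZ := (ENat.add_le_add_iff_left (ENat.natCast_ne_top M)).1 hadd
  exact X_pow_dvd_iff.2 fun m hm => coeff_of_lt_order m ((Nat.cast_lt.2 hm).trans_le hordZ)

end IsPadeApproximant

/-- Kronecker's criterion for rationality. -/
lemma exists_polynomial_of_hankelDet_eq_zero (L : K⟦X⟧) (M₀ : ℕ)
    (h : ∀ M ≥ M₀, hankelDet L M = 0) :
    ∃ P Q : Polynomial K, Q ≠ 0 ∧ (Q : K⟦X⟧) * L = P := by
  choose! P Q hPQ using fun M hM => exists_isPadeApproximant (h M hM)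
  have hcross (M : ℕ) (hM : M₀ ≤ M) : P M * Q M₀ = P M₀ * Q M := by
    induction M, hM using Nat.le_induction with
    | base => rfl
    | succ M hM ih =>
      have hsucc := (hPQ M hM).cross_mul_succ (hPQ (M + 1) (by omega))
      refine mul_right_cancel₀ (hPQ M hM).ne_zero ?_
      linear_combination Q (M + 1) * ih - Q M₀ * hsucc
  refine ⟨P M₀, Q M₀, (hPQ M₀ le_rfl).ne_zero, sub_eq_zero.1 (PowerSeries.ext fun m => ?_)⟩
  have hM : M₀ ≤ M₀ + m := M₀.le_add_right m
  exact X_pow_dvd_iff.1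
    ((hPQ _ hM).X_pow_dvd_of_cross_mul (hcross _ hM)) m (by omega)

end Hankel

section PadicHankel

open PowerSeries Finset

variable {O : Type*} [CommRing O]

/-- The Newton polygon of `f` with respect to `l` lies above the line of slope `c` through
`(0, -K)`. -/
def SlopeBound (l : O) (c K : ℕ) (f : O⟦X⟧) : Prop := ∀ j, l ^ (c * j - K) ∣ coeff j f

/-- A finite-level substitute for `l`-adic meromorphy of `L` on the whole plane, which makes sense
in a ring that is not complete: modulo every `l ^ N` and `X ^ (M + 1)` the series `L` is a quotient
`U / V`, where `U` and `V` satisfy slope bounds with arbitrary slope `c` that are uniform in `N`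
and `M`. -/
def ApproxMeromorphic (l : O) (L : O⟦X⟧) : Prop :=
  ∀ c : ℕ, ∃ K : ℕ, ∀ N M : ℕ, ∃ U V : O⟦X⟧, coeff 0 V = 1 ∧
    SlopeBound l c K U ∧ SlopeBound l c K V ∧ ∀ j ≤ M, l ^ N ∣ coeff j (L * V - U)

lemma prod_dvd_det {n : Type*} [Fintype n] [DecidableEq n]
    (A : Matrix n n O) (c : n → O) (h : ∀ i j, c j ∣ A i j) : ∏ j, c j ∣ A.det := by
  rw [Matrix.det_apply]
  refine dvd_sum fun σ _ => ?_
  rw [Units.smul_def, zsmul_eq_mul]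
  exact (prod_dvd_prod_of_dvd _ _ fun i _ => h _ _).mul_left _

lemma pow_sub_eq_prod_fin_ite {R : Type*} [CommMonoid R] (x : R) (m e : ℕ) :
    x ^ (m - e) = ∏ j : Fin m, if e ≤ (j : ℕ) then x else 1 := by
  rw [← prod_range fun j => if e ≤ j then x else 1, prod_ite, prod_const_one, mul_one, prod_const,
    ← Nat.card_Ico]
  congr 2
  ext; simp; omega

/-- Multiplying the Hankel matrix of `L` by the unipotent Toeplitz matrix of `V` replaces, modulo
`T`, the columns of index at least `e` by those of the Hankel matrix of `U`. -/
lemma pow_dvd_hankelDet {L U V : O⟦X⟧} {T : O} {M e : ℕ} (hV0 : coeff 0 V = 1)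
    (hV : ∀ j ≥ e, T ∣ coeff j V) (hU : ∀ j ≥ e, T ∣ coeff j U)
    (hL : ∀ j ≤ 2 * M, T ∣ coeff j (L * V - U)) : T ^ (M + 1 - e) ∣ hankelDet L M := by
  set H : Matrix (Fin (M + 1)) (Fin (M + 1)) O := Matrix.of fun i j => coeff ((i : ℕ) + j) L with hH
  set W : Matrix (Fin (M + 1)) (Fin (M + 1)) O := Matrix.of fun i j =>
    if i ≤ j then coeff ((j : ℕ) - i) V else 0 with hW
  have hdetW : W.det = 1 := by
    rw [Matrix.det_of_isUpperTriangular]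
    · exact prod_eq_one fun i _ => by rw [hW, Matrix.of_apply, if_pos le_rfl, Nat.sub_self, hV0]
    · exact fun i j hij => if_neg (not_le.2 hij)
  have hentry (i j : Fin (M + 1)) :
      (H * W) i j = ∑ l ∈ range (j + 1), coeff ((i : ℕ) + j - l) L * coeff l V := by
    have hterm (k : Fin (M + 1)) : H i k * W k j =
        if (k : ℕ) ≤ j then coeff ((i : ℕ) + k) L * coeff ((j : ℕ) - k) V else 0 := by
      simp [hH, hW]
    rw [Matrix.mul_apply, sum_congr rfl fun k _ => hterm k, ← sum_range fun k =>
      if k ≤ (j : ℕ) then coeff ((i : ℕ) + k) L * coeff ((j : ℕ) - k) V else 0, ← sum_filter]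
    refine sum_nbij' (fun k => j - k) (fun l => j - l) ?_ ?_ ?_ ?_ fun k hk => ?_
    any_goals intro k hk; simp only [mem_filter, mem_range] at hk ⊢; omega
    simp only [mem_filter, mem_range] at hk
    rw [show (i : ℕ) + j - (j - k) = i + k by omega]
  have hdvd (i j : Fin (M + 1)) (hj : e ≤ j) : T ∣ (H * W) i j := by
    have hLV : coeff ((i : ℕ) + j) (L * V) = (H * W) i j +
        ∑ l ∈ Ico ((j : ℕ) + 1) (i + j + 1), coeff ((i : ℕ) + j - l) L * coeff l V := by
      rw [hentry, sum_range_add_sum_Ico _ (by omega), mul_comm, coeff_mul,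
        Nat.sum_antidiagonal_eq_sum_range_succ_mk]
      exact sum_congr rfl fun l _ => mul_comm _ _
    have hsplit : (H * W) i j = coeff ((i : ℕ) + j) (L * V - U) + coeff ((i : ℕ) + j) U -
        ∑ l ∈ Ico ((j : ℕ) + 1) (i + j + 1), coeff ((i : ℕ) + j - l) L * coeff l V := by
      rw [map_sub, hLV]; ring
    rw [hsplit]
    refine ((hL _ (by omega)).add (hU _ (by omega))).sub (dvd_sum fun l hl => ?_)
    have := (mem_Ico.1 hl).1
    exact (hV _ (by omega)).mul_left _
  calc T ^ (M + 1 - e) = ∏ j : Fin (M + 1), if e ≤ (j : ℕ) then T else 1 :=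
        pow_sub_eq_prod_fin_ite T (M + 1) e
    _ ∣ (H * W).det := prod_dvd_det _ _ fun i j => by
        split_ifs with hj
        exacts [hdvd i j hj, one_dvd _]
    _ = hankelDet L M := by rw [Matrix.det_mul, hdetW, mul_one]; rfl

end PadicHankel

section Dwork

open PowerSeries NumberField

lemma norm_hankelDet_le {L : ℂ⟦X⟧} {C : ℝ} (hC : 1 ≤ C) (h : ∀ m, ‖coeff m L‖ ≤ C ^ m) (M : ℕ) :
    ‖hankelDet L M‖ ≤ (2 * C ^ 2) ^ (M + 1) ^ 2 := by
  have hdet := Matrix.det_le (abv := NormedField.toAbsoluteValue ℂ)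
    (A := Matrix.of fun i j : Fin (M + 1) => coeff ((i : ℕ) + j) L) (x := C ^ (2 * M))
    fun i j => (h _).trans (pow_le_pow_right₀ hC (by omega))
  rw [nsmul_eq_mul, Fintype.card_fin] at hdet
  refine hdet.trans ?_
  rw [mul_pow, ← pow_mul, ← pow_mul]
  gcongr ?_ * ?_
  · calc ((M + 1).factorial : ℝ) ≤ ((2 ^ (M + 1)) ^ (M + 1) : ℕ) := by
          exact_mod_cast (Nat.factorial_le_pow _).trans
            (Nat.pow_le_pow_left Nat.lt_two_pow_self.le _)
      _ = 2 ^ (M + 1) ^ 2 := by push_cast; rw [← pow_mul, sq]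
  · exact pow_le_pow_right₀ hC (by nlinarith)

variable {K : Type*} [Field K] [NumberField K]

lemma abs_norm_le_pow_finrank (x : 𝓞 K) {B : ℝ} (hB : ∀ σ : K →+* ℂ, ‖σ x‖ ≤ B) :
    |(Algebra.norm ℤ x : ℝ)| ≤ B ^ Module.finrank ℚ K := by
  have hprod := Algebra.norm_eq_prod_embeddings ℚ ℂ (x : K)
  rw [← Algebra.coe_norm_int] at hprod
  calc |(Algebra.norm ℤ x : ℝ)| = ‖algebraMap ℚ ℂ ((Algebra.norm ℤ x : ℤ) : ℚ)‖ := by simp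
    _ = ∏ σ : K →ₐ[ℚ] ℂ, ‖σ (x : K)‖ := by rw [hprod, norm_prod]
    _ ≤ ∏ _σ : K →ₐ[ℚ] ℂ, B :=
      Finset.prod_le_prod (fun _ _ => norm_nonneg _) fun σ _ => hB σ.toRingHom
    _ = B ^ Module.finrank ℚ K := by
      rw [Finset.prod_const, Finset.card_univ, AlgHom.card]

lemma two_pow_le_of_pow_dvd {l h : 𝓞 K} (hl : 2 ≤ |Algebra.norm ℤ l|) (hh : h ≠ 0) {N : ℕ}
    (hdvd : l ^ N ∣ h) {B : ℝ} (hB : ∀ σ : K →+* ℂ, ‖σ h‖ ≤ B) :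
    (2 : ℝ) ^ N ≤ B ^ Module.finrank ℚ K := by
  have hN0 : Algebra.norm ℤ h ≠ 0 := mt Algebra.norm_eq_zero_iff.1 hh
  have hint : (2 : ℤ) ^ N ≤ |Algebra.norm ℤ h| := by
    calc (2 : ℤ) ^ N ≤ |Algebra.norm ℤ l| ^ N := by gcongr
      _ = |Algebra.norm ℤ (l ^ N)| := by rw [map_pow, abs_pow]
      _ ≤ |Algebra.norm ℤ h| :=
        Int.le_of_dvd (abs_pos.2 hN0) ((abs_dvd_abs _ _).2 (map_dvd _ hdvd))
  refine le_trans ?_ (abs_norm_le_pow_finrank h hB)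
  exact_mod_cast hint

/-- The Borel–Dwork criterion: by the product formula, a nonzero Hankel determinant cannot be
small both at the archimedean places and at `l`. -/
theorem exists_polynomial_of_approxMeromorphic {O : Type*} [CommRing O] (φ : 𝓞 K →+* O) {l : 𝓞 K}
    (hl : 2 ≤ |Algebra.norm ℤ l|) (hφ : ∀ k x, φ l ^ k ∣ φ x → l ^ k ∣ x)
    (L : (𝓞 K)⟦X⟧) {C : ℕ} (hC : 1 ≤ C)
    (harch : ∀ (σ : K →+* ℂ) (m : ℕ), ‖σ (coeff m L : 𝓞 K)‖ ≤ (C : ℝ) ^ m)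
    (hmero : ApproxMeromorphic (φ l) (PowerSeries.map φ L)) :
    ∃ P Q : Polynomial K, Q ≠ 0 ∧ (Q : K⟦X⟧) * PowerSeries.map (algebraMap (𝓞 K) K) L = P := by
  set g := Module.finrank ℚ K
  set c := 2 * C ^ 2 * g with hc
  obtain ⟨B, hB⟩ := hmero (9 * c + 2)
  refine exists_polynomial_of_hankelDet_eq_zero _ (2 * B + 4) fun M hM => ?_
  rw [hankelDet_map]
  suffices hankelDet L M = 0 by rw [this, map_zero]
  by_contra hne
  obtain ⟨e, he⟩ : ∃ e, e = (M + 1) / 2 := ⟨_, rfl⟩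
  set n := (9 * c + 2) * e - B with hn
  obtain ⟨U, V, hV0, hU, hV, hUV⟩ := hB n (2 * M)
  have hn_dvd {f : O⟦X⟧} (hf : SlopeBound (φ l) (9 * c + 2) B f) (j : ℕ) (hj : j ≥ e) :
      φ l ^ n ∣ coeff j f :=
    (pow_dvd_pow _ (Nat.sub_le_sub_right (Nat.mul_le_mul_left _ hj) _)).trans (hf j)
  have hdvd : l ^ (n * (M + 1 - e)) ∣ hankelDet L M := by
    have := pow_dvd_hankelDet hV0 (hn_dvd hV) (hn_dvd hU) hUV
    rw [hankelDet_map, ← pow_mul] at this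
    exact hφ _ _ this
  have hnorm (σ : K →+* ℂ) : ‖σ (hankelDet L M : 𝓞 K)‖ ≤ (2 * (C : ℝ) ^ 2) ^ (M + 1) ^ 2 := by
    have := norm_hankelDet_le (L := PowerSeries.map (σ.comp (algebraMap (𝓞 K) K)) L)
      (Nat.one_le_cast.2 hC) (by simpa using harch σ) M
    rwa [hankelDet_map] at this
  have hexp : n * (M + 1 - e) ≤ c * (M + 1) ^ 2 := by
    refine (pow_le_pow_iff_right₀ (one_lt_two (α := ℝ))).1 ?_
    calc (2 : ℝ) ^ (n * (M + 1 - e)) ≤ ((2 * (C : ℝ) ^ 2) ^ (M + 1) ^ 2) ^ g :=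
          two_pow_le_of_pow_dvd hl hne hdvd hnorm
      _ ≤ ((2 ^ (2 * C ^ 2)) ^ (M + 1) ^ 2) ^ g := by
          gcongr
          exact_mod_cast (Nat.lt_two_pow_self (n := 2 * C ^ 2)).le
      _ = 2 ^ (c * (M + 1) ^ 2) := by rw [← pow_mul, ← pow_mul, hc]; ring_nf
  have hn_lb : 9 * c * e + 1 ≤ n := by
    have : (9 * c + 2) * e = 9 * c * e + 2 * e := by ring
    omega
  have hcontr : (9 * c * e + 1) * e ≤ c * (3 * e) ^ 2 :=
    (Nat.mul_le_mul hn_lb (by omega)).trans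
      (hexp.trans (Nat.mul_le_mul_left _ (Nat.pow_le_pow_left (by omega) 2)))
  have he1 : 1 ≤ e := by omega
  nlinarith

end Dwork

/-! ### The ring of integers of the `p`-th cyclotomic field and its `p`-adic models -/

section Cyclotomic

open NumberField

/-- The ring of integers `ℤ[ζ_p]` of the `p`-th cyclotomic field. -/
abbrev CycInt (p : ℕ) [Fact p.Prime] : Type := 𝓞 (CyclotomicField p ℚ)

instance isCyclotomicExtension_cyclotomicField (p : ℕ) [h : Fact p.Prime] :
    IsCyclotomicExtension {p} ℚ (CyclotomicField p ℚ) :=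
  haveI : NeZero (p : ℚ) := ⟨Nat.cast_ne_zero.2 h.out.ne_zero⟩
  CyclotomicField.isCyclotomicExtension p ℚ

lemma isPrimitiveRoot_zeta (p : ℕ) [Fact p.Prime] :
    IsPrimitiveRoot (IsCyclotomicExtension.zeta p ℚ (CyclotomicField p ℚ)) p :=
  IsCyclotomicExtension.zeta_spec p ℚ (CyclotomicField p ℚ)

/-- A fixed primitive `p`-th root of unity in `ℤ[ζ_p]`. -/
def zetaInt (p : ℕ) [Fact p.Prime] : CycInt p := (isPrimitiveRoot_zeta p).toInteger

/-- The generator `1 - ζ_p` of the prime of `ℤ[ζ_p]` above `p`. -/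
def oneSubZeta (p : ℕ) [Fact p.Prime] : CycInt p := 1 - zetaInt p

variable (p : ℕ) [Fact p.Prime]

lemma isPrimitiveRoot_zetaInt : IsPrimitiveRoot (zetaInt p) p :=
  (isPrimitiveRoot_zeta p).toInteger_isPrimitiveRoot

lemma associated_oneSubZeta :
    Associated (oneSubZeta p) ((isPrimitiveRoot_zeta p).toInteger - 1) := by
  rw [← Associated.neg_left_iff, oneSubZeta, neg_sub, zetaInt]

lemma associated_oneSubZeta_pow : Associated (oneSubZeta p ^ (p - 1)) (p : CycInt p) :=
  (associated_oneSubZeta p).pow_pow.trans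
    (IsCyclotomicExtension.Rat.associated_zeta_sub_one_pow_prime p (isPrimitiveRoot_zeta p))

lemma abs_norm_oneSubZeta : |Algebra.norm ℤ (oneSubZeta p)| = p := by
  have : IsCyclotomicExtension {p ^ (0 + 1)} ℚ (CyclotomicField p ℚ) := by
    rw [zero_add, pow_one]; infer_instance
  have hζ : IsPrimitiveRoot (IsCyclotomicExtension.zeta p ℚ (CyclotomicField p ℚ))
      (p ^ (0 + 1)) := by
    rw [zero_add, pow_one]; exact isPrimitiveRoot_zeta p
  have hnorm : Associated (Algebra.norm ℤ (oneSubZeta p)) (p : ℤ) :=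
    ((associated_oneSubZeta p).map (Algebra.norm ℤ)).trans
      (IsCyclotomicExtension.Rat.associated_norm_zeta_sub_one p 0 hζ)
  rw [Int.abs_eq_natAbs, Int.natAbs_eq_iff_associated.2 hnorm, Int.natAbs_natCast]

lemma two_le_abs_norm_oneSubZeta : 2 ≤ |Algebra.norm ℤ (oneSubZeta p)| := by
  rw [abs_norm_oneSubZeta]
  exact_mod_cast (Fact.out : p.Prime).two_le

lemma oneSubZeta_ne_zero : oneSubZeta p ≠ 0 := fun h => by
  simpa [h] using two_le_abs_norm_oneSubZeta p

variable {p}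

lemma isCoprime_of_not_oneSubZeta_dvd {x : CycInt p} (hx : ¬ oneSubZeta p ∣ x) :
    IsCoprime (p : CycInt p) x :=
  IsCyclotomicExtension.Rat.isCoprime_of_not_zeta_sub_one_dvd p (isPrimitiveRoot_zeta p)
    fun h => hx ((associated_oneSubZeta p).dvd_iff_dvd_left.2 h)

variable (p) in
/-- A ring `O` that contains `ℤ[ζ_p]`, in which `1 - ζ_p` is still a nonunit, together with
Teichmüller representatives of the algebraic closure of `𝔽_p`. Everything the `p`-adic part of the
argument needs is a congruence in such a ring, so no topology or completeness is required. -/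
structure PadicModel (O : Type*) [CommRing O] where
  emb : CycInt p →+* O
  emb_injective : Function.Injective emb
  not_isUnit_emb : ¬ IsUnit (emb (oneSubZeta p))
  teich : Omg p →* O
  teich_zero : teich 0 = 0
  teich_injective : Function.Injective teich
  trace_congr (d : ℕ) (z : Omg p) (hz : z ^ p ^ d = z) (M : ℕ) : ∃ c : ℕ,
    (p : O) ^ M ∣ (∑ j ∈ Finset.range d, teich z ^ p ^ j) - c ∧ (c : ZMod p) = traceZmod p d z

namespace PadicModel

variable {O : Type*} [CommRing O] (D : PadicModel p O)

/-- The image of `1 - ζ_p`. -/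
def unif : O := D.emb (oneSubZeta p)

lemma associated_unif_pow : Associated (D.unif ^ (p - 1)) (p : O) := by
  simpa only [map_pow, map_natCast, unif] using (associated_oneSubZeta_pow p).map D.emb

lemma unif_dvd_natCast : D.unif ∣ (p : O) :=
  (dvd_pow_self _ (Nat.sub_ne_zero_of_lt (Fact.out : p.Prime).one_lt)).trans
    D.associated_unif_pow.dvd

lemma unif_ne_zero : D.unif ≠ 0 :=
  (map_ne_zero_iff _ D.emb_injective).2 (oneSubZeta_ne_zero p)

variable [IsDomain O]

lemma oneSubZeta_pow_dvd_of_emb {k : ℕ} {x : CycInt p} (h : D.unif ^ k ∣ D.emb x) :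
    oneSubZeta p ^ k ∣ x := by
  induction k with
  | zero => simp
  | succ k ih =>
    obtain ⟨y, rfl⟩ := ih ((pow_dvd_pow _ k.le_succ).trans h)
    rw [pow_succ]
    refine mul_dvd_mul_left _ (by_contra fun hy => D.not_isUnit_emb ?_)
    rw [map_mul, map_pow, pow_succ] at h
    have hdvd : D.unif ∣ D.emb y := (mul_dvd_mul_iff_left (pow_ne_zero k D.unif_ne_zero)).1 h
    have hcop := (isCoprime_of_not_oneSubZeta_dvd hy).map D.emb
    rw [map_natCast] at hcop
    exact hcop.isUnit_of_dvd' D.unif_dvd_natCast hdvd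

lemma exists_dvd_of_dvd_natCast_mul {n : ℕ} (hn : n ≠ 0) : ∃ v : ℕ, ∀ (k : ℕ) (x : O),
    D.unif ^ (k + v) ∣ (n : O) * x → D.unif ^ k ∣ x := by
  obtain ⟨v, u, hu, rfl⟩ := Nat.exists_eq_pow_mul_and_not_dvd hn p (Fact.out : p.Prime).ne_one
  refine ⟨(p - 1) * v, fun k x h => ?_⟩
  have hassoc : Associated (D.unif ^ ((p - 1) * v)) ((p : O) ^ v) := by
    rw [pow_mul]; exact D.associated_unif_pow.pow_pow
  have hux : D.unif ^ k ∣ (u : O) * x := by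
    rw [← mul_dvd_mul_iff_left (pow_ne_zero ((p - 1) * v) D.unif_ne_zero), ← pow_add, add_comm]
    refine h.trans ?_
    rw [Nat.cast_mul, Nat.cast_pow, mul_assoc]
    exact mul_dvd_mul_right hassoc.symm.dvd _
  have hcop : IsCoprime ((p : O) ^ k) (u : O) := by
    have : IsCoprime (p : ℤ) (u : ℤ) :=
      Nat.isCoprime_iff_coprime.2 ((Nat.Prime.coprime_iff_not_dvd Fact.out).2 hu)
    simpa using (this.map (Int.castRingHom O)).pow_left
  have hdvd : D.unif ^ k ∣ (p : O) ^ k := pow_dvd_pow_of_dvd D.unif_dvd_natCast k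
  exact (hcop.of_isCoprime_of_dvd_left hdvd).dvd_of_dvd_mul_left hux

end PadicModel

end Cyclotomic

section Witt

open WittVector Finset NumberField

variable {p : ℕ} [Fact p.Prime]

lemma exists_natCast_eq_of_pow_eq {k : Type*} [Field k] [CharP k p] {x : k} (hx : x ^ p = x) :
    ∃ n : ℕ, (n : k) = x := by
  obtain ⟨n, rfl⟩ := (mem_bot_iff_intCast p k).1 ((Subfield.mem_bot_iff_pow_eq_self k p).2 hx)
  exact ⟨(n : ZMod p).val, by simp [ZMod.natCast_val, ZMod.cast_intCast]⟩

lemma dvd_natCast_of_coeff_zero {k : Type*} [Field k] [CharP k p] [PerfectRing k p]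
    {y : WittVector p k} (h : y.coeff 0 = 0) : (p : WittVector p k) ∣ y :=
  Ideal.mem_span_singleton.1 ((mem_span_p_iff_coeff_zero_eq_zero y).2 h)

instance {k : Type*} [Field k] [CharP k p] [PerfectRing k p] : CharZero (WittVector p k) := by
  obtain ⟨ℓ, hℓ⟩ := CharP.exists (WittVector p k)
  rcases CharP.char_is_prime_or_zero (WittVector p k) ℓ with hprime | rfl
  · have hp : (ℓ : k) = 0 := by
      rw [← map_natCast (constantCoeff (p := p) (R := k)), CharP.cast_eq_zero, map_zero]
    have hpℓ : p = ℓ := (Nat.prime_dvd_prime_iff_eq Fact.out hprime).1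
      ((CharP.cast_eq_zero_iff k p ℓ).1 hp)
    subst hpℓ
    exact absurd (CharP.cast_eq_zero (WittVector p k) p) (irreducible p).ne_zero
  · exact CharP.charP_to_charZero _

lemma exists_natCast_congr_of_frobenius_eq {k : Type*} [Field k] [CharP k p] [PerfectRing k p]
    (M : ℕ) {y : WittVector p k} (hy : WittVector.frobenius y = y) :
    ∃ c : ℕ, (p : WittVector p k) ^ M ∣ y - c := by
  induction M generalizing y with
  | zero => exact ⟨0, by simp⟩
  | succ M ih =>
    obtain ⟨u, hu⟩ := exists_natCast_eq_of_pow_eq (p := p) (x := y.coeff 0)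
      (by rw [← coeff_frobenius_charP, hy])
    obtain ⟨z, hz⟩ := dvd_natCast_of_coeff_zero (y := y - (u : WittVector p k)) <| by
        rw [← constantCoeff_apply, map_sub, map_natCast, constantCoeff_apply, hu, sub_self]
    have hfrob : WittVector.frobenius z = z := by
      refine mul_left_cancel₀ (irreducible p).ne_zero (a := (p : WittVector p k)) ?_
      rw [← map_natCast (WittVector.frobenius (p := p) (R := k)) p, ← map_mul, map_natCast, ← hz,
        map_sub, hy, map_natCast]
    obtain ⟨c, r, hr⟩ := ih hfrob
    refine ⟨u + p * c, r, ?_⟩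
    push_cast
    linear_combination hz + (p : WittVector p k) * hr

lemma frobenius_teichmuller {k : Type*} [CommRing k] [CharP k p] (z : k) :
    WittVector.frobenius (teichmuller p z) = teichmuller p z ^ p := by
  rw [frobenius_eq_map_frobenius, map_teichmuller, frobenius_def, map_pow]

lemma sum_pow_pow_succ {R : Type*} [Ring R] {x : R} {q d : ℕ} (hx : x ^ q ^ d = x) :
    ∑ j ∈ range d, x ^ q ^ (j + 1) = ∑ j ∈ range d, x ^ q ^ j := by
  have h := sum_range_succ (fun j => x ^ q ^ j) d
  rw [sum_range_succ', hx, pow_zero, pow_one] at h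
  exact add_right_cancel h

lemma algebraMap_traceZmod {d : ℕ} {z : Omg p} (hz : z ^ p ^ d = z) :
    algebraMap (ZMod p) (Omg p) (traceZmod p d z) = ∑ j ∈ range d, z ^ p ^ j := by
  obtain ⟨u, hu⟩ := exists_natCast_eq_of_pow_eq (p := p) (x := ∑ j ∈ range d, z ^ p ^ j) <| by
    rw [sum_pow_char, ← sum_pow_pow_succ hz]
    exact sum_congr rfl fun j _ => by rw [← pow_mul, pow_succ]
  rw [← map_natCast (algebraMap (ZMod p) (Omg p))] at hu
  rw [traceZmod, ← hu, Function.leftInverse_invFun (algebraMap (ZMod p) (Omg p)).injective]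

lemma exists_trace_teichmuller_congr (d : ℕ) (z : Omg p) (hz : z ^ p ^ d = z) (M : ℕ) :
    ∃ c : ℕ, (p : WittVector p (Omg p)) ^ M ∣ (∑ j ∈ range d, teichmuller p z ^ p ^ j) - c ∧
      (c : ZMod p) = traceZmod p d z := by
  set t := ∑ j ∈ range d, teichmuller p z ^ p ^ j with ht
  have hfrob : WittVector.frobenius t = t := by
    rw [ht]
    simp only [map_sum, map_pow, frobenius_teichmuller, ← pow_mul, ← pow_succ']
    exact sum_pow_pow_succ (by rw [← map_pow, hz])
  obtain ⟨c, hc⟩ := exists_natCast_congr_of_frobenius_eq (M + 1) hfrob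
  refine ⟨c, (pow_dvd_pow _ M.le_succ).trans hc, (algebraMap (ZMod p) (Omg p)).injective ?_⟩
  have : constantCoeff (t - (c : WittVector p (Omg p))) = 0 := by
    obtain ⟨r, hr⟩ := hc
    rw [hr, map_mul, map_pow, map_natCast, CharP.cast_eq_zero, zero_pow M.succ_ne_zero, zero_mul]
  rw [map_sub, map_natCast, sub_eq_zero, ht, map_sum] at this
  rw [algebraMap_traceZmod hz, map_natCast, ← this]
  simp only [map_pow, constantCoeff_apply, teichmuller_coeff_zero]

/-- The fraction field of the ring of Witt vectors of the algebraic closure of `𝔽_p`. -/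
abbrev WittFrac (p : ℕ) [Fact p.Prime] : Type := FractionRing (WittVector p (Omg p))

instance : CharZero (WittFrac p) :=
  charZero_of_injective_algebraMap (IsFractionRing.injective (WittVector p (Omg p)) (WittFrac p))

instance : CharZero (AlgebraicClosure (WittFrac p)) :=
  charZero_of_injective_algebraMap (algebraMap (WittFrac p) _).injective

/-- The integral closure of the ring of Witt vectors in an algebraic closure of its fraction
field. -/
abbrev WittInt (p : ℕ) [Fact p.Prime] : Type :=
  integralClosure (WittVector p (Omg p)) (AlgebraicClosure (WittFrac p))

lemma algebraMap_wittInt_injective :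
    Function.Injective (algebraMap (WittVector p (Omg p)) (WittInt p)) := by
  have : Function.Injective
      (algebraMap (WittVector p (Omg p)) (AlgebraicClosure (WittFrac p))) := by
    rw [IsScalarTower.algebraMap_eq _ (WittFrac p)]
    exact (algebraMap (WittFrac p) _).injective.comp (IsFractionRing.injective _ _)
  exact fun x y h => this (congrArg Subtype.val h)

lemma not_isUnit_natCast_wittInt : ¬ IsUnit (p : WittInt p) := fun h => by
  have := (algebraMap_isIntegral_iff.2 inferInstance : (algebraMap (WittVector p (Omg p))
    (WittInt p)).IsIntegral).isLocalHom algebraMap_wittInt_injective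
  have h' : IsUnit (algebraMap (WittVector p (Omg p)) (WittInt p) p) := by rwa [map_natCast]
  exact (irreducible p).not_isUnit (isUnit_of_map_unit _ _ h')

/-- An embedding of the `p`-th cyclotomic field into the algebraic closure of the fraction field of
the Witt vectors. -/
def cycEmb (p : ℕ) [Fact p.Prime] : CyclotomicField p ℚ →+* AlgebraicClosure (WittFrac p) :=
  (IsAlgClosed.lift : CyclotomicField p ℚ →ₐ[ℚ] AlgebraicClosure (WittFrac p)).toRingHom

/-- The restriction of `cycEmb p` to rings of integers. -/
def wittEmb (p : ℕ) [Fact p.Prime] : CycInt p →+* WittInt p :=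
  ((cycEmb p).comp (algebraMap (CycInt p) _)).codRestrict
    (integralClosure (WittVector p (Omg p)) (AlgebraicClosure (WittFrac p))).toSubring fun x =>
      ((RingOfIntegers.isIntegral_coe x).map_of_comp_eq (Int.castRingHom (WittVector p (Omg p)))
        (cycEmb p) (RingHom.ext_int _ _))

/-- The ring `WittInt p` as a `p`-adic model of `ℤ[ζ_p]`. -/
def wittModel (p : ℕ) [Fact p.Prime] : PadicModel p (WittInt p) where
  emb := wittEmb p
  emb_injective x y h := RingOfIntegers.coe_injective
    ((cycEmb p).injective (congrArg Subtype.val h))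
  not_isUnit_emb h := by
    have hp := (associated_oneSubZeta_pow p).map (wittEmb p)
    rw [map_pow, map_natCast] at hp
    exact not_isUnit_natCast_wittInt (hp.isUnit (h.pow _))
  teich := (algebraMap (WittVector p (Omg p)) (WittInt p) : WittVector p (Omg p) →* WittInt p).comp
    (teichmuller p)
  teich_zero := by simp
  teich_injective x y h := by
    have h' : teichmuller p x = teichmuller p y := algebraMap_wittInt_injective h
    rw [← teichmuller_coeff_zero p x, h', teichmuller_coeff_zero]
  trace_congr d z hz M := by
    obtain ⟨c, hdvd, hc⟩ := exists_trace_teichmuller_congr d z hz M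
    exact ⟨c, by simpa using map_dvd (algebraMap (WittVector p (Omg p)) (WittInt p)) hdvd, hc⟩

end Witt

/-! ### Dwork's splitting polynomials -/

section Splitting

open PowerSeries Finset

lemma dvd_ordCompl_iff {p m r : ℕ} (hp : p.Prime) (hm : m ≠ 0) :
    r ∣ ordCompl[p] m ↔ ¬ p ∣ r ∧ r ∣ m := by
  refine ⟨fun h => ⟨fun hr => Nat.not_dvd_ordCompl hp hm (hr.trans h),
    h.trans (Nat.ordCompl_dvd m p)⟩, fun ⟨hr, h⟩ => ?_⟩
  rw [← Nat.ordProj_mul_ordCompl_eq_self m p] at h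
  exact ((hp.coprime_iff_not_dvd.2 hr).symm.pow_right _).dvd_of_dvd_mul_left h

lemma sum_moebius_mul_ordCompl {A : Type*} [CommRing A] {p N m : ℕ} (hp : p.Prime) (hm : m ≠ 0)
    (hmN : m < N) (h : ℕ → A) :
    ∑ r ∈ range N with ¬ p ∣ r, (if r ∣ m then
      ∑ x ∈ r.divisorsAntidiagonal, (ArithmeticFunction.moebius x.1 : A) * h x.2 else 0) =
      h (ordCompl[p] m) := by
  have hdiv : {r ∈ {r ∈ range N | ¬ p ∣ r} | r ∣ m} = (ordCompl[p] m).divisors := by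
    ext r
    simp only [mem_filter, mem_range, Nat.mem_divisors, dvd_ordCompl_iff hp hm, and_assoc]
    have hr : r ∣ m → r < N := fun h => (Nat.le_of_dvd (Nat.pos_of_ne_zero hm) h).trans_lt hmN
    have := (Nat.ordCompl_pos p hm).ne'
    tauto
  rw [← sum_filter, hdiv]
  exact ArithmeticFunction.sum_eq_iff_sum_mul_moebius_eq.2 (fun _ _ => rfl) _
    (Nat.ordCompl_pos p hm)

/-- The subring of polynomials whose `n`-th coefficient is divisible by `l ^ n` for all `n`. -/
def slopeSubring {O : Type*} [CommRing O] (l : O) : Subring (Polynomial O) where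
  carrier := {f | ∀ n, l ^ n ∣ f.coeff n}
  mul_mem' hf hg n := by
    rw [Polynomial.coeff_mul]
    refine dvd_sum fun x hx => ?_
    rw [← mem_antidiagonal.1 hx, pow_add]
    exact mul_dvd_mul (hf _) (hg _)
  one_mem' n := by
    rw [Polynomial.coeff_one]
    split_ifs with h <;> simp [h]
  add_mem' hf hg n := by
    rw [Polynomial.coeff_add]
    exact dvd_add (hf n) (hg n)
  zero_mem' n := by simp
  neg_mem' hf n := by
    rw [Polynomial.coeff_neg]
    exact (hf n).neg_right

lemma pow_dvd_eval {O : Type*} [CommRing O] {l : O} {N : ℕ} {f : Polynomial O}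
    (h : ∀ m < N, l ^ N ∣ f.coeff m) : l ^ N ∣ f.eval l := by
  rw [Polynomial.eval_eq_sum_range]
  refine dvd_sum fun m _ => ?_
  obtain hm | hm := lt_or_ge m N
  · exact (h m hm).mul_right _
  · exact (pow_dvd_pow _ hm).mul_left _

/-- A natural number congruent to `z / r` modulo `p ^ M`. -/
def residueDiv (p M : ℕ) (z : ℤ) (r : ℕ) : ℕ := ((z : ZMod (p ^ M)) * (r : ZMod (p ^ M))⁻¹).val

lemma pow_dvd_residueDiv_mul_sub {A : Type*} [CommRing A] {p : ℕ} (hp : p.Prime) (M : ℕ) (z : ℤ)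
    {r : ℕ} (hr : ¬ p ∣ r) : (p : A) ^ M ∣ residueDiv p M z r * r - z := by
  have : NeZero (p ^ M) := ⟨pow_ne_zero _ hp.ne_zero⟩
  have hinv : (r : ZMod (p ^ M)) * (r : ZMod (p ^ M))⁻¹ = 1 :=
    ZMod.coe_mul_inv_eq_one r ((hp.coprime_iff_not_dvd.2 hr).symm.pow_right M)
  have hdvd : ((p ^ M : ℕ) : ℤ) ∣ residueDiv p M z r * r - z := by
    rw [← ZMod.intCast_zmod_eq_zero_iff_dvd]
    push_cast
    rw [residueDiv, ZMod.natCast_zmod_val]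
    linear_combination (z : ZMod (p ^ M)) * hinv
  simpa using map_dvd (Int.castRingHom A) hdvd

variable {A : Type*} [CommRing A]

/-- A truncation, with exponents rounded modulo `p ^ M`, of Dwork's splitting function in the form
`θ(Y) = ∏ (1 - l ^ r Y ^ d) ^ (μ(d) / r)`, the product being over `r` prime to `p` and `d ∣ r`. -/
def splitPoly (p N M : ℕ) (l : A) : Polynomial A :=
  ∏ r ∈ range N with ¬ p ∣ r, ∏ x ∈ r.divisorsAntidiagonal,
    (1 - Polynomial.C (l ^ r) * Polynomial.X ^ x.1) ^
      residueDiv p M (ArithmeticFunction.moebius x.1) r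

/-- `splitPoly` as a function of `l` for a fixed value `y` of its variable. -/
def splitPolyAt (p N M : ℕ) (y : A) : Polynomial A :=
  ∏ r ∈ range N with ¬ p ∣ r, ∏ x ∈ r.divisorsAntidiagonal,
    (1 - Polynomial.C (y ^ x.1) * Polynomial.X ^ r) ^
      residueDiv p M (ArithmeticFunction.moebius x.1) r

lemma eval_splitPoly (p N M : ℕ) (l y : A) :
    (splitPoly p N M l).eval y = (splitPolyAt p N M y).eval l := by
  simp only [splitPoly, splitPolyAt, Polynomial.eval_prod, Polynomial.eval_pow,
    Polynomial.eval_sub, Polynomial.eval_one, Polynomial.eval_mul, Polynomial.eval_C,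
    Polynomial.eval_X, mul_comm]

lemma splitPoly_mem_slopeSubring (p N M : ℕ) (l : A) : splitPoly p N M l ∈ slopeSubring l := by
  refine prod_mem fun r _ => prod_mem fun x hx => pow_mem (sub_mem (one_mem _) fun n => ?_) _
  rw [Polynomial.coeff_C_mul_X_pow]
  split_ifs with h
  · obtain ⟨hr, hr0⟩ := Nat.mem_divisorsAntidiagonal.1 hx
    exact h ▸ pow_dvd_pow _ (Nat.le_of_dvd (Nat.pos_of_ne_zero hr0) ⟨_, hr.symm⟩)
  · exact dvd_zero _

lemma ne_zero_of_mem_filter_not_dvd {p N r : ℕ} (hr : r ∈ (range N).filter (¬ p ∣ ·)) : r ≠ 0 := by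
  rintro rfl
  exact (mem_filter.1 hr).2 (dvd_zero p)

lemma coeff_zero_splitPolyAt (p N M : ℕ) (y : A) : (splitPolyAt p N M y).coeff 0 = 1 := by
  rw [Polynomial.coeff_zero_eq_eval_zero, splitPolyAt, Polynomial.eval_prod]
  refine prod_eq_one fun r hr => ?_
  simp [Polynomial.eval_prod, ne_zero_of_mem_filter_not_dvd hr]

lemma hasLogDeriv_splitPolyAt (p N M : ℕ) (y : A) :
    HasLogDeriv (splitPolyAt p N M y : A⟦X⟧) fun m => ∑ r ∈ range N with ¬ p ∣ r,
      ∑ x ∈ r.divisorsAntidiagonal,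
        (residueDiv p M (ArithmeticFunction.moebius x.1) r : A) *
          (if r ∣ m then -(r : A) * (y ^ x.1) ^ (m / r) else 0) := by
  have hcoe : (splitPolyAt p N M y : A⟦X⟧) = ∏ r ∈ range N with ¬ p ∣ r,
      ∏ x ∈ r.divisorsAntidiagonal, (1 - C (y ^ x.1) * X ^ r) ^
        residueDiv p M (ArithmeticFunction.moebius x.1) r := by
    rw [splitPolyAt, ← Polynomial.coeToPowerSeries.ringHom_apply]
    simp [map_prod, Polynomial.coeToPowerSeries.ringHom_apply]
  rw [hcoe]
  exact .prod _ fun r hr => .prod _ fun x _ => .pow (.one_sub_C_mul_X_pow _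
    (Nat.one_le_iff_ne_zero.2 (ne_zero_of_mem_filter_not_dvd hr))) _

lemma pow_dvd_logDeriv_splitPolyAt_add {p N m : ℕ} (hp : p.Prime) (hm : m ≠ 0) (hmN : m < N)
    (M : ℕ) (y : A) : (p : A) ^ M ∣ (∑ r ∈ range N with ¬ p ∣ r,
      ∑ x ∈ r.divisorsAntidiagonal, (residueDiv p M (ArithmeticFunction.moebius x.1) r : A) *
        (if r ∣ m then -(r : A) * (y ^ x.1) ^ (m / r) else 0)) + y ^ ordProj[p] m := by
  have hord : m / ordCompl[p] m = ordProj[p] m := Nat.div_div_self (Nat.ordProj_dvd m p) hm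
  rw [← hord, ← sum_moebius_mul_ordCompl hp hm hmN fun i => y ^ (m / i), ← sum_add_distrib]
  refine dvd_sum fun r hr => ?_
  have hr0 := ne_zero_of_mem_filter_not_dvd hr
  split_ifs with hrm
  · rw [← sum_add_distrib]
    refine dvd_sum fun x hx => ?_
    obtain ⟨c, hc⟩ := pow_dvd_residueDiv_mul_sub (A := A) hp M (ArithmeticFunction.moebius x.1)
      (mem_filter.1 hr).2
    have hpow : (y ^ x.1) ^ (m / r) = y ^ (m / x.2) := by
      obtain ⟨rfl, -⟩ := Nat.mem_divisorsAntidiagonal.1 hx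
      obtain ⟨b, rfl⟩ := hrm
      have := Nat.pos_of_ne_zero hr0
      rw [← pow_mul, Nat.mul_div_cancel_left _ this, mul_right_comm,
        Nat.mul_div_cancel _ (Nat.pos_of_ne_zero (right_ne_zero_of_mul hr0))]
    rw [hpow]
    exact ⟨-c * y ^ (m / x.2), by linear_combination -y ^ (m / x.2) * hc⟩
  · simp

lemma sum_pow_pow_pow {x : A} {q d : ℕ} (hx : x ^ q ^ d = x) (w : ℕ) :
    ∑ j ∈ range d, (x ^ q ^ w) ^ q ^ j = ∑ j ∈ range d, x ^ q ^ j := by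
  induction w with
  | zero => simp
  | succ w ih =>
    rw [← ih, ← sum_pow_pow_succ (x := x ^ q ^ w) (by rw [pow_right_comm, hx])]
    simp only [← pow_mul, pow_succ, mul_assoc, mul_comm q]

-- Both sides have logarithm `-∑ Tr(τ) X ^ m / m`, up to the precision of the exponents.
lemma pow_dvd_factorial_mul_coeff_prod_splitPolyAt_sub {p N M d t : ℕ} (hp : p.Prime) {τ : A}
    (hτ : τ ^ p ^ d = τ) (ht : (p : A) ^ M ∣ (∑ j ∈ range d, τ ^ p ^ j) - t) {m : ℕ} (hm : m < N) :
    (p : A) ^ M ∣ (m.factorial : A) *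
      (∏ j ∈ range d, splitPolyAt p N M (τ ^ p ^ j) - (1 - Polynomial.X) ^ t).coeff m := by
  have hf : HasLogDeriv ((∏ j ∈ range d, splitPolyAt p N M (τ ^ p ^ j) : Polynomial A) : A⟦X⟧) _ :=
    (map_prod (Polynomial.coeToPowerSeries.ringHom (R := A)) _ (range d)).symm ▸
      HasLogDeriv.prod (range d) fun j _ => hasLogDeriv_splitPolyAt p N M (τ ^ p ^ j)
  have hg : HasLogDeriv (((1 - Polynomial.X) ^ t : Polynomial A) : A⟦X⟧) fun m => (t : A) *
      (if 1 ∣ m then -((1 : ℕ) : A) * 1 ^ (m / 1) else 0) := by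
    simpa using (HasLogDeriv.one_sub_C_mul_X_pow (1 : A) le_rfl).pow t
  rw [Polynomial.coeff_sub, ← Polynomial.coeff_coe, ← Polynomial.coeff_coe]
  refine hf.dvd_factorial_mul_coeff_sub hg ?_ _ m (fun i hi him => ?_) m le_rfl
  · rw [Polynomial.coeff_coe, Polynomial.coeff_coe, Polynomial.coeff_zero_prod,
      prod_eq_one fun j _ => coeff_zero_splitPolyAt _ _ _ _]
    simp [Polynomial.coeff_zero_eq_eval_zero]
  · have hsum := dvd_sum fun j (_ : j ∈ range d) =>
      pow_dvd_logDeriv_splitPolyAt_add hp (by omega) (him.trans_lt hm) M (τ ^ p ^ j)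
    simp only [sum_add_distrib, pow_right_comm τ _ (ordProj[p] i)] at hsum
    rw [sum_pow_pow_pow hτ] at hsum
    convert dvd_sub hsum ht using 1
    simp only [one_dvd, if_true, Nat.cast_one, one_pow, mul_one]
    ring

variable {p : ℕ} [Fact p.Prime] {O : Type*} [CommRing O] [IsDomain O]

theorem PadicModel.exists_splitting (D : PadicModel p O) (N : ℕ) :
    ∃ θ ∈ slopeSubring D.unif, ∀ (d : ℕ) (z : Omg p), z ^ p ^ d = z →
      D.unif ^ N ∣ (∏ j ∈ range d, θ.eval (D.teich z ^ p ^ j)) -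
        D.emb (zetaInt p) ^ (traceZmod p d z).val := by
  obtain ⟨v, hv⟩ := D.exists_dvd_of_dvd_natCast_mul N.factorial_ne_zero
  refine ⟨splitPoly p N (N + v) D.unif, splitPoly_mem_slopeSubring _ _ _ _, fun d z hz => ?_⟩
  obtain ⟨t, htrace, ht⟩ := D.trace_congr d z hz (N + v)
  have hζ : (1 - Polynomial.X : Polynomial O).eval D.unif ^ t =
      D.emb (zetaInt p) ^ (traceZmod p d z).val := by
    have hζp : D.emb (zetaInt p) ^ p = 1 := by
      rw [← map_pow, (isPrimitiveRoot_zetaInt p).pow_eq_one, map_one]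
    simpa [← ht, ZMod.val_natCast, PadicModel.unif, oneSubZeta] using pow_eq_pow_mod t hζp
  simp only [eval_splitPoly]
  rw [← hζ, ← Polynomial.eval_prod, ← Polynomial.eval_pow, ← Polynomial.eval_sub]
  refine pow_dvd_eval fun m hm => hv _ _ ((pow_dvd_pow_of_dvd D.unif_dvd_natCast _).trans ?_)
  have hτ : D.teich z ^ p ^ d = D.teich z := by rw [← map_pow, hz]
  exact (pow_dvd_factorial_mul_coeff_prod_splitPolyAt_sub Fact.out hτ htrace hm).trans
    (mul_dvd_mul_right (Nat.cast_dvd_cast (Nat.factorial_dvd_factorial hm.le)) _)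

end Splitting

/-! ### The additive characters of finite fields -/

section TraceChar

open Finset

variable {p : ℕ} [Fact p.Prime]

/-- The additive character `z ↦ ζ ^ Tr z` of the field with `p ^ d` elements inside `Omg p`. -/
def traceChar (p : ℕ) [Fact p.Prime] (d : ℕ) (z : Omg p) : CycInt p :=
  zetaInt p ^ (traceZmod p d z).val

lemma traceChar_congr {d d' : ℕ} {z z' : Omg p}
    (h : ∑ j ∈ range d, z ^ p ^ j = ∑ j ∈ range d', z' ^ p ^ j) :
    traceChar p d z = traceChar p d' z' := by
  rw [traceChar, traceChar, traceZmod, traceZmod, h]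

lemma traceChar_zero (d : ℕ) : traceChar p d 0 = 1 := by
  have h : traceZmod p d 0 = 0 := (algebraMap (ZMod p) (Omg p)).injective <| by
    rw [algebraMap_traceZmod (by simp [(Fact.out : p.Prime).ne_zero]), map_zero]
    exact sum_eq_zero fun j _ => by simp [(Fact.out : p.Prime).ne_zero]
  rw [traceChar, h, ZMod.val_zero, pow_zero]

lemma traceChar_add {d : ℕ} {z z' : Omg p} (hz : z ^ p ^ d = z) (hz' : z' ^ p ^ d = z') :
    traceChar p d (z + z') = traceChar p d z * traceChar p d z' := by
  have h : traceZmod p d (z + z') = traceZmod p d z + traceZmod p d z' :=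
    (algebraMap (ZMod p) (Omg p)).injective <| by
      rw [map_add, algebraMap_traceZmod hz, algebraMap_traceZmod hz',
        algebraMap_traceZmod (by rw [add_pow_char_pow, hz, hz']), ← sum_add_distrib]
      exact sum_congr rfl fun j _ => add_pow_char_pow _ _ _ _
  rw [traceChar, traceChar, traceChar, h, ZMod.val_add, ← pow_add]
  exact (pow_eq_pow_mod _ (isPrimitiveRoot_zetaInt p).pow_eq_one).symm

lemma traceChar_sum {κ : Type*} (I : Finset κ) {d : ℕ} {z : κ → Omg p}
    (hz : ∀ i ∈ I, z i ^ p ^ d = z i) :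
    traceChar p d (∑ i ∈ I, z i) = ∏ i ∈ I, traceChar p d (z i) := by
  induction I using Finset.induction_on with
  | empty => simp [traceChar_zero]
  | insert a I ha ih =>
    rw [forall_mem_insert] at hz
    rw [sum_insert ha, prod_insert ha, traceChar_add hz.1, ih hz.2]
    rw [sum_pow_char_pow]
    exact sum_congr rfl hz.2

lemma sum_pow_pow_mul (a E : ℕ) (z : Omg p) : ∑ j ∈ range (a * E), z ^ p ^ j =
    ∑ i ∈ range a, (∑ l ∈ range E, z ^ (p ^ a) ^ l) ^ p ^ i := by
  induction E with
  | zero => simp [(Fact.out : p.Prime).ne_zero]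
  | succ E ih =>
    rw [mul_add, mul_one, sum_range_add, ih, ← sum_add_distrib]
    refine sum_congr rfl fun i _ => ?_
    rw [sum_range_succ, add_pow_char_pow, pow_add, ← pow_mul p, pow_mul z]

lemma exists_sum_pow_pow_eq_one {k : Type*} [Field k] [IsAlgClosed k] {q E : ℕ} (hq : 2 ≤ q)
    (hE : 1 ≤ E) : ∃ b : k, ∑ i ∈ range E, b ^ q ^ i = 1 := by
  obtain ⟨E, rfl⟩ : ∃ e, E = e + 1 := ⟨E - 1, by omega⟩
  set f : Polynomial k := ∑ i ∈ range (E + 1), Polynomial.X ^ q ^ i - Polynomial.C 1 with hf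
  have hcoeff : f.coeff (q ^ E) = 1 := by
    rw [hf, Polynomial.coeff_sub, Polynomial.finsetSum_coeff, Polynomial.coeff_C,
      if_neg (by positivity), sub_zero, sum_eq_single E]
    · simp
    · intro i _ hne
      rw [Polynomial.coeff_X_pow, if_neg fun h => hne (Nat.pow_right_injective hq h).symm]
    · simp
  have hdeg : f.degree ≠ 0 := fun h => by
    have hlt : f.degree < (q ^ E : ℕ) := by
      rw [h]
      exact_mod_cast (by positivity : 0 < q ^ E)
    exact zero_ne_one ((Polynomial.coeff_eq_zero_of_degree_lt hlt).symm.trans hcoeff)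
  obtain ⟨b, hb⟩ := IsAlgClosed.exists_root f hdeg
  refine ⟨b, ?_⟩
  rw [Polynomial.IsRoot, hf] at hb
  simpa [Polynomial.eval_finsetSum, sub_eq_zero] using hb

-- Transitivity of the trace: `Tr (b y) = y Tr b` for `y` the partial trace of `h`.
lemma prod_traceChar_mul {a E m : ℕ} {b h : Omg p}
    (hb : ∑ i ∈ range E, b ^ (p ^ a) ^ i = 1) (hh : h ^ (p ^ a) ^ m = h)
    (hfix : ∀ l, (b * h ^ (p ^ a) ^ l) ^ p ^ (a * E) = b * h ^ (p ^ a) ^ l) :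
    ∏ l ∈ range m, traceChar p (a * E) (b * h ^ (p ^ a) ^ l) = traceChar p (a * m) h := by
  rw [← traceChar_sum _ fun l _ => hfix l, ← mul_sum]
  apply traceChar_congr
  rw [sum_pow_pow_mul, sum_pow_pow_mul]
  set y := ∑ l ∈ range m, h ^ (p ^ a) ^ l with hy
  have hyl (l : ℕ) : y ^ (p ^ a) ^ l = y := by
    rw [← pow_mul, hy, sum_pow_char_pow, pow_mul]
    simpa only [pow_right_comm h] using sum_pow_pow_pow hh l
  simp only [mul_pow, hyl, ← sum_mul, hb, one_mul]

end TraceChar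

/-! ### Power series attached to dynamical systems -/

section Dynamical

open PowerSeries Finset

variable {A : Type*} [CommRing A]

lemma exists_hasLogDeriv_sum_fixed {α : Type*} [Fintype α] (σ : α → α) (g : α → A) :
    ∃ L : A⟦X⟧, coeff 0 L = 1 ∧ HasLogDeriv L fun m =>
      ∑ x, if σ^[m] x = x then ∏ l ∈ range m, g (σ^[l] x) else 0 := by
  set W : Matrix α α A := .of fun x y => if σ x = y then g x else 0 with hW
  have hpow (m : ℕ) (x y : α) :
      (W ^ m) x y = if σ^[m] x = y then ∏ l ∈ range m, g (σ^[l] x) else 0 := by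
    induction m generalizing x with
    | zero => rw [pow_zero, Matrix.one_apply, range_zero, prod_empty, Function.iterate_zero, id]
    | succ m ih =>
      rw [pow_succ', Matrix.mul_apply, sum_eq_single (σ x)]
      · rw [ih, hW, Matrix.of_apply, if_pos rfl, prod_range_succ', mul_ite, mul_zero, mul_comm]
        rfl
      · intro z _ hz
        rw [hW, Matrix.of_apply, if_neg hz.symm, zero_mul]
      · simp
  have hunit : IsUnit (W.charpolyRev : A⟦X⟧) := by
    rw [isUnit_iff_constantCoeff, ← coeff_zero_eq_constantCoeff_apply,
      coeff_zero_coe_charpolyRev]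
    exact isUnit_one
  obtain ⟨L, hL⟩ := hunit.exists_right_inv
  refine ⟨L, ?_, ((hasLogDeriv_charpolyRev W).of_mul_eq_one hL).congr fun m _ => ?_⟩
  · have h0 := congrArg (coeff 0) hL
    rwa [coeff_zero_eq_constantCoeff_apply, map_mul, ← coeff_zero_eq_constantCoeff_apply,
      coeff_zero_coe_charpolyRev, one_mul, ← coeff_zero_eq_constantCoeff_apply,
      coeff_zero_one] at h0
  · simp only [neg_neg, Matrix.trace, Matrix.diag_apply, hpow]

lemma exists_hasLogDeriv_of_forall_le [IsDomain A] [CharZero A] {S : ℕ → A}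
    (h : ∀ M : ℕ, ∃ (L : A⟦X⟧) (s : ℕ → A),
      coeff 0 L = 1 ∧ HasLogDeriv L s ∧ ∀ m, 1 ≤ m → m ≤ M → s m = S m) :
    ∃ L : A⟦X⟧, coeff 0 L = 1 ∧ HasLogDeriv L S := by
  choose L s h0 hL hs using h
  have hcoeff {M m : ℕ} (hm : m ≤ M) : coeff m (L M) = coeff m (L m) := by
    refine (hL M).coeff_eq (hL m) (by rw [h0, h0]) m (fun i h1 h2 => ?_) m le_rfl
    rw [hs M i h1 (h2.trans hm), hs m i h1 h2]
  refine ⟨.mk fun m => coeff m (L m), by rw [coeff_mk, h0], HasLogDeriv.iff_coeff.2 fun m => ?_⟩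
  rw [coeff_mk, HasLogDeriv.iff_coeff.1 (hL (m + 1))]
  refine sum_congr rfl fun x hx => ?_
  have hx := mem_antidiagonal.1 hx
  rw [coeff_mk, hcoeff (M := m + 1) (by omega), hs _ _ (by omega) (by omega)]

end Dynamical

/-! ### Character sums over the torus -/

section Torus

open Finset

/-- The value at `x` of the Laurent monomial with exponent vector `w`. -/
def laurentMon {k ι : Type*} [Field k] [Fintype ι] (x : ι → k) (w : ι → ℤ) : k := ∏ i, x i ^ w i

section LaurentMon

variable {k ι : Type*} [Field k] [Fintype ι]

lemma laurentMon_zero (x : ι → k) : laurentMon x 0 = 1 := by simp [laurentMon]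

lemma laurentMon_add {x : ι → k} (hx : ∀ i, x i ≠ 0) (u v : ι → ℤ) :
    laurentMon x (u + v) = laurentMon x u * laurentMon x v := by
  simp only [laurentMon, ← prod_mul_distrib, Pi.add_apply, zpow_add₀ (hx _)]

lemma laurentMon_nsmul (x : ι → k) (m : ℕ) (u : ι → ℤ) :
    laurentMon x (m • u) = laurentMon x u ^ m := by
  simp only [laurentMon, ← prod_pow, Pi.smul_apply, nsmul_eq_mul, mul_comm (m : ℤ), zpow_mul,
    zpow_natCast]

lemma laurentMon_pow (x : ι → k) (m : ℕ) (u : ι → ℤ) :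
    laurentMon (fun i => x i ^ m) u = laurentMon x u ^ m := by
  rw [laurentMon, laurentMon, ← prod_pow]
  exact prod_congr rfl fun i _ => by rw [← zpow_natCast, ← zpow_natCast, zpow_comm]

lemma laurentMon_pow_fixed {x : ι → k} {N : ℕ} (hx : ∀ i, x i ^ N = x i) (u : ι → ℤ) :
    laurentMon x u ^ N = laurentMon x u := by
  rw [← laurentMon_pow, funext hx]

end LaurentMon

variable {p : ℕ} [Fact p.Prime]

/-- The nonzero elements of the field with `p ^ d` elements. -/
def fieldUnits (p : ℕ) [Fact p.Prime] (d : ℕ) : Finset (Omg p) :=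
  Polynomial.nthRootsFinset (p ^ d - 1) 1

lemma two_le_prime_pow {d : ℕ} (hd : 1 ≤ d) : 2 ≤ p ^ d :=
  (Fact.out : p.Prime).two_le.trans (Nat.le_self_pow (by omega) p)

lemma mem_fieldUnits_iff_pow_eq_one {d : ℕ} (hd : 1 ≤ d) {x : Omg p} :
    x ∈ fieldUnits p d ↔ x ^ (p ^ d - 1) = 1 :=
  Polynomial.mem_nthRootsFinset (Nat.sub_pos_of_lt (two_le_prime_pow hd)) 1

lemma mem_fieldUnits {d : ℕ} (hd : 1 ≤ d) {x : Omg p} :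
    x ∈ fieldUnits p d ↔ x ≠ 0 ∧ x ^ p ^ d = x := by
  have hpd := two_le_prime_pow (p := p) hd
  rw [mem_fieldUnits_iff_pow_eq_one hd]
  obtain ⟨e, he⟩ : ∃ e, p ^ d = e + 1 := ⟨p ^ d - 1, by omega⟩
  rw [he, Nat.add_sub_cancel, pow_succ]
  refine ⟨fun h => ⟨?_, by rw [h, one_mul]⟩, fun ⟨h0, h⟩ =>
    mul_right_cancel₀ h0 (h.trans (one_mul x).symm)⟩
  rintro rfl
  rw [zero_pow (by omega)] at h
  exact zero_ne_one h

lemma exists_isPrimitiveRoot_prime_pow_sub_one {d : ℕ} (hd : 1 ≤ d) :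
    ∃ g : Omg p, IsPrimitiveRoot g (p ^ d - 1) := by
  have hpd := two_le_prime_pow (p := p) hd
  have : NeZero ((p ^ d - 1 : ℕ) : Omg p) := ⟨by
    rw [Nat.cast_sub (by omega)]
    push_cast
    rw [CharP.cast_eq_zero, zero_pow (by omega)]
    simp⟩
  exact HasEnoughRootsOfUnity.exists_primitiveRoot (Omg p) (p ^ d - 1)

lemma card_fieldUnits {d : ℕ} (hd : 1 ≤ d) : #(fieldUnits p d) = p ^ d - 1 :=
  (exists_isPrimitiveRoot_prime_pow_sub_one hd).choose_spec.card_nthRootsFinset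

variable {O : Type*} [CommRing O] [IsDomain O] (D : PadicModel p O)

lemma PadicModel.sum_teich_zpow {d : ℕ} (hd : 1 ≤ d) (w : ℤ) :
    ∑ x ∈ fieldUnits p d, D.teich (x ^ w) =
      if ((p ^ d - 1 : ℕ) : ℤ) ∣ w then ((p ^ d - 1 : ℕ) : O) else 0 := by
  have hmem {x : Omg p} := mem_fieldUnits_iff_pow_eq_one hd (x := x)
  split_ifs with h
  · obtain ⟨e, rfl⟩ := h
    rw [sum_congr rfl (g := fun _ => (1 : O)), sum_const, card_fieldUnits hd, nsmul_one]
    intro x hx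
    rw [zpow_mul, zpow_natCast, hmem.1 hx, one_zpow, map_one]
  · obtain ⟨g, hg⟩ := exists_isPrimitiveRoot_prime_pow_sub_one (p := p) hd
    have hg0 : g ≠ 0 := hg.ne_zero (Nat.sub_pos_of_lt (two_le_prime_pow hd)).ne'
    have hgw : D.teich (g ^ w) ≠ 1 := fun hone => h <| (hg.zpow_eq_one_iff_dvd w).1 <|
      D.teich_injective (hone.trans (map_one _).symm)
    suffices hS : D.teich (g ^ w) * ∑ x ∈ fieldUnits p d, D.teich (x ^ w) =
        ∑ x ∈ fieldUnits p d, D.teich (x ^ w) from (mul_left_eq_self₀.1 hS).resolve_left hgw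
    rw [mul_sum]
    refine sum_nbij' (g * ·) (g⁻¹ * ·) (fun x hx => ?_) (fun x hx => ?_)
      (fun x _ => inv_mul_cancel_left₀ hg0 x) (fun x _ => mul_inv_cancel_left₀ hg0 x)
      fun x _ => by rw [mul_zpow, map_mul]
    · rw [hmem, mul_pow, hg.pow_eq_one, one_mul, hmem.1 hx]
    · rw [hmem, mul_pow, inv_pow, hg.pow_eq_one, inv_one, one_mul, hmem.1 hx]

variable {ι : Type*} [Fintype ι]

/-- The rational points of the torus over the field with `p ^ d` elements. -/
def torus (ι : Type*) [Fintype ι] (p : ℕ) [Fact p.Prime] (d : ℕ) : Finset (ι → Omg p) :=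
  Fintype.piFinset fun _ => fieldUnits p d

lemma mem_torus {d : ℕ} (hd : 1 ≤ d) {x : ι → Omg p} :
    x ∈ torus ι p d ↔ ∀ i, x i ≠ 0 ∧ x i ^ p ^ d = x i := by
  simp only [torus, Fintype.mem_piFinset, mem_fieldUnits hd]

lemma PadicModel.sum_teich_laurentMon {d : ℕ} (hd : 1 ≤ d) (w : ι → ℤ) :
    ∑ x ∈ torus ι p d, D.teich (laurentMon x w) =
      if ∀ i, ((p ^ d - 1 : ℕ) : ℤ) ∣ w i then ((p ^ d - 1 : ℕ) : O) ^ Fintype.card ι else 0 := by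
  have hprod : ∑ x ∈ torus ι p d, D.teich (laurentMon x w) =
      ∏ i, ∑ x ∈ fieldUnits p d, D.teich (x ^ w i) := by
    rw [prod_univ_sum]
    exact sum_congr rfl fun x _ => map_prod _ _ _
  rw [hprod]
  simp only [D.sum_teich_zpow hd]
  split_ifs with h
  · rw [prod_congr rfl fun i _ => if_pos (h i), prod_const, card_univ]
  · obtain ⟨i, hi⟩ := not_forall.1 h
    exact prod_eq_zero (mem_univ i) (if_neg hi)

end Torus

/-! ### A finite Dwork trace formula -/

section TraceFormula

open Finset

variable {p : ℕ} [Fact p.Prime] {O : Type*} [CommRing O] {ι : Type*}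

/-- The product `F(x) F(x ^ q) ⋯ F(x ^ (q ^ (m - 1)))`. -/
def frobeniusProd (q : ℕ) (F : AddMonoidAlgebra O (ι → ℤ)) (m : ℕ) : AddMonoidAlgebra O (ι → ℤ) :=
  ∏ l ∈ range m, F.mapDomain (q ^ l • ·)

lemma coeff_frobeniusProd_zero [DecidableEq (ι → ℤ)] (q : ℕ) (F : AddMonoidAlgebra O (ι → ℤ))
    (w : ι → ℤ) :
    (frobeniusProd q F 0).coeff w = if w = 0 then 1 else 0 := by
  rw [frobeniusProd, range_zero, prod_empty, AddMonoidAlgebra.one_def,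
    AddMonoidAlgebra.coeff_single, Finsupp.single_apply]
  simp only [eq_comm]

lemma coeff_frobeniusProd_succ (q : ℕ) (F : AddMonoidAlgebra O (ι → ℤ)) (m : ℕ) (w : ι → ℤ) :
    (frobeniusProd q F (m + 1)).coeff w =
      F.coeff.sum fun v r => r * (frobeniusProd q F m).coeff (w - q ^ m • v) := by
  rw [frobeniusProd, prod_range_succ, mul_comm, AddMonoidAlgebra.coeff_mul_apply_left,
    AddMonoidAlgebra.mapDomain,
    Finsupp.sum_mapDomain_index (fun _ => zero_mul _) fun _ _ _ => add_mul _ _ _]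
  simp only [neg_add_eq_sub, frobeniusProd]

variable [Fintype ι]

namespace PadicModel

/-- The value of a Laurent polynomial at the Teichmüller representative of `x`. -/
def laurentEval (D : PadicModel p O) (x : ι → Omg p) (F : AddMonoidAlgebra O (ι → ℤ)) : O :=
  F.coeff.sum fun w r => r * D.teich (laurentMon x w)

variable (D : PadicModel p O)

lemma exists_algHom_eq_laurentEval {x : ι → Omg p} (hx : ∀ i, x i ≠ 0) :
    ∃ Φ : AddMonoidAlgebra O (ι → ℤ) →ₐ[O] O, ⇑Φ = D.laurentEval x := by
  let χ : Multiplicative (ι → ℤ) →* O :=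
    { toFun := fun w => D.teich (laurentMon x w.toAdd)
      map_one' := by rw [toAdd_one, laurentMon_zero, map_one]
      map_mul' := fun u v => by rw [toAdd_mul, laurentMon_add hx, map_mul] }
  exact ⟨AddMonoidAlgebra.lift O O (ι → ℤ) χ, funext fun F => AddMonoidAlgebra.lift_apply _ _⟩

lemma laurentEval_mapDomain_nsmul (x : ι → Omg p) (k : ℕ) (F : AddMonoidAlgebra O (ι → ℤ)) :
    D.laurentEval x (F.mapDomain (k • ·)) = D.laurentEval (fun i => x i ^ k) F := by
  rw [laurentEval, AddMonoidAlgebra.mapDomain,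
    Finsupp.sum_mapDomain_index (fun _ => zero_mul _) fun _ _ _ => add_mul _ _ _]
  simp only [laurentMon_nsmul, laurentMon_pow, laurentEval]

end PadicModel

lemma PadicModel.laurentEval_frobeniusProd (D : PadicModel p O) {x : ι → Omg p}
    (hx : ∀ i, x i ≠ 0) (q : ℕ) (F : AddMonoidAlgebra O (ι → ℤ)) (m : ℕ) :
    D.laurentEval x (frobeniusProd q F m) =
      ∏ l ∈ range m, D.laurentEval (fun i => x i ^ q ^ l) F := by
  obtain ⟨Φ, hΦ⟩ := D.exists_algHom_eq_laurentEval hx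
  simp only [← D.laurentEval_mapDomain_nsmul, ← hΦ, frobeniusProd, map_prod]

/-- The vectors all of whose coordinates are at most `b` in absolute value. -/
def latticeBox (ι : Type*) [Fintype ι] (b : ℤ) : Finset (ι → ℤ) :=
  Fintype.piFinset fun _ => Icc (-b) b

lemma mem_latticeBox {b : ℤ} {u : ι → ℤ} : u ∈ latticeBox ι b ↔ ∀ i, |u i| ≤ b := by
  simp only [latticeBox, Fintype.mem_piFinset, mem_Icc, abs_le]

variable {q : ℕ} {F : AddMonoidAlgebra O (ι → ℤ)} {b : ℤ}

lemma abs_add_le_of_coeff_frobeniusProd_ne_zero (hq : 2 ≤ q) (hb : F.coeff.support ⊆ latticeBox ι b)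
    {m : ℕ} {w : ι → ℤ} (hw : (frobeniusProd q F m).coeff w ≠ 0) (i : ι) :
    |w i| + b ≤ q ^ m * b := by
  induction m generalizing w with
  | zero =>
    rw [coeff_frobeniusProd_zero, ne_eq, ite_eq_right_iff, Classical.not_imp] at hw
    simp [hw.1]
  | succ m ih =>
    rw [coeff_frobeniusProd_succ] at hw
    obtain ⟨v, hv, hne⟩ := exists_ne_zero_of_sum_ne_zero hw
    have hvb := mem_latticeBox.1 (hb hv) i
    have hprev := ih (right_ne_zero_of_mul hne)
    rw [Pi.sub_apply, Pi.smul_apply, nsmul_eq_mul, Nat.cast_pow] at hprev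
    have htri : |w i| ≤ |w i - q ^ m * v i| + q ^ m * |v i| := by
      simpa [abs_mul] using abs_add_le (w i - q ^ m * v i) (q ^ m * v i)
    have hqm : (q : ℤ) ^ m * |v i| ≤ q ^ m * b := mul_le_mul_of_nonneg_left hvb (by positivity)
    have hb0 : 0 ≤ (q : ℤ) ^ m * b := (by positivity : 0 ≤ (q : ℤ) ^ m * |v i|).trans hqm
    have hq2 : (2 : ℤ) ≤ q := by exact_mod_cast hq
    rw [pow_succ]
    nlinarith

/-- The matrix of the Dwork operator of `F` on the monomials with exponents in a box. -/
def dworkMatrix (q : ℕ) (F : AddMonoidAlgebra O (ι → ℤ)) (b : ℤ) :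
    Matrix (latticeBox ι b) (latticeBox ι b) O :=
  .of fun u v => F.coeff (q • (u : ι → ℤ) - v)

lemma dworkMatrix_apply (u v : latticeBox ι b) :
    dworkMatrix q F b u v = F.coeff (q • (u : ι → ℤ) - v) := rfl

lemma mem_latticeBox_of_coeff_frobeniusProd_ne_zero (hq : 2 ≤ q)
    (hb : F.coeff.support ⊆ latticeBox ι b) {m : ℕ} {z v : ι → ℤ} (hv : v ∈ latticeBox ι b)
    (hz : (frobeniusProd q F m).coeff (q ^ m • z - v) ≠ 0) : z ∈ latticeBox ι b := by
  refine mem_latticeBox.2 fun i => ?_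
  have hle := abs_add_le_of_coeff_frobeniusProd_ne_zero hq hb hz i
  rw [Pi.sub_apply, Pi.smul_apply, nsmul_eq_mul, Nat.cast_pow] at hle
  have htri : (q : ℤ) ^ m * |z i| ≤ |q ^ m * z i - v i| + |v i| := by
    simpa [abs_mul] using abs_add_le (q ^ m * z i - v i) (v i)
  have hvi := mem_latticeBox.1 hv i
  exact le_of_mul_le_mul_left (by linarith) (by positivity : (0 : ℤ) < (q : ℤ) ^ m)

lemma dworkMatrix_pow_apply (hq : 2 ≤ q) (hb : F.coeff.support ⊆ latticeBox ι b) (m : ℕ)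
    (u v : latticeBox ι b) : (dworkMatrix q F b ^ m) u v =
      (frobeniusProd q F m).coeff (q ^ m • (u : ι → ℤ) - v) := by
  induction m generalizing u with
  | zero =>
    rw [coeff_frobeniusProd_zero, pow_zero, Matrix.one_apply, pow_zero, one_smul]
    simp only [sub_eq_zero, Subtype.coe_inj]
  | succ m ih =>
    set G := (frobeniusProd q F m).coeff
    have hright : ((frobeniusProd q F (m + 1)).coeff (q ^ (m + 1) • (u : ι → ℤ) - v)) =
        ∑ᶠ w, F.coeff w * G (q ^ (m + 1) • (u : ι → ℤ) - v - q ^ m • w) := by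
      rw [coeff_frobeniusProd_succ]
      exact (finsum_eq_sum_of_support_subset _ fun w hw =>
        mem_coe.2 <| Finsupp.mem_support_iff.2 <|
          left_ne_zero_of_mul (Function.mem_support.1 hw)).symm
    rw [pow_succ', Matrix.mul_apply, hright, ← finsum_comp_equiv (Equiv.subLeft (q • (u : ι → ℤ)))]
    simp only [ih, dworkMatrix_apply]
    rw [sum_coe_sort (latticeBox ι b) fun z => F.coeff (q • (u : ι → ℤ) - z) * G (q ^ m • z - v),
      ← finsum_eq_sum_of_support_subset _ fun z hz => mem_coe.2 <|
        mem_latticeBox_of_coeff_frobeniusProd_ne_zero hq hb v.2 <|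
          right_ne_zero_of_mul (Function.mem_support.1 hz)]
    refine finsum_congr fun z => ?_
    rw [Equiv.subLeft_apply]
    congr 2
    rw [smul_sub, smul_smul, pow_succ]
    abel

lemma trace_dworkMatrix_pow (hq : 2 ≤ q) (hb : F.coeff.support ⊆ latticeBox ι b) {m : ℕ}
    (hm : 1 ≤ m) : (dworkMatrix q F b ^ m).trace =
      ∑ w ∈ (frobeniusProd q F m).coeff.support with ∀ i, ((q ^ m - 1 : ℕ) : ℤ) ∣ w i,
        (frobeniusProd q F m).coeff w := by
  set G := (frobeniusProd q F m).coeff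
  have hqm : 1 < q ^ m := Nat.one_lt_pow (by omega) hq
  have hcast : ((q ^ m - 1 : ℕ) : ℤ) = q ^ m - 1 := by rw [Nat.cast_sub hqm.le]; push_cast; rfl
  have hsub (u : ι → ℤ) : q ^ m • u - u = (q ^ m - 1) • u := by
    rw [sub_eq_iff_eq_add, ← succ_nsmul, Nat.sub_add_cancel hqm.le]
  have hinj : Function.Injective fun u : ι → ℤ => (q ^ m - 1) • u :=
    nsmul_right_injective (Nat.sub_pos_of_lt hqm).ne'
  have hbox : (Function.support fun u => G ((q ^ m - 1) • u)) ⊆ latticeBox ι b := by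
    refine fun u hu => mem_coe.2 <| mem_latticeBox.2 fun i => ?_
    have hle := abs_add_le_of_coeff_frobeniusProd_ne_zero hq hb hu i
    rw [Pi.smul_apply, nsmul_eq_mul, hcast, abs_mul, ← hcast, Nat.abs_cast] at hle
    have hpos : (0 : ℤ) < (q ^ m - 1 : ℕ) := by exact_mod_cast Nat.sub_pos_of_lt hqm
    rw [hcast] at hle hpos
    exact le_of_mul_le_mul_left (by linarith) hpos
  simp only [Matrix.trace, Matrix.diag_apply, dworkMatrix_pow_apply hq hb, hsub]
  rw [sum_coe_sort (latticeBox ι b) fun u => G ((q ^ m - 1) • u),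
    ← finsum_eq_sum_of_support_subset _ hbox,
    ← finsum_mem_range (f := fun w => G w) hinj]
  refine finsum_mem_eq_sum_of_inter_support_eq _ (Set.ext fun w => ?_)
  simp only [Set.mem_inter_iff, Set.mem_range, Function.mem_support, coe_filter,
    Finsupp.mem_support_iff, Set.mem_ofPred_eq]
  refine and_congr_left fun hw => ⟨?_, fun h => ?_⟩
  · rintro ⟨u, rfl⟩
    exact ⟨hw, fun i => ⟨u i, nsmul_eq_mul _ _⟩⟩
  · choose u hu using h.2
    exact ⟨u, funext fun i => (nsmul_eq_mul _ _).trans (hu i).symm⟩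

theorem PadicModel.sum_torus_prod_laurentEval [IsDomain O] (D : PadicModel p O) (hq : 2 ≤ q)
    (hb : F.coeff.support ⊆ latticeBox ι b) {m d : ℕ} (hd : 1 ≤ d) (hqd : q ^ m = p ^ d) :
    ∑ x ∈ torus ι p d, ∏ l ∈ range m, D.laurentEval (fun i => x i ^ q ^ l) F =
      ((q : O) ^ m - 1) ^ Fintype.card ι * (dworkMatrix q F b ^ m).trace := by
  have hm : 1 ≤ m := by
    rcases Nat.eq_zero_or_pos m with rfl | hm
    · exact absurd hqd.symm (by simpa using (Nat.one_lt_pow (by omega)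
        (Fact.out : p.Prime).one_lt).ne')
    · exact hm
  have hcast : ((p ^ d - 1 : ℕ) : O) = (q : O) ^ m - 1 := by
    rw [← hqd, Nat.cast_sub (Nat.one_le_pow _ _ (by omega)), Nat.cast_pow, Nat.cast_one]
  calc ∑ x ∈ torus ι p d, ∏ l ∈ range m, D.laurentEval (fun i => x i ^ q ^ l) F
      = ∑ x ∈ torus ι p d, D.laurentEval x (frobeniusProd q F m) :=
        sum_congr rfl fun x hx => (D.laurentEval_frobeniusProd
          (fun i => ((mem_torus hd).1 hx i).1) q F m).symm
    _ = ∑ w ∈ (frobeniusProd q F m).coeff.support, (frobeniusProd q F m).coeff w *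
          ∑ x ∈ torus ι p d, D.teich (laurentMon x w) := by
        simp only [laurentEval, Finsupp.sum, mul_sum]
        exact sum_comm
    _ = _ := by
        simp only [D.sum_teich_laurentMon hd, mul_ite, mul_zero]
        rw [← sum_filter, ← sum_mul, mul_comm, hcast, trace_dworkMatrix_pow hq hb hm, hqd]

end TraceFormula

/-! ### Slope bounds for the characteristic series of a Dwork matrix -/

section SlopeBounds

open Finset PowerSeries

variable {O : Type*} [CommRing O]

namespace SlopeBound

variable {l : O} {c K K' : ℕ} {f g : O⟦X⟧}

lemma mono (h : SlopeBound l c K f) (hK : K ≤ K') : SlopeBound l c K' f :=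
  fun j => (pow_dvd_pow l (by omega)).trans (h j)

lemma of_C (r : O) : SlopeBound l c 0 (C r) := by
  intro j
  rw [coeff_C]
  split_ifs with h <;> simp [h]

lemma one : SlopeBound l c 0 (1 : O⟦X⟧) := by
  simpa only [map_one] using of_C (l := l) (c := c) 1

lemma mul (hf : SlopeBound l c K f) (hg : SlopeBound l c K' g) :
    SlopeBound l c (K + K') (f * g) := by
  intro j
  rw [coeff_mul]
  refine dvd_sum fun x hx => dvd_trans ?_ (mul_dvd_mul (hf x.1) (hg x.2))
  rw [← pow_add, ← mem_antidiagonal.1 hx, mul_add]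
  exact pow_dvd_pow l (by omega)

lemma pow (hf : SlopeBound l c K f) (n : ℕ) : SlopeBound l c (n * K) (f ^ n) := by
  induction n with
  | zero => simpa using one
  | succ n ih => simpa only [pow_succ, Nat.succ_mul] using ih.mul hf

lemma prod {κ : Type*} (I : Finset κ) {K : κ → ℕ} {f : κ → O⟦X⟧}
    (hf : ∀ i ∈ I, SlopeBound l c (K i) (f i)) :
    SlopeBound l c (∑ i ∈ I, K i) (∏ i ∈ I, f i) := by
  induction I using Finset.induction_on with
  | empty => simpa using one
  | insert a I ha ih =>
    rw [prod_insert ha, sum_insert ha]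
    exact (hf a (mem_insert_self a I)).mul (ih fun i hi => hf i (mem_insert_of_mem hi))

lemma X_mul_C {r : O} (hr : l ^ c ∣ r) : SlopeBound l c 0 (X * C r) := by
  intro j
  rcases j with _ | j
  · simp
  · rw [coeff_succ_X_mul, coeff_C]
    split_ifs with h <;> simp [h, hr]

lemma of_C_mul [IsDomain O] (hl : l ≠ 0) (h : SlopeBound l c 0 (C (l ^ K) * f)) :
    SlopeBound l c K f := by
  intro j
  have hj := h j
  rw [coeff_C_mul, Nat.sub_zero] at hj
  rcases le_total K (c * j) with hle | hle
  · rw [← Nat.add_sub_cancel' hle, pow_add] at hj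
    exact (mul_dvd_mul_iff_left (pow_ne_zero _ hl)).1 hj
  · simp [Nat.sub_eq_zero_of_le hle]

end SlopeBound

/-- The subring of power series whose `j`-th coefficient is divisible by `l ^ (c * j)`. -/
def slopeSeriesSubring (l : O) (c : ℕ) : Subring O⟦X⟧ where
  carrier := {f | SlopeBound l c 0 f}
  mul_mem' := SlopeBound.mul
  one_mem' := .one
  add_mem' hf hg j := by rw [map_add]; exact dvd_add (hf j) (hg j)
  zero_mem' j := by rw [map_zero]; exact dvd_zero _
  neg_mem' hf j := by rw [map_neg]; exact (hf j).neg_right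

variable [IsDomain O] {n : Type*} [Fintype n] [DecidableEq n] {l : O} (A : Matrix n n O)

-- The rows in `bad` are multiplied by `l ^ c` before expanding the determinant.
lemma slopeBound_charpolyRev_of_rows (hl : l ≠ 0) (c : ℕ) (bad : Finset n)
    (h : ∀ u ∉ bad, ∀ v, l ^ c ∣ A u v) :
    SlopeBound l c (c * #bad) (A.charpolyRev : O⟦X⟧) := by
  set B : Matrix n n O⟦X⟧ := 1 - (X : O⟦X⟧) • A.map (C (R := O)) with hB
  set w : n → O⟦X⟧ := fun u => if u ∈ bad then C (l ^ c) else 1 with hw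
  have hentry (u v : n) : w u * B u v ∈ slopeSeriesSubring l c := by
    have hone : (1 : Matrix n n O⟦X⟧) u v ∈ slopeSeriesSubring l c := by
      rw [Matrix.one_apply]
      split_ifs
      exacts [one_mem _, zero_mem _]
    rw [hB, Matrix.sub_apply, Matrix.smul_apply, Matrix.map_apply, smul_eq_mul, mul_sub]
    by_cases hu : u ∈ bad
    · rw [show w u = C (l ^ c) from if_pos hu, mul_left_comm, ← map_mul]
      exact sub_mem (mul_mem (SlopeBound.of_C _) hone) (SlopeBound.X_mul_C (dvd_mul_right _ _))
    · rw [show w u = 1 from if_neg hu, one_mul, one_mul]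
      exact sub_mem hone (SlopeBound.X_mul_C (h u hu v))
  have hdet : (Matrix.of fun u v => w u * B u v).det ∈ slopeSeriesSubring l c := by
    rw [Matrix.det_apply]
    refine sum_mem fun σ _ => ?_
    rw [Units.smul_def]
    exact zsmul_mem (prod_mem fun i _ => hentry _ _) _
  have hprod : ∏ u, w u = C (l ^ (c * #bad)) := by
    rw [hw, prod_ite_mem, univ_inter, prod_const, ← map_pow, ← pow_mul]
  rw [Matrix.det_mul_column, hprod, hB, ← coe_charpolyRev] at hdet
  exact SlopeBound.of_C_mul hl hdet

lemma charpolyRev_eq_of_mul_diagonal_eq {A A' : Matrix n n O} {D : n → O} (hD : ∀ u, D u ≠ 0)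
    (h : A * .diagonal D = .diagonal D * A') : A.charpolyRev = A'.charpolyRev := by
  open Polynomial in
  set Λ : Matrix n n O[X] := (Matrix.diagonal D).map Polynomial.C with hΛ
  have hΛ0 : Λ.det ≠ 0 := by
    rw [hΛ, Matrix.diagonal_map (map_zero _), Matrix.det_diagonal]
    exact prod_ne_zero_iff.2 fun u _ => Polynomial.C_ne_zero.2 (hD u)
  have hcomm : A.map Polynomial.C * Λ = Λ * A'.map Polynomial.C := by
    rw [hΛ, ← Matrix.map_mul, h, Matrix.map_mul]
  have hdet := congrArg Matrix.det (show
    (1 - (Polynomial.X : Polynomial O) • A.map Polynomial.C) * Λ =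
      Λ * (1 - (Polynomial.X : Polynomial O) • A'.map Polynomial.C) by
    rw [sub_mul, mul_sub, one_mul, mul_one, Matrix.smul_mul, Matrix.mul_smul, hcomm])
  rw [Matrix.det_mul, Matrix.det_mul, mul_comm] at hdet
  exact mul_left_cancel₀ hΛ0 hdet

-- Conjugating `A` by the diagonal matrix of the `l ^ e u` makes all rows with `c < e u` divisible
-- by `l ^ c`.
lemma slopeBound_charpolyRev_of_weight (hl : l ≠ 0) (c : ℕ) (e : n → ℕ)
    (h : ∀ u v, l ^ (2 * e u - 1) ∣ A u v * l ^ e v) :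
    SlopeBound l c (c * #{u | e u ≤ c}) (A.charpolyRev : O⟦X⟧) := by
  have hconj (u v : n) : ∃ y, A u v * l ^ e v = l ^ e u * y ∧ l ^ (e u - 1) ∣ y := by
    obtain ⟨y, hy⟩ := h u v
    rcases Nat.eq_zero_or_pos (e u) with h0 | h0
    · exact ⟨A u v * l ^ e v, by simp [h0], by simp [h0]⟩
    · refine ⟨l ^ (e u - 1) * y, ?_, dvd_mul_right _ _⟩
      rw [hy, ← mul_assoc, ← pow_add, show e u + (e u - 1) = 2 * e u - 1 by omega]
  choose A' hA' hdvd using hconj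
  have hcomm : A * .diagonal (fun u => l ^ e u) = .diagonal (fun u => l ^ e u) * Matrix.of A' := by
    ext u v
    rw [Matrix.mul_diagonal, Matrix.diagonal_mul, hA', Matrix.of_apply]
  rw [charpolyRev_eq_of_mul_diagonal_eq (fun u => pow_ne_zero _ hl) hcomm]
  refine slopeBound_charpolyRev_of_rows _ hl c _ fun u hu v =>
    (pow_dvd_pow l ?_).trans (hdvd u v)
  simp only [mem_filter, mem_univ, true_and, not_le] at hu
  omega

end SlopeBounds

section LaurentSlope

open Finset PowerSeries

variable {O : Type*} [CommRing O] {ι : Type*} [Fintype ι]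

/-- The smallest `n` such that all coordinates of `u` are at most `B * n` in absolute value, for
`B > 0`. -/
def latticeHeight (B : ℕ) (u : ι → ℤ) : ℕ := univ.sup fun i => (u i).natAbs ⌈/⌉ B

variable {B : ℕ} {l : O}

lemma latticeHeight_le_iff (hB : 0 < B) {u : ι → ℤ} {n : ℕ} :
    latticeHeight B u ≤ n ↔ ∀ i, |u i| ≤ (B : ℤ) * n := by
  simp only [latticeHeight, Finset.sup_le_iff, mem_univ, true_implies, ceilDiv_le_iff_le_mul hB,
    Int.abs_eq_natAbs]
  exact_mod_cast Iff.rfl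

lemma latticeHeight_zero : latticeHeight B (0 : ι → ℤ) = 0 := by
  simp [latticeHeight]

lemma latticeHeight_add_le (hB : 0 < B) (u v : ι → ℤ) :
    latticeHeight B (u + v) ≤ latticeHeight B u + latticeHeight B v := by
  refine (latticeHeight_le_iff hB).2 fun i => ?_
  have hu := (latticeHeight_le_iff hB).1 (le_refl (latticeHeight B u)) i
  have hv := (latticeHeight_le_iff hB).1 (le_refl (latticeHeight B v)) i
  rw [Nat.cast_add, mul_add]
  exact (abs_add_le _ _).trans (add_le_add hu hv)

lemma two_mul_latticeHeight_le (hB : 0 < B) {q : ℕ} (hq : 2 ≤ q) (u v : ι → ℤ) :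
    2 * latticeHeight B u - 1 ≤ latticeHeight B (q • u - v) + latticeHeight B v := by
  set T := latticeHeight B (q • u - v) + latticeHeight B v
  suffices latticeHeight B u ≤ (T + 1) / 2 by omega
  refine (latticeHeight_le_iff hB).2 fun i => ?_
  have hadd : q * |u i| ≤ (B : ℤ) * T := by
    have h := (latticeHeight_le_iff hB).1 (latticeHeight_add_le hB (q • u - v) v) i
    rwa [sub_add_cancel, Pi.smul_apply, nsmul_eq_mul, abs_mul, Nat.abs_cast] at h
  have hq2 : 2 * |u i| ≤ q * |u i| :=
    mul_le_mul_of_nonneg_right (by exact_mod_cast hq) (abs_nonneg _)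
  have hT : (B : ℤ) * T ≤ B * (2 * ((T + 1) / 2 : ℕ)) :=
    mul_le_mul_of_nonneg_left (by exact_mod_cast (by omega : T ≤ 2 * ((T + 1) / 2)))
      (by positivity)
  linarith

/-- The subring of Laurent polynomials whose coefficient at `w` is divisible by
`l ^ latticeHeight B w`. -/
def laurentSlope (ι : Type*) [Fintype ι] (l : O) {B : ℕ} (hB : 0 < B) :
    Subring (AddMonoidAlgebra O (ι → ℤ)) where
  carrier := {F | ∀ w, l ^ latticeHeight B w ∣ F.coeff w}
  mul_mem' {F G} hF hG w := by
    rw [AddMonoidAlgebra.coeff_mul_apply_left]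
    refine dvd_sum fun v _ => dvd_trans ?_ (mul_dvd_mul (hF v) (hG (-v + w)))
    rw [← pow_add]
    refine pow_dvd_pow l ?_
    simpa using latticeHeight_add_le hB v (-v + w)
  one_mem' w := by
    rw [AddMonoidAlgebra.one_def, AddMonoidAlgebra.coeff_single, Finsupp.single_apply]
    split_ifs with h
    · rw [← h, latticeHeight_zero, pow_zero]
    · exact dvd_zero _
  add_mem' hF hG w := dvd_add (hF w) (hG w)
  zero_mem' _ := dvd_zero _
  neg_mem' hF w := (hF w).neg_right

theorem slopeBound_charpolyRev_dworkMatrix [IsDomain O] (hl : l ≠ 0) (hB : 0 < B) {q : ℕ}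
    (hq : 2 ≤ q) {F : AddMonoidAlgebra O (ι → ℤ)} (hF : F ∈ laurentSlope ι l hB) (b : ℤ) (c : ℕ)
    (y : O) : SlopeBound l c (c * #(latticeBox ι (B * c)))
      ((y • dworkMatrix q F b).charpolyRev : O⟦X⟧) := by
  refine (slopeBound_charpolyRev_of_weight _ hl c
    (fun u : latticeBox ι b => latticeHeight B (u : ι → ℤ))
    fun u v => ?_).mono (Nat.mul_le_mul_left _ ?_)
  · rw [Matrix.smul_apply, smul_eq_mul, mul_assoc, dworkMatrix_apply]
    refine ((pow_dvd_pow l (two_mul_latticeHeight_le hB hq (u : ι → ℤ) v)).trans ?_).mul_left y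
    rw [pow_add]
    exact mul_dvd_mul_right (hF _) _
  · refine card_le_card_of_injOn Subtype.val (fun u hu => ?_) Subtype.val_injective.injOn
    exact mem_coe.2 <| mem_latticeBox.2 <| (latticeHeight_le_iff hB).1 (mem_filter.1 hu).2

end LaurentSlope

/-! ### Meromorphy of the `L`-function of a sum over the torus -/

section Meromorphy

open Finset PowerSeries

lemma sum_choose_even_sub_sum_choose_odd {R : Type*} [CommRing R] (r : ℕ) (T x : R) :
    ∑ i ∈ range (r + 1) with Even (r - i), (r.choose i : R) * (x ^ i * T) -
      ∑ i ∈ range (r + 1) with ¬ Even (r - i), (r.choose i : R) * (x ^ i * T) =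
      (x - 1) ^ r * T := by
  rw [sub_eq_add_neg x 1, add_pow, sum_mul, sub_eq_add_neg, ← sum_neg_distrib,
    ← sum_filter_add_sum_filter_not (range (r + 1)) fun i => Even (r - i)]
  refine congrArg₂ _ (sum_congr rfl fun i hi => ?_) (sum_congr rfl fun i hi => ?_)
  · rw [(mem_filter.1 hi).2.neg_one_pow]
    ring
  · rw [(Nat.not_even_iff_odd.1 (mem_filter.1 hi).2).neg_one_pow]
    ring

variable {p : ℕ} [Fact p.Prime] {O : Type*} [CommRing O] {ι : Type*} [Fintype ι]

/-- Modulo each power of the uniformizer, the sums `S m` are the torus sums over the field with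
`p ^ (a * m)` elements attached to a Laurent polynomial `F` with coefficients of linear growth, the
rate of growth being independent of the modulus. -/
def HasDworkExpansion (D : PadicModel p O) (ι : Type*) [Fintype ι] (a : ℕ) (S : ℕ → CycInt p) :
    Prop :=
  ∃ (B : ℕ) (hB : 0 < B), ∀ N : ℕ, ∃ F ∈ laurentSlope ι D.unif hB, ∀ m, 1 ≤ m →
    D.unif ^ N ∣ D.emb (S m) -
      ∑ x ∈ torus ι p (a * m), ∏ l ∈ range m, D.laurentEval (fun i => x i ^ (p ^ a) ^ l) F

lemma exists_support_subset_latticeBox (F : AddMonoidAlgebra O (ι → ℤ)) :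
    ∃ b : ℤ, F.coeff.support ⊆ latticeBox ι b := by
  refine ⟨∑ w ∈ F.coeff.support, ∑ i, |w i|, fun w hw => mem_latticeBox.2 fun i => ?_⟩
  exact (single_le_sum (f := fun i => |w i|) (fun _ _ => abs_nonneg _) (mem_univ i)).trans
    (single_le_sum (f := fun w => ∑ i, |w i|) (fun _ _ => sum_nonneg fun _ _ => abs_nonneg _) hw)

/-- The product over `i ∈ I` of the `(r choose i)`-th powers of the characteristic series of
`Q ^ i • A`. -/
def binomialCharSeries {n : Type*} [Fintype n] [DecidableEq n] (A : Matrix n n O) (Q : O) (r : ℕ)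
    (I : Finset ℕ) : O⟦X⟧ :=
  ∏ i ∈ I, ((Q ^ i • A).charpolyRev : O⟦X⟧) ^ r.choose i

section BinomialCharSeries

variable {n : Type*} [Fintype n] [DecidableEq n] (A : Matrix n n O) (Q : O) (r : ℕ)

lemma coeff_zero_binomialCharSeries (I : Finset ℕ) :
    coeff 0 (binomialCharSeries A Q r I) = 1 := by
  rw [binomialCharSeries, coeff_zero_eq_constantCoeff_apply, map_prod]
  refine prod_eq_one fun i _ => ?_
  rw [map_pow, ← coeff_zero_eq_constantCoeff_apply, coeff_zero_coe_charpolyRev, one_pow]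

lemma hasLogDeriv_binomialCharSeries (I : Finset ℕ) : HasLogDeriv (binomialCharSeries A Q r I)
    fun m => ∑ i ∈ I, (r.choose i : O) * -((Q ^ m) ^ i * (A ^ m).trace) := by
  refine (HasLogDeriv.prod I fun i _ =>
    (hasLogDeriv_charpolyRev (Q ^ i • A)).pow (r.choose i)).congr fun m _ => ?_
  refine sum_congr rfl fun i _ => ?_
  rw [smul_pow, Matrix.trace_smul, smul_eq_mul, ← pow_mul, ← pow_mul, mul_comm i m]

lemma SlopeBound.binomialCharSeries {l : O} {c K : ℕ} {A : Matrix n n O}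
    (h : ∀ y : O, SlopeBound l c K ((y • A).charpolyRev : O⟦X⟧)) {r : ℕ} {I : Finset ℕ}
    (hI : I ⊆ range (r + 1)) : SlopeBound l c (2 ^ r * K) (binomialCharSeries A Q r I) := by
  refine (SlopeBound.prod I fun i _ => (h (Q ^ i)).pow (r.choose i)).mono ?_
  rw [← sum_mul, ← Nat.sum_range_choose]
  exact Nat.mul_le_mul_right _ (sum_le_sum_of_subset hI)

end BinomialCharSeries

-- By the trace formula `L` is congruent to the alternating product of the characteristic series
-- of `Q ^ i • A`, where `A` is the Dwork matrix and `(Q ^ m - 1) ^ r` is expanded binomially.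
theorem HasDworkExpansion.approxMeromorphic [IsDomain O] {D : PadicModel p O} {a : ℕ}
    {S : ℕ → CycInt p} (hS : HasDworkExpansion D ι a S) (ha : 1 ≤ a) {L : (CycInt p)⟦X⟧}
    (h0 : coeff 0 L = 1) (hL : HasLogDeriv L S) :
    ApproxMeromorphic D.unif (PowerSeries.map D.emb L) := by
  obtain ⟨B, hB, hexp⟩ := hS
  intro c
  set r := Fintype.card ι
  refine ⟨2 ^ r * (c * #(latticeBox ι (B * c))), fun N M => ?_⟩
  obtain ⟨v, hv⟩ := D.exists_dvd_of_dvd_natCast_mul M.factorial_ne_zero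
  obtain ⟨F, hF, hcong⟩ := hexp (N + v)
  obtain ⟨b, hb⟩ := exists_support_subset_latticeBox F
  have hq : 2 ≤ p ^ a := two_le_prime_pow ha
  set A := dworkMatrix (p ^ a) F b
  set Q : O := ((p ^ a : ℕ) : O)
  have hslope (I : Finset ℕ) (hI : I ⊆ range (r + 1)) :=
    SlopeBound.binomialCharSeries Q
      (slopeBound_charpolyRev_dworkMatrix D.unif_ne_zero hB hq hF b c) hI
  set even := {i ∈ range (r + 1) | Even (r - i)}
  set odd := {i ∈ range (r + 1) | ¬ Even (r - i)}
  refine ⟨binomialCharSeries A Q r odd, binomialCharSeries A Q r even,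
    coeff_zero_binomialCharSeries .., hslope _ (filter_subset ..), hslope _ (filter_subset ..),
    fun j hj => ?_⟩
  have hconst : coeff 0 (PowerSeries.map D.emb L * binomialCharSeries A Q r even) =
      coeff 0 (binomialCharSeries A Q r odd) := by
    rw [coeff_mul, Finset.Nat.antidiagonal_zero, sum_singleton, coeff_map, h0, map_one,
      coeff_zero_binomialCharSeries, coeff_zero_binomialCharSeries, one_mul]
  have htrace (m : ℕ) (hm : 1 ≤ m) (_ : m ≤ M) : D.unif ^ (N + v) ∣
      D.emb (S m) + ∑ i ∈ even, (r.choose i : O) * -((Q ^ m) ^ i * (A ^ m).trace) -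
        ∑ i ∈ odd, (r.choose i : O) * -((Q ^ m) ^ i * (A ^ m).trace) := by
    have h := hcong m hm
    rw [D.sum_torus_prod_laurentEval hq hb (Nat.mul_pos ha hm) (pow_mul ..).symm,
      ← sum_choose_even_sub_sum_choose_odd] at h
    convert h using 1
    simp only [mul_neg, sum_neg_distrib]
    ring
  have hfact := HasLogDeriv.dvd_factorial_mul_coeff_sub
    ((hL.map D.emb).mul (hasLogDeriv_binomialCharSeries A Q r even))
    (hasLogDeriv_binomialCharSeries A Q r odd) hconst (D.unif ^ (N + v)) M htrace
  rw [map_sub]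
  refine hv N _ ((hfact j hj).trans (mul_dvd_mul_right ?_ _))
  exact Nat.cast_dvd_cast (Nat.factorial_dvd_factorial hj)

end Meromorphy

section TorusSums

open Finset

variable {p : ℕ} [Fact p.Prime] {O : Type*} [CommRing O] {ι J : Type*} [Fintype ι] [Fintype J]

/-- The value at `x` of the Laurent polynomial with coefficients `c j` and exponents `μ j`. -/
def laurentValue {k : Type*} [Field k] (c : J → k) (μ : J → ι → ℤ) (x : ι → k) : k :=
  ∑ j, c j * laurentMon x (μ j)

/-- The exponential sum, over the torus points of the field with `p ^ d` elements, of the Laurent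
polynomial with coefficients `c j` and exponents `μ j`. -/
def torusSum (p : ℕ) [Fact p.Prime] (c : J → Omg p) (μ : J → ι → ℤ) (d : ℕ) : CycInt p :=
  ∑ x ∈ torus ι p d, traceChar p d (laurentValue c μ x)

lemma dvd_prod_sub_prod {R κ : Type*} [CommRing R] {l : R} {I : Finset κ} {f g : κ → R}
    (h : ∀ i ∈ I, l ∣ f i - g i) : l ∣ ∏ i ∈ I, f i - ∏ i ∈ I, g i := by
  simp only [← Ideal.mem_span_singleton, ← Ideal.Quotient.mk_eq_mk_iff_sub_mem, map_prod] at h ⊢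
  exact prod_congr rfl h

lemma pow_pow_mul_eq_self {M : Type*} [Monoid M] {c : M} {p a : ℕ} (h : c ^ p ^ a = c) (m : ℕ) :
    c ^ p ^ (a * m) = c := by
  induction m with
  | zero => simp
  | succ m ih => rw [mul_add, mul_one, pow_add, pow_mul, ih, h]

lemma prod_range_mul_eq {M : Type*} [CommMonoid M] (a m : ℕ) (g : ℕ → M) :
    ∏ l ∈ range m, ∏ i ∈ range a, g (i + a * l) = ∏ i ∈ range (a * m), g i := by
  induction m with
  | zero => simp
  | succ m ih =>
    rw [prod_range_succ, ih, mul_add, mul_one, prod_range_add]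
    simp only [add_comm]

lemma aeval_single_mem_laurentSlope {l : O} {B : ℕ} (hB : 0 < B) {θ : Polynomial O}
    (hθ : θ ∈ slopeSubring l) {w : ι → ℤ} (hw : ∀ i, |w i| ≤ B) (r : O) :
    Polynomial.aeval (AddMonoidAlgebra.single w r) θ ∈ laurentSlope ι l hB := by
  rw [Polynomial.aeval_eq_sum_range]
  refine sum_mem fun n _ v => ?_
  rw [AddMonoidAlgebra.single_pow, AddMonoidAlgebra.coeff_smul, Finsupp.smul_apply,
    AddMonoidAlgebra.coeff_single, Finsupp.single_apply, smul_eq_mul]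
  split_ifs with hv
  · subst hv
    refine ((pow_dvd_pow l ?_).trans (hθ n)).mul_right _
    refine (latticeHeight_le_iff hB).2 fun i => ?_
    rw [Pi.smul_apply, nsmul_eq_mul, abs_mul, Nat.abs_cast, mul_comm]
    exact mul_le_mul_of_nonneg_right (hw i) (Nat.cast_nonneg n)
  · rw [mul_zero]
    exact dvd_zero _

namespace PadicModel

variable (D : PadicModel p O)

lemma laurentEval_single (x : ι → Omg p) (w : ι → ℤ) (r : O) :
    D.laurentEval x (.single w r) = r * D.teich (laurentMon x w) := by
  rw [laurentEval, AddMonoidAlgebra.coeff_single, Finsupp.sum_single_index (zero_mul _)]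

/-- The product over all terms `c j * x ^ μ j` and all `i < a` of `θ`, evaluated at the
Teichmüller lift of the `p ^ i`-th power of the term. -/
def splittingProd (θ : Polynomial O) (a : ℕ) (c : J → Omg p) (μ : J → ι → ℤ) :
    AddMonoidAlgebra O (ι → ℤ) :=
  ∏ j, ∏ i ∈ range a,
    Polynomial.aeval (AddMonoidAlgebra.single (p ^ i • μ j) (D.teich (c j) ^ p ^ i)) θ

lemma splittingProd_mem_laurentSlope {θ : Polynomial O} (hθ : θ ∈ slopeSubring D.unif) (a : ℕ)
    (c : J → Omg p) {μ : J → ι → ℤ} {B : ℕ} (hB : 0 < B) (hμ : ∀ j i, p ^ a * |μ j i| ≤ B) :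
    D.splittingProd θ a c μ ∈ laurentSlope ι D.unif hB := by
  refine prod_mem fun j _ => prod_mem fun i hi =>
    aeval_single_mem_laurentSlope hB hθ (fun k => ?_) _
  rw [Pi.smul_apply, nsmul_eq_mul, abs_mul, Nat.abs_cast, Nat.cast_pow]
  refine le_trans (mul_le_mul_of_nonneg_right ?_ (abs_nonneg _)) (hμ j k)
  exact_mod_cast Nat.pow_le_pow_right (Fact.out : p.Prime).pos (mem_range.1 hi).le

lemma laurentEval_splittingProd (θ : Polynomial O) {a : ℕ} {c : J → Omg p}
    (hc : ∀ j, c j ^ p ^ a = c j) (μ : J → ι → ℤ) {x : ι → Omg p} (hx : ∀ i, x i ≠ 0) (l : ℕ) :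
    D.laurentEval (fun i => x i ^ (p ^ a) ^ l) (D.splittingProd θ a c μ) =
      ∏ j, ∏ i ∈ range a, θ.eval (D.teich (c j * laurentMon x (μ j)) ^ p ^ (i + a * l)) := by
  obtain ⟨Φ, hΦ⟩ := D.exists_algHom_eq_laurentEval fun i => pow_ne_zero ((p ^ a) ^ l) (hx i)
  rw [← hΦ, splittingProd, map_prod]
  refine prod_congr rfl fun j _ => ?_
  rw [map_prod]
  refine prod_congr rfl fun i _ => ?_
  have hcl : c j ^ p ^ (i + a * l) = c j ^ p ^ i := by
    rw [add_comm, pow_add, pow_mul, pow_pow_mul_eq_self (hc j)]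
  rw [← Polynomial.aeval_algHom_apply, Polynomial.coe_aeval_eq_eval, hΦ, laurentEval_single,
    laurentMon_nsmul, laurentMon_pow, map_mul, mul_pow, ← map_pow D.teich (c j) (p ^ (i + a * l)),
    hcl, ← map_pow, ← map_pow D.teich (laurentMon x (μ j)), ← pow_mul, ← pow_mul, pow_add,
    mul_comm (p ^ i)]

lemma unif_pow_dvd_prod_eval_sub_traceChar {N d : ℕ} {θ : Polynomial O}
    (hθ : ∀ (d : ℕ) (z : Omg p), z ^ p ^ d = z → D.unif ^ N ∣
      (∏ i ∈ range d, θ.eval (D.teich z ^ p ^ i)) - D.emb (zetaInt p) ^ (traceZmod p d z).val)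
    {z : J → Omg p} (hz : ∀ j, z j ^ p ^ d = z j) :
    D.unif ^ N ∣ (∏ j, ∏ i ∈ range d, θ.eval (D.teich (z j) ^ p ^ i)) -
      D.emb (traceChar p d (∑ j, z j)) := by
  rw [traceChar_sum _ fun j _ => hz j, map_prod]
  refine dvd_prod_sub_prod fun j _ => ?_
  rw [traceChar, map_pow]
  exact hθ _ _ (hz j)

end PadicModel

theorem hasDworkExpansion_torusSum [IsDomain O] (D : PadicModel p O) {a : ℕ} (ha : 1 ≤ a)
    {c : J → Omg p} (hc : ∀ j, c j ^ p ^ a = c j) (μ : J → ι → ℤ) :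
    HasDworkExpansion D ι a fun m => torusSum p c μ (a * m) := by
  refine ⟨p ^ a * (∑ j, ∑ i, (μ j i).natAbs) + 1, Nat.succ_pos _, fun N => ?_⟩
  obtain ⟨θ, hθ, hsplit⟩ := D.exists_splitting N
  refine ⟨D.splittingProd θ a c μ, D.splittingProd_mem_laurentSlope hθ a c _ fun j i => ?_,
    fun m hm => ?_⟩
  · have hle : (μ j i).natAbs ≤ ∑ j, ∑ i, (μ j i).natAbs :=
      (single_le_sum (f := fun i => (μ j i).natAbs) (by simp) (mem_univ i)).trans
        (single_le_sum (f := fun j => ∑ i, (μ j i).natAbs) (by simp) (mem_univ j))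
    rw [Int.abs_eq_natAbs]
    exact_mod_cast (Nat.mul_le_mul_left _ hle).trans (Nat.le_succ _)
  · have hd : 1 ≤ a * m := Nat.mul_pos ha hm
    simp only [torusSum]
    rw [map_sum, ← sum_sub_distrib]
    refine dvd_sum fun x hx => ?_
    rw [mem_torus hd] at hx
    have hfix (j : J) : (c j * laurentMon x (μ j)) ^ p ^ (a * m) = c j * laurentMon x (μ j) := by
      rw [mul_pow, pow_pow_mul_eq_self (hc j), laurentMon_pow_fixed fun i => (hx i).2]
    have hprod : ∏ l ∈ range m, D.laurentEval (fun i => x i ^ (p ^ a) ^ l)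
        (D.splittingProd θ a c μ) = ∏ j, ∏ i ∈ range (a * m),
          θ.eval (D.teich (c j * laurentMon x (μ j)) ^ p ^ i) := by
      simp only [D.laurentEval_splittingProd θ hc μ fun i => (hx i).1]
      rw [prod_comm]
      exact prod_congr rfl fun j _ => prod_range_mul_eq a m fun i =>
        θ.eval (D.teich (c j * laurentMon x (μ j)) ^ p ^ i)
    rw [hprod, dvd_sub_comm]
    exact D.unif_pow_dvd_prod_eval_sub_traceChar hsplit hfix

end TorusSums

/-! ### Rationality of torus sums -/

lemma exists_eq_mul_isCoprime {R : Type*} [CommRing R] [IsDomain R] [IsBezout R] (x : R) {y : R}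
    (hy : y ≠ 0) : ∃ g x' y', g ≠ 0 ∧ IsCoprime x' y' ∧ x = g * x' ∧ y = g * y' := by
  obtain ⟨g, ⟨x', hx⟩, ⟨y', hy'⟩, u, v, huv⟩ : ∃ g, g ∣ x ∧ g ∣ y ∧ ∃ u v, u * x + v * y = g :=
    ⟨_, IsBezout.gcd_dvd_left x y, IsBezout.gcd_dvd_right x y, IsBezout.gcd_eq_sum x y⟩
  have hg : g ≠ 0 := left_ne_zero_of_mul (hy' ▸ hy)
  exact ⟨g, x', y', hg,
    ⟨u, v, mul_left_cancel₀ hg (by linear_combination huv - u * hx - v * hy')⟩, hx, hy'⟩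

section RationalZeta

open PowerSeries

variable {K : Type*} [Field K]

/-- The zeta series `exp (∑_{m ≥ 1} s m Xᵐ / m)` is a rational function `P / Q` with
`P 0 = Q 0 = 1`. -/
def HasRationalZeta (s : ℕ → K) : Prop :=
  ∃ (P Q : Polynomial K) (L : K⟦X⟧), P.coeff 0 = 1 ∧ Q.coeff 0 = 1 ∧ coeff 0 L = 1 ∧
    HasLogDeriv L s ∧ (Q : K⟦X⟧) * L = P

lemma coeff_zero_mul (f g : K⟦X⟧) : coeff 0 (f * g) = coeff 0 f * coeff 0 g := by
  simp only [coeff_zero_eq_constantCoeff_apply, map_mul]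

lemma exists_isCoprime_of_mul_eq {P Q : Polynomial K} {L : K⟦X⟧} (hQ : Q ≠ 0)
    (h0 : coeff 0 L = 1) (h : (Q : K⟦X⟧) * L = P) : ∃ P' Q' : Polynomial K,
      P'.coeff 0 = 1 ∧ Q'.coeff 0 = 1 ∧ IsCoprime P' Q' ∧ (Q' : K⟦X⟧) * L = P' := by
  obtain ⟨g, P₁, Q₁, hg0, hcop, hP₁, hQ₁⟩ := exists_eq_mul_isCoprime P hQ
  have hPQ : (Q₁ : K⟦X⟧) * L = P₁ := mul_left_cancel₀ (Polynomial.coe_eq_zero_iff.not.2 hg0) <| by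
    rw [← mul_assoc, ← Polynomial.coe_mul, ← Polynomial.coe_mul, ← hP₁, ← hQ₁, h]
  have hP₁0 : P₁.coeff 0 = Q₁.coeff 0 := by
    rw [← Polynomial.coeff_coe, ← hPQ, coeff_zero_mul, h0, mul_one, Polynomial.coeff_coe]
  have hQ₁0 : Q₁.coeff 0 ≠ 0 := fun hQ₁0 => Polynomial.not_isUnit_X <|
    hcop.isUnit_of_dvd' (Polynomial.X_dvd_iff.2 (hP₁0.trans hQ₁0)) (Polynomial.X_dvd_iff.2 hQ₁0)
  have hu : IsUnit (Polynomial.C (Q₁.coeff 0)⁻¹) := Polynomial.isUnit_C.2 (inv_ne_zero hQ₁0).isUnit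
  refine ⟨Polynomial.C (Q₁.coeff 0)⁻¹ * P₁, Polynomial.C (Q₁.coeff 0)⁻¹ * Q₁, ?_, ?_,
    (isCoprime_mul_unit_left hu P₁ Q₁).2 hcop, ?_⟩
  · rw [Polynomial.coeff_C_mul, hP₁0, inv_mul_cancel₀ hQ₁0]
  · rw [Polynomial.coeff_C_mul, inv_mul_cancel₀ hQ₁0]
  · rw [Polynomial.coe_mul, Polynomial.coe_mul, mul_assoc, hPQ]

namespace HasRationalZeta

lemma congr {s t : ℕ → K} (hs : HasRationalZeta s) (h : ∀ m, 1 ≤ m → s m = t m) :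
    HasRationalZeta t := by
  obtain ⟨P, Q, L, hP, hQ, hL0, hL, hPQ⟩ := hs
  exact ⟨P, Q, L, hP, hQ, hL0, hL.congr h, hPQ⟩

lemma zero : HasRationalZeta fun _ => (0 : K) :=
  ⟨1, 1, 1, by simp, by simp, by simp, .one, by simp⟩

lemma add {s t : ℕ → K} (hs : HasRationalZeta s) (ht : HasRationalZeta t) :
    HasRationalZeta fun m => s m + t m := by
  obtain ⟨P, Q, L, hP, hQ, hL0, hL, hPQ⟩ := hs
  obtain ⟨P', Q', L', hP', hQ', hL0', hL', hPQ'⟩ := ht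
  refine ⟨P * P', Q * Q', L * L', ?_, ?_, ?_, hL.mul hL', ?_⟩
  · rw [Polynomial.mul_coeff_zero, hP, hP', one_mul]
  · rw [Polynomial.mul_coeff_zero, hQ, hQ', one_mul]
  · rw [coeff_zero_mul, hL0, hL0', one_mul]
  · rw [Polynomial.coe_mul, Polynomial.coe_mul, ← hPQ, ← hPQ', mul_mul_mul_comm]

lemma sum {κ : Type*} (I : Finset κ) {s : κ → ℕ → K} (hs : ∀ i ∈ I, HasRationalZeta (s i)) :
    HasRationalZeta fun m => ∑ i ∈ I, s i m := by
  induction I using Finset.induction_on with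
  | empty => simpa using zero
  | insert a I ha ih =>
    simp only [Finset.sum_insert ha]
    exact (hs a (I.mem_insert_self a)).add (ih fun i hi => hs i (Finset.mem_insert_of_mem hi))

lemma neg {s : ℕ → K} (hs : HasRationalZeta s) : HasRationalZeta fun m => -s m := by
  obtain ⟨P, Q, L, hP, hQ, hL0, hL, hPQ⟩ := hs
  rw [coeff_zero_eq_constantCoeff_apply] at hL0
  have hinv : L * L⁻¹ = 1 := PowerSeries.mul_inv_cancel L (by rw [hL0]; exact one_ne_zero)
  refine ⟨Q, P, L⁻¹, hQ, hP, ?_, hL.of_mul_eq_one hinv, ?_⟩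
  · rw [coeff_zero_eq_constantCoeff_apply, constantCoeff_inv, hL0, inv_one]
  · rw [← hPQ, mul_assoc, hinv, mul_one]

end HasRationalZeta

end RationalZeta

section TorusZeta

open PowerSeries Finset

variable {p : ℕ} [Fact p.Prime] {ι J : Type*} [Fintype ι]

lemma norm_coeff_le_pow_of_hasLogDeriv {A : Type*} [CommRing A] (σ : A →+* ℂ) {L : A⟦X⟧}
    {S : ℕ → A} (h0 : coeff 0 L = 1) (hL : HasLogDeriv L S) {B : ℝ} (hB : 0 ≤ B)
    (hS : ∀ m, 1 ≤ m → ‖σ (S m)‖ ≤ B ^ m) (m : ℕ) : ‖σ (coeff m L)‖ ≤ B ^ m := by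
  induction m using Nat.strong_induction_on with
  | _ m ih =>
    rcases m with _ | m
    · simp [h0]
    have hrec := congrArg σ (HasLogDeriv.iff_coeff.1 hL m)
    simp only [map_mul, map_sum, map_add, map_natCast, map_one] at hrec
    have hnorm : ‖(m : ℂ) + 1‖ = (m : ℝ) + 1 := mod_cast Complex.norm_natCast (m + 1)
    have hterm (x : ℕ × ℕ) (hx : x ∈ antidiagonal m) :
        ‖σ (coeff x.1 L) * σ (S (x.2 + 1))‖ ≤ B ^ (m + 1) := by
      have hx' := mem_antidiagonal.1 hx
      rw [norm_mul, ← hx', add_assoc, pow_add]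
      exact mul_le_mul (ih x.1 (by omega)) (hS _ (by omega)) (norm_nonneg _) (by positivity)
    refine le_of_mul_le_mul_right ?_ (by positivity : (0 : ℝ) < m + 1)
    rw [← hnorm, ← norm_mul, hrec, hnorm]
    refine (norm_sum_le _ _).trans ((sum_le_card_nsmul _ _ _ hterm).trans_eq ?_)
    rw [Nat.card_antidiagonal, nsmul_eq_mul, Nat.cast_succ, mul_comm]

lemma norm_traceChar (σ : CycInt p →+* ℂ) (d : ℕ) (z : Omg p) : ‖σ (traceChar p d z)‖ = 1 := by
  refine Complex.norm_eq_one_of_pow_eq_one (n := p) ?_ (Fact.out : p.Prime).ne_zero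
  rw [← map_pow, traceChar, pow_right_comm, (isPrimitiveRoot_zetaInt p).pow_eq_one, one_pow,
    map_one]

lemma pow_eq_self_of_sum_pow_pow_eq_one {a E : ℕ} {b : Omg p}
    (hb : ∑ i ∈ range E, b ^ (p ^ a) ^ i = 1) : b ^ p ^ (a * E) = b := by
  have hshift : ∑ i ∈ range E, b ^ (p ^ a) ^ (i + 1) = 1 := by
    simp only [pow_succ, pow_mul b, ← sum_pow_char_pow, hb, one_pow]
  have hsucc := sum_range_succ (fun i => b ^ (p ^ a) ^ i) E
  rw [sum_range_succ', hb, hshift, pow_zero, pow_one] at hsucc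
  rw [pow_mul]
  exact (add_left_cancel hsucc).symm

/-- The `p ^ a`-power Frobenius on the torus points of the field with `p ^ d` elements. -/
def torusFrobenius (hd : 1 ≤ d) (a : ℕ) (x : torus ι p d) : torus ι p d :=
  ⟨fun i => x.1 i ^ p ^ a, (mem_torus hd).2 fun i => by
    obtain ⟨hne, hfix⟩ := (mem_torus hd).1 x.2 i
    exact ⟨pow_ne_zero _ hne, by rw [pow_right_comm, hfix]⟩⟩

lemma iterate_torusFrobenius {d : ℕ} (hd : 1 ≤ d) (a l : ℕ) (x : torus ι p d) :
    ((torusFrobenius hd a)^[l] x).1 = fun i => x.1 i ^ (p ^ a) ^ l := by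
  induction l generalizing x with
  | zero => simp
  | succ l ih =>
    funext i
    simp only [Function.iterate_succ_apply, ih, torusFrobenius, ← pow_mul (x.1 i), ← pow_succ']

lemma iterate_torusFrobenius_eq_self {d : ℕ} (hd : 1 ≤ d) {a m : ℕ} (ham : 1 ≤ a * m)
    (x : torus ι p d) : (torusFrobenius hd a)^[m] x = x ↔ x.1 ∈ torus ι p (a * m) := by
  have hx := (mem_torus hd).1 x.2
  rw [Subtype.ext_iff, iterate_torusFrobenius, mem_torus ham, funext_iff, pow_mul]
  exact forall_congr' fun i => ⟨fun h => ⟨(hx i).1, h⟩, fun h => h.2⟩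

lemma torus_subset_torus {d d' : ℕ} (hd : 1 ≤ d) (hd' : 1 ≤ d') (h : d ∣ d') :
    torus ι p d ⊆ torus ι p d' := by
  obtain ⟨e, rfl⟩ := h
  intro x hx
  exact (mem_torus hd').2 fun i =>
    ⟨((mem_torus hd).1 hx i).1, pow_pow_mul_eq_self ((mem_torus hd).1 hx i).2 e⟩

variable [Fintype J]

lemma laurentValue_pow {c : J → Omg p} {a : ℕ} (hc : ∀ j, c j ^ p ^ a = c j) (μ : J → ι → ℤ)
    (x : ι → Omg p) (l : ℕ) :
    laurentValue c μ (fun i => x i ^ (p ^ a) ^ l) = laurentValue c μ x ^ (p ^ a) ^ l := by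
  rw [laurentValue, laurentValue, ← pow_mul, sum_pow_char_pow]
  exact sum_congr rfl fun j _ => by
    rw [laurentMon_pow, mul_pow, pow_pow_mul_eq_self (hc j)]

lemma laurentValue_pow_eq_self {c : J → Omg p} {a : ℕ} (hc : ∀ j, c j ^ p ^ a = c j)
    (μ : J → ι → ℤ) {x : ι → Omg p} {d : ℕ} (hx : ∀ i, x i ^ (p ^ a) ^ d = x i) :
    laurentValue c μ x ^ (p ^ a) ^ d = laurentValue c μ x := by
  rw [← laurentValue_pow hc, funext hx]

/-- Up to any given degree the torus sums are sums over fixed points of a permutation of one finite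
set, namely of Frobenius on the points over a field containing all the relevant fields; the trace
from each of them is made visible there by an element `b` of trace one. -/
lemma exists_hasLogDeriv_torusSum {a : ℕ} (ha : 1 ≤ a) {c : J → Omg p}
    (hc : ∀ j, c j ^ p ^ a = c j) (μ : J → ι → ℤ) : ∃ L : (CycInt p)⟦X⟧,
      coeff 0 L = 1 ∧ HasLogDeriv L fun m => torusSum p c μ (a * m) := by
  refine exists_hasLogDeriv_of_forall_le fun M => ?_
  set E := M.factorial
  have hE : 1 ≤ E := M.factorial_pos
  have hd : 1 ≤ a * E := Nat.mul_pos ha hE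
  obtain ⟨b, hb⟩ := exists_sum_pow_pow_eq_one (k := Omg p) (two_le_prime_pow (p := p) ha) hE
  set σ : torus ι p (a * E) → torus ι p (a * E) := torusFrobenius hd a
  obtain ⟨L, hL0, hL⟩ :=
    exists_hasLogDeriv_sum_fixed σ fun x => traceChar p (a * E) (b * laurentValue c μ x.1)
  refine ⟨L, _, hL0, hL, fun m hm hmM => ?_⟩
  have hdm : 1 ≤ a * m := Nat.mul_pos ha hm
  have hsub : torus ι p (a * m) ⊆ torus ι p (a * E) :=
    torus_subset_torus hdm hd (Nat.mul_dvd_mul_left a (Nat.dvd_factorial hm hmM))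
  have hterm (x : torus ι p (a * E)) : (if σ^[m] x = x then
      ∏ l ∈ range m, traceChar p (a * E) (b * laurentValue c μ (σ^[l] x).1) else 0) =
      if x.1 ∈ torus ι p (a * m) then traceChar p (a * m) (laurentValue c μ x.1) else 0 := by
    refine if_ctx_congr (iterate_torusFrobenius_eq_self hd hdm x) (fun h => ?_) fun _ => rfl
    simp only [σ, iterate_torusFrobenius, laurentValue_pow hc μ]
    refine prod_traceChar_mul hb (laurentValue_pow_eq_self hc μ fun i => ?_) fun l => ?_
    · rw [← pow_mul]
      exact ((mem_torus hdm).1 h i).2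
    · rw [mul_pow, pow_eq_self_of_sum_pow_pow_eq_one hb, pow_right_comm, pow_mul p,
        laurentValue_pow_eq_self hc μ fun i => by
          rw [← pow_mul]; exact ((mem_torus hd).1 x.2 i).2]
  refine (sum_congr rfl fun x _ => by convert hterm x).trans ?_
  rw [sum_coe_sort (torus ι p (a * E)) fun y =>
    if y ∈ torus ι p (a * m) then traceChar p (a * m) (laurentValue c μ y) else 0,
    ← sum_filter, filter_mem_eq_inter, inter_eq_right.2 hsub, torusSum]

lemma norm_torusSum_le (σ : CycInt p →+* ℂ) (c : J → Omg p) (μ : J → ι → ℤ) {a m : ℕ}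
    (ha : 1 ≤ a) (hm : 1 ≤ m) :
    ‖σ (torusSum p c μ (a * m))‖ ≤ (((p ^ a) ^ Fintype.card ι : ℕ) : ℝ) ^ m := by
  rw [torusSum, map_sum]
  refine (norm_sum_le _ _).trans ?_
  simp only [norm_traceChar, sum_const, nsmul_one]
  rw [torus, Fintype.card_piFinset, prod_const, card_fieldUnits (Nat.mul_pos ha hm), card_univ]
  have hle : (p ^ (a * m) - 1) ^ Fintype.card ι ≤ ((p ^ a) ^ Fintype.card ι) ^ m := by
    rw [pow_right_comm, ← pow_mul p]
    exact Nat.pow_le_pow_left (Nat.sub_le _ _) _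
  exact_mod_cast hle

theorem hasRationalZeta_torusSum {a : ℕ} (ha : 1 ≤ a) {c : J → Omg p}
    (hc : ∀ j, c j ^ p ^ a = c j) (μ : J → ι → ℤ) : HasRationalZeta fun m =>
      algebraMap (CycInt p) (CyclotomicField p ℚ) (torusSum p c μ (a * m)) := by
  obtain ⟨L, h0, hL⟩ := exists_hasLogDeriv_torusSum ha hc μ
  have harch (σ : CyclotomicField p ℚ →+* ℂ) := norm_coeff_le_pow_of_hasLogDeriv
    (σ.comp (algebraMap (CycInt p) _)) h0 hL (B := ((p ^ a) ^ Fintype.card ι : ℕ))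
    (Nat.cast_nonneg _) fun m hm => norm_torusSum_le _ c μ ha hm
  obtain ⟨P, Q, hQ, hPQ⟩ := exists_polynomial_of_approxMeromorphic (wittModel p).emb
    (two_le_abs_norm_oneSubZeta p) (fun k x => (wittModel p).oneSubZeta_pow_dvd_of_emb) L
    (Nat.one_le_iff_ne_zero.2 (pow_ne_zero _ (pow_ne_zero _ (Fact.out : p.Prime).ne_zero)))
    harch ((hasDworkExpansion_torusSum _ ha hc μ).approxMeromorphic ha h0 hL)
  have h0' : coeff 0 (PowerSeries.map (algebraMap (CycInt p) (CyclotomicField p ℚ)) L) = 1 := by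
    rw [coeff_map, h0, map_one]
  obtain ⟨P', Q', hP', hQ', -, h⟩ := exists_isCoprime_of_mul_eq hQ h0' hPQ
  exact ⟨P', Q', _, hP', hQ', h0', hL.map _, h⟩

end TorusZeta

/-! ### Divisibility of sums over a torus times an affine space -/

section WeightBound

open Finset

variable {J σ : Type*} [Fintype J]

/-- Every nonnegative real combination of the vectors `γ j` with positive integral coordinates has
total mass at least `w`. -/
def IsWeightBound (γ : J → σ → ℕ) (w : ℝ) : Prop :=
  ∀ r : J → ℝ, (∀ j, 0 ≤ r j) → ∀ u : σ → ℕ, (∀ z, 1 ≤ u z) →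
    (∀ z, ∑ j, r j * γ j z = u z) → w ≤ ∑ j, r j

variable [Fintype σ] {γ : J → σ → ℕ} {w : ℝ}

-- Every vanishing coordinate is made positive by adding one vector, at the cost of mass one.
lemma IsWeightBound.le_sum_add_card (hw : IsWeightBound γ w) (hpos : ∀ z, ∃ j, 1 ≤ γ j z)
    {r : J → ℝ} (hr : ∀ j, 0 ≤ r j) {u : σ → ℕ} (hu : ∀ z, ∑ j, r j * γ j z = u z) :
    w ≤ ∑ j, r j + #{z | u z = 0} := by
  choose g hg using hpos
  set Z : Finset σ := {z | u z = 0} with hZ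
  have hmass (h : J → ℝ) : ∑ j, (r j + ∑ z ∈ Z, if g z = j then (1 : ℝ) else 0) * h j =
      ∑ j, r j * h j + ∑ z ∈ Z, h (g z) := by
    simp only [add_mul, sum_add_distrib, sum_mul, ite_mul, one_mul, zero_mul]
    rw [sum_comm]
    simp
  have h := hw (fun j => r j + ∑ z ∈ Z, if g z = j then (1 : ℝ) else 0)
    (fun j => add_nonneg (hr j) (sum_nonneg fun _ _ => by positivity))
    (fun z => u z + ∑ z' ∈ Z, γ (g z') z) (fun z => ?_) fun z => ?_
  · simpa using h.trans_eq (by simpa using hmass fun _ => 1)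
  · by_cases hz : u z = 0
    · have : γ (g z) z ≤ ∑ z' ∈ Z, γ (g z') z := single_le_sum (f := fun z' => γ (g z') z)
        (fun _ _ => Nat.zero_le _) (by simp [hZ, hz])
      have := hg z
      omega
    · omega
  · rw [hmass fun j => (γ j z : ℝ), hu]
    push_cast
    rfl

variable {q d : ℕ}

lemma pow_rotate_modEq (hq : 1 ≤ q) (i l : Fin d) :
    q ^ ((i + l : Fin d) : ℕ) ≡ q ^ (l : ℕ) * q ^ (i : ℕ) [MOD q ^ d - 1] := by
  have hone : q ^ d ≡ 1 [MOD q ^ d - 1] :=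
    ((Nat.modEq_iff_dvd' (Nat.one_le_pow d q hq)).2 dvd_rfl).symm
  rw [Fin.val_add, ← pow_add, add_comm (l : ℕ), ← Nat.mod_add_div ((i : ℕ) + l) d, pow_add, pow_mul]
  simpa using ((hone.pow (((i : ℕ) + l) / d)).mul_left (q ^ (((i : ℕ) + l) % d))).symm

lemma dvd_sum_mul_pow_rotate {κ : Type*} [Fintype κ] (hq : 1 ≤ q) {e : κ → ℕ} {i : κ → Fin d}
    {c : κ → ℕ} (h : q ^ d - 1 ∣ ∑ k, e k * q ^ (i k : ℕ) * c k) (l : Fin d) :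
    q ^ d - 1 ∣ ∑ k, e k * q ^ ((i k + l : Fin d) : ℕ) * c k := by
  have hmod : ∑ k, e k * q ^ ((i k + l : Fin d) : ℕ) * c k ≡
      q ^ (l : ℕ) * ∑ k, e k * q ^ (i k : ℕ) * c k [MOD q ^ d - 1] := by
    rw [mul_sum]
    refine Nat.ModEq.sum fun k _ => ?_
    convert ((pow_rotate_modEq hq (i k) l).mul_left (e k)).mul_right (c k) using 1
    ring
  exact (hmod.dvd_iff dvd_rfl).2 (h.mul_left _)

variable [NeZero d]

lemma sum_pow_rotate (q : ℝ) (i : Fin d) :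
    (∑ l : Fin d, q ^ ((i + l : Fin d) : ℕ)) * (q - 1) = q ^ d - 1 := by
  rw [show ∑ l : Fin d, q ^ ((i + l : Fin d) : ℕ) = ∑ l : Fin d, q ^ (l : ℕ) from
      Fintype.sum_equiv (Equiv.addLeft i) _ _ fun _ => rfl,
    Fin.sum_univ_eq_sum_range (q ^ ·), geom_sum_mul]

lemma IsWeightBound.le_rotate (hw : IsWeightBound γ w) (hpos : ∀ z, ∃ j, 1 ≤ γ j z) (hq : 2 ≤ q)
    {e : J × Fin d → ℕ} (hdiv : ∀ z, q ^ d - 1 ∣ ∑ k, e k * q ^ (k.2 : ℕ) * γ k.1 z)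
    (l : Fin d) : w ≤ (∑ k, e k * (q : ℝ) ^ ((k.2 + l : Fin d) : ℕ)) / ((q : ℝ) ^ d - 1) +
      #{z | ∑ k, e k * q ^ (k.2 : ℕ) * γ k.1 z = 0} := by
  have hqd : 1 < q ^ d := Nat.one_lt_pow (NeZero.ne d) hq
  have hQ : (0 : ℝ) < (q : ℝ) ^ d - 1 := sub_pos.2 (mod_cast hqd)
  choose v hv using fun z => dvd_sum_mul_pow_rotate (by omega) (hdiv z) l
  have hv0 (z : σ) : v z = 0 ↔ ∑ k, e k * q ^ (k.2 : ℕ) * γ k.1 z = 0 := by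
    have hne : q ^ d - 1 ≠ 0 := by omega
    rw [← mul_right_inj' hne, mul_zero, ← hv]
    simp [show q ≠ 0 by omega]
  simp only [← hv0]
  convert hw.le_sum_add_card hpos (r := fun j =>
    (∑ i : Fin d, e (j, i) * (q : ℝ) ^ ((i + l : Fin d) : ℕ)) / ((q : ℝ) ^ d - 1))
    (fun j => by positivity) (u := v) fun z => ?_ using 2
  · rw [← sum_div, Fintype.sum_prod_type]
  · have hcast := congrArg (Nat.cast : ℕ → ℝ) (hv z)
    push_cast [Nat.cast_sub hqd.le, Fintype.sum_prod_type] at hcast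
    rw [← mul_right_inj' hQ.ne', ← hcast, mul_sum]
    refine sum_congr rfl fun j _ => ?_
    rw [← mul_assoc, mul_div_cancel₀ _ hQ.ne', sum_mul]

/-- Averaging over the `d` cyclic rotations of the base-`q` digits turns the bound for a single
solution of the congruences into a bound for the digit sum. -/
theorem IsWeightBound.le_sum_digits (hw : IsWeightBound γ w) (hpos : ∀ z, ∃ j, 1 ≤ γ j z)
    (hq : 2 ≤ q) {e : J × Fin d → ℕ}
    (hdiv : ∀ z, q ^ d - 1 ∣ ∑ k, e k * q ^ (k.2 : ℕ) * γ k.1 z) :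
    d * ((q : ℝ) - 1) * w ≤ ∑ k, (e k : ℝ) +
      ((q : ℝ) - 1) * d * #{z | ∑ k, e k * q ^ (k.2 : ℕ) * γ k.1 z = 0} := by
  have hQ : (0 : ℝ) < (q : ℝ) ^ d - 1 :=
    sub_pos.2 (mod_cast Nat.one_lt_pow (NeZero.ne d) hq)
  have hq1 : (0 : ℝ) < (q : ℝ) - 1 := sub_pos.2 (mod_cast hq)
  have hsum := sum_le_sum fun l (_ : l ∈ univ) => hw.le_rotate hpos hq hdiv l
  simp only [sum_add_distrib, sum_const, card_univ, Fintype.card_fin, nsmul_eq_mul] at hsum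
  have hrot : (∑ l : Fin d, (∑ k, e k * (q : ℝ) ^ ((k.2 + l : Fin d) : ℕ)) / ((q : ℝ) ^ d - 1)) *
      ((q : ℝ) - 1) = ∑ k, (e k : ℝ) := by
    rw [← sum_div, div_mul_eq_mul_div, div_eq_iff hQ.ne', sum_comm, sum_mul, sum_mul]
    exact sum_congr rfl fun k _ => by rw [← mul_sum, mul_assoc, sum_pow_rotate]
  calc d * ((q : ℝ) - 1) * w = d * w * ((q : ℝ) - 1) := by ring
    _ ≤ _ := mul_le_mul_of_nonneg_right hsum hq1.le
    _ = _ := by rw [add_mul, hrot]; ring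

end WeightBound

section FamilySum

open Finset

variable {p : ℕ} [Fact p.Prime] {ι J σ : Type*} [Fintype σ]

/-- The points of affine `σ`-space over the field with `p ^ d` elements. -/
def affinePoints (σ : Type*) [Fintype σ] (p : ℕ) [Fact p.Prime] (d : ℕ) : Finset (σ → Omg p) :=
  Fintype.piFinset fun _ => insert 0 (fieldUnits p d)

lemma mem_affinePoints {d : ℕ} (hd : 1 ≤ d) {t : σ → Omg p} :
    t ∈ affinePoints σ p d ↔ ∀ z, t z ^ p ^ d = t z := by
  simp only [affinePoints, Fintype.mem_piFinset, mem_insert, mem_fieldUnits hd]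
  refine forall_congr' fun z => ⟨?_, fun h => or_iff_not_imp_left.2 fun h0 => ⟨h0, h⟩⟩
  rintro (h | h)
  · rw [h, zero_pow (by have := two_le_prime_pow (p := p) hd; omega)]
  · exact h.2

/-- The exponential sum of `∑ j, c j * x ^ μ j * t ^ γ j` over the points `x` of the torus and `t`
of affine space over the field with `p ^ d` elements. -/
def familySum (p : ℕ) [Fact p.Prime] [Fintype ι] [Fintype J] (c : J → Omg p) (μ : J → ι → ℤ)
    (γ : J → σ → ℕ) (d : ℕ) : CycInt p :=
  ∑ x ∈ torus ι p d, ∑ t ∈ affinePoints σ p d,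
    traceChar p d (∑ j, c j * laurentMon x (μ j) * ∏ z, t z ^ γ j z)

namespace PadicModel

variable {O : Type*} [CommRing O] (D : PadicModel p O)

lemma prod_eval_teich_mul_prod_pow [Fintype J] (θ : Polynomial O) (d : ℕ) (y : J → Omg p)
    (γ : J → σ → ℕ) (t : σ → Omg p) :
    ∏ j, ∏ i ∈ range d, θ.eval (D.teich (y j * ∏ z, t z ^ γ j z) ^ p ^ i) =
      ∑ e ∈ Fintype.piFinset fun _ : J × Fin d => range (θ.natDegree + 1),
        ((∏ k, θ.coeff (e k)) * ∏ k, D.teich (y k.1) ^ (p ^ (k.2 : ℕ) * e k)) *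
          D.teich (∏ z, t z ^ ∑ k, e k * p ^ (k.2 : ℕ) * γ k.1 z) := by
  simp only [← Fin.prod_univ_eq_prod_range fun i =>
    θ.eval (D.teich (y _ * ∏ z, t z ^ γ _ z) ^ p ^ i)]
  rw [← Fintype.prod_prod_type' fun j (i : Fin d) =>
    θ.eval (D.teich (y j * ∏ z, t z ^ γ j z) ^ p ^ (i : ℕ))]
  simp only [Polynomial.eval_eq_sum_range]
  rw [prod_univ_sum]
  refine sum_congr rfl fun e _ => ?_
  have hmon : ∏ z, t z ^ ∑ k, e k * p ^ (k.2 : ℕ) * γ k.1 z =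
      ∏ k : J × Fin d, (∏ z, t z ^ γ k.1 z) ^ (p ^ (k.2 : ℕ) * e k) := by
    simp only [← prod_pow_eq_pow_sum, ← prod_pow]
    rw [prod_comm]
    exact prod_congr rfl fun k _ => prod_congr rfl fun z _ => by rw [← pow_mul]; congr 1; ring
  rw [hmon, map_prod, ← prod_mul_distrib, ← prod_mul_distrib]
  exact prod_congr rfl fun k _ => by rw [map_mul, map_pow, ← pow_mul, mul_pow, mul_assoc]

variable [IsDomain O]

lemma sum_insert_zero_teich_pow {d : ℕ} (hd : 1 ≤ d) (u : ℕ) :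
    ∑ t ∈ insert 0 (fieldUnits p d), D.teich (t ^ u) =
      if u = 0 then (p : O) ^ d else if p ^ d - 1 ∣ u then ((p ^ d - 1 : ℕ) : O) else 0 := by
  have h0 : (0 : Omg p) ∉ fieldUnits p d := fun h => ((mem_fieldUnits hd).1 h).1 rfl
  have h2 := two_le_prime_pow (p := p) hd
  have hunits := D.sum_teich_zpow hd (u : ℤ)
  simp only [zpow_natCast, Int.natCast_dvd_natCast] at hunits
  rw [sum_insert h0, hunits]
  by_cases hu : u = 0
  · rw [hu, if_pos rfl, if_pos (dvd_zero _), pow_zero, map_one, Nat.cast_sub (by omega)]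
    push_cast
    ring
  · rw [if_neg hu, zero_pow hu, D.teich_zero, zero_add]

lemma sum_affinePoints_teich {d : ℕ} (hd : 1 ≤ d) (u : σ → ℕ) :
    ∑ t ∈ affinePoints σ p d, D.teich (∏ z, t z ^ u z) =
      ∏ z, if u z = 0 then (p : O) ^ d else
        if p ^ d - 1 ∣ u z then ((p ^ d - 1 : ℕ) : O) else 0 := by
  simp only [map_prod, ← D.sum_insert_zero_teich_pow hd, prod_univ_sum, affinePoints]

lemma sum_affinePoints_teich_eq_zero {d : ℕ} (hd : 1 ≤ d) {u : σ → ℕ} {z : σ}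
    (hz : ¬ p ^ d - 1 ∣ u z) : ∑ t ∈ affinePoints σ p d, D.teich (∏ z, t z ^ u z) = 0 := by
  rw [D.sum_affinePoints_teich hd]
  refine prod_eq_zero (mem_univ z) ?_
  rw [if_neg fun h0 => hz (by simp [h0]), if_neg hz]

lemma unif_pow_dvd_sum_affinePoints_teich {d : ℕ} (hd : 1 ≤ d) (u : σ → ℕ) :
    D.unif ^ ((p - 1) * d * #{z | u z = 0}) ∣
      ∑ t ∈ affinePoints σ p d, D.teich (∏ z, t z ^ u z) := by
  rw [D.sum_affinePoints_teich hd, pow_mul, ← prod_const]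
  refine (prod_dvd_prod_of_dvd _ _ fun z hz => ?_).trans
    (prod_dvd_prod_of_subset _ _ _ (subset_univ _))
  rw [if_pos (mem_filter.1 hz).2, pow_mul]
  exact pow_dvd_pow_of_dvd D.associated_unif_pow.dvd d

variable [Fintype J]

lemma unif_pow_dvd_sum_affinePoints_prod_eval {θ : Polynomial O}
    (hθ : θ ∈ slopeSubring D.unif) {d : ℕ} (hd : 1 ≤ d) {γ : J → σ → ℕ} {w : ℝ}
    (hw : IsWeightBound γ w) (hpos : ∀ z, ∃ j, 1 ≤ γ j z) {K : ℕ}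
    (hK : (K : ℝ) < d * ((p : ℝ) - 1) * w + 1) (y : J → Omg p) :
    D.unif ^ K ∣ ∑ t ∈ affinePoints σ p d,
      ∏ j, ∏ i ∈ range d, θ.eval (D.teich (y j * ∏ z, t z ^ γ j z) ^ p ^ i) := by
  have : NeZero d := ⟨by omega⟩
  have hp := (Fact.out : p.Prime).two_le
  simp only [prod_eval_teich_mul_prod_pow]
  rw [sum_comm]
  refine dvd_sum fun e _ => ?_
  rw [← mul_sum]
  by_cases hdiv : ∀ z, p ^ d - 1 ∣ ∑ k, e k * p ^ (k.2 : ℕ) * γ k.1 z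
  · have hcoeff : D.unif ^ ∑ k, e k ∣ ∏ k, θ.coeff (e k) := by
      rw [← prod_pow_eq_pow_sum]
      exact prod_dvd_prod_of_dvd _ _ fun k _ => hθ _
    refine .trans ?_ (mul_dvd_mul (hcoeff.mul_right _)
      (D.unif_pow_dvd_sum_affinePoints_teich hd _))
    rw [← pow_add]
    have hdigits := hw.le_sum_digits hpos hp hdiv
    generalize #{z | ∑ k, e k * p ^ (k.2 : ℕ) * γ k.1 z = 0} = N at hdigits ⊢
    have hlt : (K : ℝ) < (∑ k, e k + (p - 1) * d * N + 1 : ℕ) := by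
      push_cast [Nat.cast_sub (show 1 ≤ p by omega)]
      linarith
    exact pow_dvd_pow _ (Nat.lt_succ_iff.1 (by exact_mod_cast hlt))
  · push Not at hdiv
    obtain ⟨z, hz⟩ := hdiv
    rw [D.sum_affinePoints_teich_eq_zero (u := fun z => ∑ k, e k * p ^ (k.2 : ℕ) * γ k.1 z) hd hz,
      mul_zero]
    exact dvd_zero _

end PadicModel

variable [Fintype ι] [Fintype J]

theorem oneSubZeta_pow_dvd_familySum {d : ℕ} (hd : 1 ≤ d) {c : J → Omg p}
    (hc : ∀ j, c j ^ p ^ d = c j) (μ : J → ι → ℤ) {γ : J → σ → ℕ} {w : ℝ}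
    (hw : IsWeightBound γ w) (hpos : ∀ z, ∃ j, 1 ≤ γ j z) {K : ℕ}
    (hK : (K : ℝ) < d * ((p : ℝ) - 1) * w + 1) :
    oneSubZeta p ^ K ∣ familySum p c μ γ d := by
  set D := wittModel p
  refine D.oneSubZeta_pow_dvd_of_emb ?_
  obtain ⟨θ, hθ, hsplit⟩ := D.exists_splitting K
  refine (dvd_iff_dvd_of_dvd_sub ?_).1 (dvd_sum fun x (_ : x ∈ torus ι p d) =>
    D.unif_pow_dvd_sum_affinePoints_prod_eval hθ hd hw hpos hK fun j => c j * laurentMon x (μ j))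
  simp only [familySum, map_sum, ← sum_sub_distrib]
  refine dvd_sum fun x hx => dvd_sum fun t ht =>
    D.unif_pow_dvd_prod_eval_sub_traceChar hsplit fun j => ?_
  rw [mem_torus hd] at hx
  rw [mem_affinePoints hd] at ht
  rw [mul_pow, mul_pow, hc, laurentMon_pow_fixed fun i => (hx i).2, ← prod_pow]
  exact congrArg _ (prod_congr rfl fun z _ => by rw [pow_right_comm, ht])

end FamilySum

/-! ### Stratification of affine space into tori -/

section Stratification

open Finset

/-- The extension by zero to `σ` of a function on the complement of `Z`. -/
def extendByZero {σ R : Type*} [Zero R] (Z : Finset σ) (y : {z // z ∉ Z} → R) (z : σ) : R :=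
  if h : z ∉ Z then y ⟨z, h⟩ else 0

section ExtendByZero

variable {σ R : Type*} {Z : Finset σ} {z : σ}

lemma extendByZero_of_notMem [Zero R] (y : {z // z ∉ Z} → R) (hz : z ∉ Z) :
    extendByZero Z y z = y ⟨z, hz⟩ := dif_pos hz

lemma extendByZero_of_mem [Zero R] (y : {z // z ∉ Z} → R) (hz : z ∈ Z) :
    extendByZero Z y z = 0 := dif_neg (not_not.2 hz)

variable [Fintype σ]

theorem sum_piFinset_insert_zero [Zero R] {M : Type*} [AddCommMonoid M] {U : Finset R}
    (hU : 0 ∉ U) (f : (σ → R) → M) :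
    ∑ t ∈ Fintype.piFinset fun _ : σ => insert 0 U, f t =
      ∑ Z : Finset σ, ∑ y ∈ Fintype.piFinset fun _ : {z // z ∉ Z} => U, f (extendByZero Z y) := by
  rw [← sum_fiberwise _ fun t : σ → R => ({z | t z = 0} : Finset σ)]
  refine sum_congr rfl fun Z _ => (sum_bij' (fun y _ => extendByZero Z y)
    (fun t _ z => t z.1) ?_ ?_ ?_ ?_ fun _ _ => rfl).symm
  · intro y hy
    rw [Fintype.mem_piFinset] at hy
    simp only [mem_filter, Fintype.mem_piFinset, Finset.ext_iff, mem_univ, true_and, mem_insert]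
    refine ⟨fun z => ?_, fun z => ?_⟩ <;> by_cases hz : z ∈ Z
    · exact .inl (extendByZero_of_mem y hz)
    · exact .inr (extendByZero_of_notMem y hz ▸ hy _)
    · simp [extendByZero_of_mem y hz, hz]
    · simp [extendByZero_of_notMem y hz, hz, ne_of_mem_of_not_mem (hy ⟨z, hz⟩) hU]
  · intro t ht
    simp only [mem_filter, Fintype.mem_piFinset, Finset.ext_iff, mem_univ, true_and,
      mem_insert] at ht
    exact Fintype.mem_piFinset.2 fun z => (ht.1 z).resolve_left fun h => z.2 ((ht.2 z).1 h)
  · exact fun y _ => funext fun z => extendByZero_of_notMem y z.2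
  · intro t ht
    simp only [mem_filter, Finset.ext_iff, mem_univ, true_and] at ht
    funext z
    by_cases hz : z ∈ Z
    · rw [extendByZero_of_mem _ hz, (ht.2 z).2 hz]
    · rw [extendByZero_of_notMem _ hz]

lemma prod_extendByZero_pow [CommMonoidWithZero R] (y : {z // z ∉ Z} → R) (u : σ → ℕ) :
    ∏ z, extendByZero Z y z ^ u z =
      if ∀ z ∈ Z, u z = 0 then ∏ z : {z // z ∉ Z}, y z ^ u z else 0 := by
  split_ifs with h
  · rw [← prod_subset (subset_univ Zᶜ) fun z _ hz => by
      rw [h z (by simpa using hz), pow_zero], prod_subtype Zᶜ fun _ => mem_compl]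
    exact Fintype.prod_congr _ _ fun z => by rw [extendByZero_of_notMem y z.2]
  · push Not at h
    obtain ⟨z, hz, hu⟩ := h
    exact prod_eq_zero (mem_univ z) (by rw [extendByZero_of_mem y hz, zero_pow hu])

end ExtendByZero

variable {p : ℕ} [Fact p.Prime] {ι κ J σ : Type*} [Fintype ι] [Fintype κ] [Fintype J] [Fintype σ]

lemma sum_torus_sum {M : Type*} [AddCommMonoid M] (d : ℕ) (f : (ι ⊕ κ → Omg p) → M) :
    ∑ x ∈ torus (ι ⊕ κ) p d, f x = ∑ x ∈ torus ι p d, ∑ y ∈ torus κ p d, f (Sum.elim x y) := by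
  rw [← sum_product']
  refine sum_equiv (Equiv.sumArrowEquivProdArrow ι κ (Omg p)) (fun x => ?_) fun x _ => ?_
  · simp only [torus, mem_product, Fintype.mem_piFinset, Sum.forall]
    rfl
  · exact congrArg f (Sum.elim_comp_inl_inr x).symm

lemma laurentMon_sumElim (x : ι → Omg p) (y : κ → Omg p) (v : ι → ℤ) (w : κ → ℤ) :
    laurentMon (Sum.elim x y) (Sum.elim v w) = laurentMon x v * laurentMon y w := by
  simp [laurentMon, Fintype.prod_sum_type]

theorem familySum_eq_sum_torusSum {d : ℕ} (hd : 1 ≤ d) (c : J → Omg p) (μ : J → ι → ℤ)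
    (γ : J → σ → ℕ) : familySum p c μ γ d = ∑ Z : Finset σ,
      torusSum p (fun j => if ∀ z ∈ Z, γ j z = 0 then c j else 0)
        (fun j => Sum.elim (μ j) fun z : {z // z ∉ Z} => (γ j z : ℤ)) d := by
  have h0 : (0 : Omg p) ∉ fieldUnits p d := fun h => ((mem_fieldUnits hd).1 h).1 rfl
  simp only [familySum, torusSum, affinePoints, sum_piFinset_insert_zero h0, sum_torus_sum]
  rw [sum_comm]
  refine sum_congr rfl fun Z _ => sum_congr rfl fun x _ => sum_congr
    (by ext; simp only [torus, Fintype.mem_piFinset]) fun y _ =>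
      congrArg _ (sum_congr rfl fun j _ => ?_)
  rw [prod_extendByZero_pow, laurentMon_sumElim]
  by_cases hj : ∀ z ∈ Z, γ j z = 0
  · simp only [if_pos hj, laurentMon, zpow_natCast, mul_assoc]
  · simp only [if_neg hj, mul_zero, zero_mul]

theorem hasRationalZeta_familySum {a : ℕ} (ha : 1 ≤ a) {c : J → Omg p}
    (hc : ∀ j, c j ^ p ^ a = c j) (μ : J → ι → ℤ) (γ : J → σ → ℕ) : HasRationalZeta fun m =>
      algebraMap (CycInt p) (CyclotomicField p ℚ) (familySum p c μ γ (a * m)) := by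
  have hstratum (Z : Finset σ) := hasRationalZeta_torusSum ha
    (c := fun j => if ∀ z ∈ Z, γ j z = 0 then c j else 0) (fun j => by
      split_ifs
      · exact hc j
      · exact zero_pow (by have := two_le_prime_pow (p := p) ha; omega))
    fun j => Sum.elim (μ j) fun z : {z // z ∉ Z} => (γ j z : ℤ)
  exact (HasRationalZeta.sum univ fun Z _ => hstratum Z).congr fun m hm => by
    rw [familySum_eq_sum_torusSum (Nat.mul_pos ha hm), map_sum]

end Stratification

/-! ### Reciprocal zeros and poles -/

section ReciprocalRoots

open PowerSeries

variable {F : Type*} [Field F]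

lemma exists_eq_prod_one_sub_C_mul_X [IsAlgClosed F] {A : Polynomial F} (h : A.coeff 0 = 1) :
    ∃ (R : ℕ) (α : Fin R → F), (∀ i, α i ≠ 0) ∧ A = ∏ i, (1 - .C (α i) * .X) := by
  have hroot {r : F} (hr : r ∈ A.roots) : r ≠ 0 := by
    rintro rfl
    rw [Polynomial.mem_roots', Polynomial.IsRoot, ← Polynomial.coeff_zero_eq_eval_zero, h] at hr
    exact one_ne_zero hr.2
  have hA : A = .C (A.leadingCoeff * (A.roots.map Neg.neg).prod) *
      (A.roots.map fun r => 1 - .C r⁻¹ * .X).prod := by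
    rw [Polynomial.C_mul, mul_assoc, map_multiset_prod, Multiset.map_map, ← Multiset.prod_map_mul]
    nth_rw 1 [(IsAlgClosed.splits A).eq_prod_roots]
    refine congrArg (_ * ·) (congrArg _ (Multiset.map_congr rfl fun r hr => ?_))
    rw [Function.comp_apply, mul_sub, ← mul_assoc, ← Polynomial.C_mul, neg_mul,
      mul_inv_cancel₀ (hroot hr)]
    simp
    ring
  have hlead : A.leadingCoeff * (A.roots.map Neg.neg).prod = 1 := by
    have h0 := congrArg (Polynomial.eval 0) hA
    rw [← Polynomial.coeff_zero_eq_eval_zero, h, Polynomial.eval_mul,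
      Polynomial.eval_multiset_prod] at h0
    simpa using h0.symm
  rw [hlead, map_one, one_mul] at hA
  refine ⟨A.roots.toList.length, fun i => A.roots.toList[i]⁻¹,
    fun i => inv_ne_zero (hroot (Multiset.mem_toList.1 (List.getElem_mem _))), hA.trans ?_⟩
  refine .trans ?_ (Fin.prod_univ_fun_getElem A.roots.toList fun r =>
    (1 - Polynomial.C r⁻¹ * Polynomial.X : Polynomial F)).symm
  rw [← Multiset.prod_coe, ← Multiset.map_coe, Multiset.coe_toList]

lemma hasLogDeriv_prod_one_sub_C_mul_X {A ι : Type*} [CommRing A] [Fintype ι] (α : ι → A) :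
    HasLogDeriv ((∏ i, (1 - .C (α i) * .X) : Polynomial A) : A⟦X⟧) fun m => -∑ i, α i ^ m := by
  have hcoe : ((∏ i, (1 - .C (α i) * .X) : Polynomial A) : A⟦X⟧) = ∏ i, (1 - C (α i) * X ^ 1) := by
    rw [← Polynomial.coeToPowerSeries.ringHom_apply, map_prod]
    simp
  rw [hcoe]
  refine (HasLogDeriv.prod Finset.univ fun i _ => .one_sub_C_mul_X_pow (α i) le_rfl).congr
    fun m _ => ?_
  simp

lemma HasLogDeriv.unique {A : Type*} [CommRing A] [IsDomain A] {f : A⟦X⟧} {s t : ℕ → A}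
    (hf : f ≠ 0) (hs : HasLogDeriv f s) (ht : HasLogDeriv f t) {m : ℕ} (hm : 1 ≤ m) :
    s m = t m := by
  obtain ⟨m, rfl⟩ := Nat.exists_eq_add_of_le' hm
  simpa using congrArg (coeff m) (mul_left_cancel₀ hf (hs.symm.trans ht))

lemma eval_inv_prod_one_sub_C_mul_X {ι : Type*} [Fintype ι] {α : ι → F} {i : ι} (hi : α i ≠ 0) :
    (∏ i, (1 - .C (α i) * .X) : Polynomial F).eval (α i)⁻¹ = 0 := by
  rw [Polynomial.eval_prod]
  exact Finset.prod_eq_zero (Finset.mem_univ i) (by simp [mul_inv_cancel₀ hi])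

theorem HasRationalZeta.exists_reciprocal_roots [IsAlgClosed F] {K : Type*} [Field K] (σ : K →+* F)
    {s : ℕ → K} (hs : HasRationalZeta s) : ∃ (R S : ℕ) (α : Fin R → F) (β : Fin S → F),
      (∀ i, α i ≠ 0) ∧ (∀ j, β j ≠ 0) ∧ (∀ i j, α i ≠ β j) ∧
      (∀ m, (∏ i, (1 - Polynomial.C (α i) * .X)).coeff m ∈ σ.fieldRange) ∧
      (∀ m, (∏ j, (1 - Polynomial.C (β j) * .X)).coeff m ∈ σ.fieldRange) ∧
      ∀ m, 1 ≤ m → σ (s m) = ∑ j, β j ^ m - ∑ i, α i ^ m := by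
  obtain ⟨P, Q, L, -, hQ, hL0, hL, hPQ⟩ := hs
  obtain ⟨P, Q, hP0, hQ0, hcop, hPQ⟩ :=
    exists_isCoprime_of_mul_eq (by rintro rfl; simp at hQ) hL0 hPQ
  obtain ⟨R, α, hα, hPα⟩ :=
    exists_eq_prod_one_sub_C_mul_X (A := P.map σ) (by rw [Polynomial.coeff_map, hP0, map_one])
  obtain ⟨S, β, hβ, hQβ⟩ :=
    exists_eq_prod_one_sub_C_mul_X (A := Q.map σ) (by rw [Polynomial.coeff_map, hQ0, map_one])
  refine ⟨R, S, α, β, hα, hβ, fun i j hij => ?_, fun m => ?_, fun m => ?_, fun m hm => ?_⟩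
  · obtain ⟨A, B, hAB⟩ := hcop.map (Polynomial.mapRingHom σ)
    have heval := congrArg (Polynomial.eval (α i)⁻¹) hAB
    have hαi := eval_inv_prod_one_sub_C_mul_X (hα i)
    have hβj := eval_inv_prod_one_sub_C_mul_X (hβ j)
    rw [← hPα] at hαi
    rw [← hQβ, ← hij] at hβj
    simp [hαi, hβj] at heval
  · exact hPα ▸ Polynomial.coeff_map σ m ▸ ⟨_, rfl⟩
  · exact hQβ ▸ Polynomial.coeff_map σ m ▸ ⟨_, rfl⟩
  · have hmul : ((Q.map σ : Polynomial F) : F⟦X⟧) * PowerSeries.map σ L =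
        (P.map σ : Polynomial F) := by
      rw [Polynomial.polynomial_map_coe, Polynomial.polynomial_map_coe, ← map_mul, hPQ]
    have hne : ((P.map σ : Polynomial F) : F⟦X⟧) ≠ 0 := fun h => by
      simpa [hP0] using congrArg (coeff 0) h
    have hβL := (hasLogDeriv_prod_one_sub_C_mul_X β).mul (hL.map σ)
    rw [← hQβ, hmul] at hβL
    have hαP := hasLogDeriv_prod_one_sub_C_mul_X α
    rw [← hPα] at hαP
    linear_combination HasLogDeriv.unique hne hβL hαP hm

end ReciprocalRoots

section PowerSumBound

open Finset Polynomial

variable {F X : Type*} [Field F] [Fintype X]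

/-- Weight `x` by the value at `γ x` of `g = ∏ (T - r)`, over the values `r ≠ γ x₀` of `γ`. -/
lemma exists_sum_coeff_mul_eq_mul_pow [CharZero F] {γ : X → F} {n : X → ℤ} (hn : ∀ x, n x ≠ 0)
    (hnγ : ∀ x y, γ x = γ y → n x = n y) (x₀ : X) : ∃ (g : F[X]) (A : F), A ≠ 0 ∧
      ∀ m, ∑ k ∈ range (g.natDegree + 1), g.coeff k * ∑ x, n x * γ x ^ (m + k) =
        A * γ x₀ ^ m := by
  set g : F[X] := ∏ r ∈ (univ.image γ).erase (γ x₀), (.X - C r)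
  have hg₀ : g.eval (γ x₀) ≠ 0 := by
    rw [eval_prod, prod_ne_zero_iff]
    intro r hr
    rw [eval_sub, eval_X, eval_C]
    exact sub_ne_zero.2 (ne_of_mem_erase hr).symm
  have hg {x : X} (hx : γ x ≠ γ x₀) : g.eval (γ x) = 0 := by
    rw [eval_prod]
    exact prod_eq_zero (mem_erase.2 ⟨hx, mem_image_of_mem _ (mem_univ x)⟩) (by simp)
  refine ⟨g, #{x | γ x = γ x₀} * n x₀ * g.eval (γ x₀), ?_, fun m => ?_⟩
  · have hcard : #{x | γ x = γ x₀} ≠ 0 := card_ne_zero_of_mem (a := x₀) (by simp)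
    exact mul_ne_zero (mul_ne_zero (mod_cast hcard) (mod_cast hn x₀)) hg₀
  calc _ = ∑ x, n x * γ x ^ m * g.eval (γ x) := by
        simp only [mul_sum, eval_eq_sum_range]
        rw [sum_comm]
        exact sum_congr rfl fun x _ => sum_congr rfl fun k _ => by rw [pow_add]; ring
    _ = ∑ x with γ x = γ x₀, n x₀ * γ x₀ ^ m * g.eval (γ x₀) := by
        rw [sum_filter]
        refine sum_congr rfl fun x _ => ?_
        split_ifs with hx
        · rw [hx, hnγ x x₀ hx]
        · rw [hg hx, mul_zero]
    _ = _ := by rw [sum_const, nsmul_eq_mul]; ring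

theorem abv_le_of_abv_sum_pow_le [CharZero F] (v : AbsoluteValue F ℝ) {γ : X → F} {n : X → ℤ}
    (hn : ∀ x, n x ≠ 0) (hnγ : ∀ x y, γ x = γ y → n x = n y) {c : ℝ} (hc : 0 < c)
    (h : ∀ m, 1 ≤ m → v (∑ x, n x * γ x ^ m) ≤ c ^ m) (x₀ : X) : v (γ x₀) ≤ c := by
  obtain ⟨g, A, hA, hg⟩ := exists_sum_coeff_mul_eq_mul_pow hn hnγ x₀
  set B := ∑ k ∈ range (g.natDegree + 1), v (g.coeff k) * c ^ k
  have hbound (m : ℕ) (hm : 1 ≤ m) : v A * v (γ x₀) ^ m ≤ B * c ^ m := by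
    rw [← map_pow, ← map_mul, ← hg, sum_mul]
    refine (v.sum_le _ _).trans (sum_le_sum fun k _ => ?_)
    rw [map_mul, mul_assoc, ← pow_add, add_comm k m]
    exact mul_le_mul_of_nonneg_left (h _ (by omega)) (v.nonneg _)
  by_contra! hlt
  obtain ⟨m, hm, hm1⟩ := ((tendsto_pow_atTop_atTop_of_one_lt ((one_lt_div hc).2 hlt)
    ).eventually_gt_atTop (B / v A)).and (Filter.eventually_ge_atTop 1) |>.exists
  rw [div_pow, div_lt_div_iff₀ (v.pos hA) (pow_pos hc m)] at hm
  linarith [hbound m hm1]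

end PowerSumBound

/-! ### Absolute values at the finite places of a number field -/

section AdicAbs

open IsDedekindDomain NumberField

variable {F : Type*} [Field F] [NumberField F] (v : HeightOneSpectrum (𝓞 F))

/-- The `v`-adic absolute value on the number field `F`, normalized so that a uniformizer has
absolute value `1 / 2`. -/
def adicAbs : AbsoluteValue F ℝ := v.adicAbv (b := 2) one_lt_two

lemma adicAbs_le_one_iff (x : F) : adicAbs v x ≤ 1 ↔ v.valuation F x ≤ 1 := by
  rw [← WithZeroMulInt.toNNReal_le_one_iff (e := 2) one_lt_two]
  exact_mod_cast Iff.rfl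

lemma adicAbs_le_one_of_isIntegral {x : F} (hx : IsIntegral ℤ x) : adicAbs v x ≤ 1 :=
  (adicAbs_le_one_iff v x).2 (v.valuation_le_one (⟨x, hx⟩ : 𝓞 F))

lemma isIntegral_of_adicAbs_le_one {x : F} (h : ∀ v : HeightOneSpectrum (𝓞 F), adicAbs v x ≤ 1) :
    IsIntegral ℤ x := by
  obtain ⟨y, rfl⟩ := HeightOneSpectrum.mem_integers_of_valuation_le_one (R := 𝓞 F) F x
    fun v => (adicAbs_le_one_iff v x).1 (h v)
  exact y.2

lemma exists_adicAbs_eq_zpow {y : 𝓞 F} (hy : y ≠ 0) :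
    ∃ n : ℕ, adicAbs v (algebraMap (𝓞 F) F y) = (2 : ℝ) ^ (-(n : ℤ)) ∧
      ∀ t : ℕ, y ∈ v.asIdeal ^ t ↔ t ≤ n := by
  obtain ⟨n, hn⟩ : ∃ n : ℕ, v.intValuation y = WithZero.exp (-(n : ℤ)) :=
    ⟨_, v.intValuation_if_neg hy⟩
  refine ⟨n, ?_, fun t => ?_⟩
  · change ((WithZeroMulInt.toNNReal (e := 2) two_ne_zero
      (v.valuation F (algebraMap (𝓞 F) F y)) : NNReal) : ℝ) = _
    rw [v.valuation_of_algebraMap, hn, WithZeroMulInt.toNNReal_neg_apply _ WithZero.exp_ne_zero]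
    rfl
  · rw [← v.intValuation_le_pow_iff_mem, hn, WithZero.exp_le_exp, neg_le_neg_iff, Nat.cast_le]

lemma adicAbs_eq_of_associated {R : Type*} [CommRing R] {σ : R →+* F}
    (hσ : ∀ y, IsIntegral ℤ (σ y)) {x y : R} (h : Associated x y) :
    adicAbs v (σ x) = adicAbs v (σ y) := by
  obtain ⟨u, rfl⟩ := h
  have hu : adicAbs v (σ u) * adicAbs v (σ ↑u⁻¹) = 1 := by
    rw [← map_mul, ← map_mul, Units.mul_inv, map_one, map_one]
  have hle : ∀ z : R, adicAbs v (σ z) ≤ 1 := fun z => adicAbs_le_one_of_isIntegral v (hσ z)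
  have hu1 : adicAbs v (σ u) = 1 := (hle u).antisymm <|
    hu.symm.le.trans (mul_le_of_le_one_right ((adicAbs v).nonneg _) (hle _))
  rw [map_mul, map_mul, hu1, mul_one]

section Divisibility

variable {p : ℕ} [Fact p.Prime] {σ : CycInt p →+* F} (hσ : ∀ y, IsIntegral ℤ (σ y))

include hσ

lemma adicAbs_oneSubZeta_pow : adicAbs v (σ (oneSubZeta p)) ^ (p - 1) = adicAbs v (p : F) := by
  have h := adicAbs_eq_of_associated v hσ (associated_oneSubZeta_pow p)
  rwa [map_pow, map_pow, map_natCast] at h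

lemma adicAbs_oneSubZeta_pos : 0 < adicAbs v (σ (oneSubZeta p)) := by
  have hp := (Fact.out : p.Prime)
  refine ((adicAbs v).nonneg _).lt_of_ne' fun h => ?_
  have h' := adicAbs_oneSubZeta_pow v hσ
  rw [h, zero_pow (Nat.sub_pos_of_lt hp.one_lt).ne'] at h'
  exact (adicAbs v).ne_zero (Nat.cast_ne_zero.2 hp.ne_zero) h'.symm

lemma adicAbs_oneSubZeta_rpow (x : ℝ) :
    adicAbs v (σ (oneSubZeta p)) ^ (((p : ℝ) - 1) * x) = adicAbs v (p : F) ^ x := by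
  rw [← adicAbs_oneSubZeta_pow v hσ, ← Real.rpow_natCast, ← Real.rpow_mul ((adicAbs v).nonneg _),
    Nat.cast_sub (Fact.out : p.Prime).one_le, Nat.cast_one]

lemma adicAbs_le_of_oneSubZeta_pow_dvd {b : ℝ} (hb : 0 ≤ b) {T : CycInt p}
    (hT : ∀ K : ℕ, (K : ℝ) < ((p : ℝ) - 1) * b + 1 → oneSubZeta p ^ K ∣ T) :
    adicAbs v (σ T) ≤ adicAbs v (p : F) ^ b := by
  have hp : (1 : ℝ) ≤ p := by exact_mod_cast (Fact.out : p.Prime).one_le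
  set x : ℝ := ((p : ℝ) - 1) * b
  obtain ⟨y, rfl⟩ := hT ⌈x⌉₊ (Nat.ceil_lt_add_one (mul_nonneg (sub_nonneg.2 hp) hb))
  have hle : ∀ z, adicAbs v (σ z) ≤ 1 := fun z => adicAbs_le_one_of_isIntegral v (hσ z)
  calc adicAbs v (σ (oneSubZeta p ^ ⌈x⌉₊ * y))
      = adicAbs v (σ (oneSubZeta p)) ^ ⌈x⌉₊ * adicAbs v (σ y) := by
        rw [map_mul, map_pow, map_mul, map_pow]
    _ ≤ adicAbs v (σ (oneSubZeta p)) ^ ⌈x⌉₊ :=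
        mul_le_of_le_one_right (pow_nonneg ((adicAbs v).nonneg _) _) (hle y)
    _ = adicAbs v (σ (oneSubZeta p)) ^ ((⌈x⌉₊ : ℕ) : ℝ) := (Real.rpow_natCast _ _).symm
    _ ≤ adicAbs v (σ (oneSubZeta p)) ^ x :=
        Real.rpow_le_rpow_of_exponent_ge (adicAbs_oneSubZeta_pos v hσ) (hle _) (Nat.le_ceil x)
    _ = adicAbs v (p : F) ^ b := adicAbs_oneSubZeta_rpow v hσ b

end Divisibility

end AdicAbs

section OrdIn

open IsDedekindDomain NumberField

lemma ordIn_eq_of_mem_pow_iff (F : Subfield ℂ) (I : Ideal (𝓞 F)) {y : 𝓞 F} {n : ℕ}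
    (h : ∀ t : ℕ, y ∈ I ^ t ↔ t ≤ n) : ordIn F I ((algebraMap (𝓞 F) F y : F) : ℂ) = n := by
  suffices hset : {t : ℕ | ∃ z : 𝓞 F,
      ((algebraMap (𝓞 F) F z : F) : ℂ) = ((algebraMap (𝓞 F) F y : F) : ℂ) ∧ z ∈ I ^ t} =
        Set.Iic n by
    rw [ordIn, hset, csSup_Iic]
  ext t
  rw [Set.mem_ofPred_eq, Set.mem_Iic, ← h]
  constructor
  · rintro ⟨z, hz, hz'⟩
    rwa [← show z = y from FaithfulSMul.algebraMap_injective (𝓞 F) F (Subtype.ext hz)]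
  · exact fun ht => ⟨y, rfl, ht⟩

variable (F : Subfield ℂ) [NumberField F] (v : HeightOneSpectrum (𝓞 F))

lemma adicAbs_eq_zpow_neg_ordIn {y : 𝓞 F} (hy : y ≠ 0) : adicAbs v (algebraMap (𝓞 F) F y) =
    (2 : ℝ) ^ (-(ordIn F v.asIdeal ((algebraMap (𝓞 F) F y : F) : ℂ) : ℤ)) := by
  obtain ⟨n, hn, hn'⟩ := exists_adicAbs_eq_zpow v hy
  rw [hn, ordIn_eq_of_mem_pow_iff F v.asIdeal hn']

lemma ordIn_pos {y : 𝓞 F} (hy : y ≠ 0) (hyv : y ∈ v.asIdeal) :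
    0 < ordIn F v.asIdeal ((algebraMap (𝓞 F) F y : F) : ℂ) := by
  obtain ⟨n, -, hn⟩ := exists_adicAbs_eq_zpow v hy
  rw [ordIn_eq_of_mem_pow_iff F v.asIdeal hn]
  exact (hn 1).1 (by rwa [pow_one])

lemma le_ordIn_div_of_adicAbs_le {p a : ℕ} (hp : p ≠ 0) (hpv : (p : 𝓞 F) ∈ v.asIdeal) (ha : 0 < a)
    {w : ℝ} {x : F} (hx : x ≠ 0) (hint : IsIntegral ℤ x)
    (hb : adicAbs v x ≤ adicAbs v (p : F) ^ ((a : ℝ) * w)) :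
    w ≤ (ordIn F v.asIdeal (x : ℂ) : ℝ) / ((ordIn F v.asIdeal (p : ℂ) : ℝ) * (a : ℝ)) := by
  obtain ⟨y, rfl⟩ : ∃ y : 𝓞 F, algebraMap (𝓞 F) F y = x := ⟨⟨x, hint⟩, rfl⟩
  have hy : y ≠ 0 := fun hy => hx (by rw [hy, map_zero])
  have hp0 : (p : 𝓞 F) ≠ 0 := Nat.cast_ne_zero.2 hp
  have hordx := adicAbs_eq_zpow_neg_ordIn F v hy
  have hordp := adicAbs_eq_zpow_neg_ordIn F v hp0
  have hpos := ordIn_pos F v hp0 hpv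
  have hcast : ((algebraMap (𝓞 F) F (p : 𝓞 F) : F) : ℂ) = (p : ℂ) := by rw [map_natCast]; rfl
  rw [hcast, map_natCast] at hordp
  rw [hcast] at hpos
  rw [hordx, hordp, ← Real.rpow_intCast, ← Real.rpow_intCast, ← Real.rpow_mul zero_le_two,
    Real.rpow_le_rpow_left_iff one_lt_two] at hb
  push_cast at hb
  rw [le_div_iff₀ (mul_pos (Nat.cast_pos.2 hpos) (Nat.cast_pos.2 ha))]
  linarith

end OrdIn

/-! ### Reciprocal roots determined by their power sums -/

section PowerSums

open IsDedekindDomain NumberField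

variable {ι κ : Type*} [Fintype ι] [Fintype κ]

lemma abv_le_of_abv_sum_pow_sub_sum_pow_le {F : Type*} [Field F] [CharZero F]
    (v : AbsoluteValue F ℝ) {α : ι → F} {β : κ → F} (hαβ : ∀ i j, α i ≠ β j) {c : ℝ} (hc : 0 < c)
    (h : ∀ m, 1 ≤ m → v (∑ j, β j ^ m - ∑ i, α i ^ m) ≤ c ^ m) :
    (∀ i, v (α i) ≤ c) ∧ ∀ j, v (β j) ≤ c := by
  have key := abv_le_of_abv_sum_pow_le v (n := Sum.elim (fun _ : ι => -1) fun _ : κ => 1)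
    (γ := Sum.elim α β) (by rintro (_ | _) <;> simp)
    (by
      rintro (i | j) (i' | j') h
      · rfl
      · exact absurd h (hαβ i j')
      · exact absurd h.symm (hαβ i' j)
      · rfl) hc fun m hm => by
        simpa [Fintype.sum_sum_type, neg_add_eq_sub] using h m hm
  exact ⟨fun i => key (Sum.inl i), fun j => key (Sum.inr j)⟩

lemma isIntegral_of_sum_pow_sub_sum_pow {L : Type*} [Field L] [CharZero L] {α : ι → L} {β : κ → L}
    (hα : ∀ i, IsIntegral ℚ (α i)) (hβ : ∀ j, IsIntegral ℚ (β j)) (hαβ : ∀ i j, α i ≠ β j)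
    (h : ∀ m, 1 ≤ m → IsIntegral ℤ (∑ j, β j ^ m - ∑ i, α i ^ m)) :
    (∀ i, IsIntegral ℤ (α i)) ∧ ∀ j, IsIntegral ℤ (β j) := by
  let E : IntermediateField ℚ L := IntermediateField.adjoin ℚ (Set.range α ∪ Set.range β)
  have : FiniteDimensional ℚ E := by
    have := ((Set.finite_range α).union (Set.finite_range β)).to_subtype
    refine IntermediateField.finiteDimensional_adjoin ?_
    rintro x (⟨i, rfl⟩ | ⟨j, rfl⟩)
    exacts [hα i, hβ j]
  have : NumberField E := { to_charZero := inferInstance, to_finiteDimensional := this }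
  have hsub := IntermediateField.subset_adjoin ℚ (Set.range α ∪ Set.range β)
  let α' : ι → E := fun i => ⟨α i, hsub (Or.inl ⟨i, rfl⟩)⟩
  let β' : κ → E := fun j => ⟨β j, hsub (Or.inr ⟨j, rfl⟩)⟩
  have hv (v : HeightOneSpectrum (𝓞 E)) :
      (∀ i, adicAbs v (α' i) ≤ 1) ∧ ∀ j, adicAbs v (β' j) ≤ 1 := by
    refine abv_le_of_abv_sum_pow_sub_sum_pow_le _
      (fun i j hij => hαβ i j (congrArg Subtype.val hij)) one_pos fun m hm => ?_
    rw [one_pow]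
    refine adicAbs_le_one_of_isIntegral v <|
      (isIntegral_algHom_iff E.val.toRingHom.toIntAlgHom Subtype.val_injective).1 ?_
    simpa [α', β'] using h m hm
  let val : E →ₐ[ℤ] L := E.val.toRingHom.toIntAlgHom
  exact ⟨fun i => (isIntegral_of_adicAbs_le_one fun v => (hv v).1 i).map val,
    fun j => (isIntegral_of_adicAbs_le_one fun v => (hv v).2 j).map val⟩

lemma isIntegral_of_prod_one_sub_coeff_mem_fieldRange {k K L : Type*} [Field k] [Field K] [Field L]
    [Algebra k K] [Algebra k L] [Algebra.IsAlgebraic k K] (σ : K →ₐ[k] L) {α : ι → L}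
    (h : ∀ m, (∏ i, (1 - Polynomial.C (α i) * Polynomial.X)).coeff m ∈
      σ.toRingHom.fieldRange) (i : ι) : IsIntegral k (α i) := by
  rcases eq_or_ne (α i) 0 with hi | hi
  · exact hi ▸ isIntegral_zero
  let A : Polynomial L := ∏ i, (1 - Polynomial.C (α i) * Polynomial.X)
  let : Algebra K L := σ.toRingHom.toAlgebra
  have : IsScalarTower k K L := IsScalarTower.of_algebraMap_eq fun r => (σ.commutes r).symm
  obtain ⟨B, hB⟩ : ∃ B : Polynomial K, B.map (algebraMap K L) = A :=
    (Polynomial.mem_lifts A).1 ((Polynomial.lifts_iff_coeff_lifts A).2 h)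
  have hA : A ≠ 0 := fun h0 => by
    have h1 : A.eval 0 = 1 := by simp [A, Polynomial.eval_prod]
    simp [h0] at h1
  have hroot : A.eval (α i)⁻¹ = 0 := by
    rw [Polynomial.eval_prod]
    exact Finset.prod_eq_zero (Finset.mem_univ i) (by simp [hi])
  have halg : IsAlgebraic K (α i)⁻¹ := by
    refine ⟨B, fun h0 => hA (by rw [← hB, h0, Polynomial.map_zero]), ?_⟩
    rw [Polynomial.aeval_def, Polynomial.eval₂_eq_eval_map, hB, hroot]
  exact (IsAlgebraic.inv_iff.1 (halg.restrictScalars k)).isIntegral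

end PowerSums

section AdicPowerSums

open IsDedekindDomain NumberField

variable {ι κ : Type*} [Fintype ι] [Fintype κ] {p a : ℕ} [Fact p.Prime]

lemma adicAbs_le_of_oneSubZeta_pow_dvd_sum_pow {F : Type*} [Field F] [NumberField F]
    (v : HeightOneSpectrum (𝓞 F)) (τ : CycInt p →+* F) {y : ℕ → CycInt p} {w : ℝ} (hw : 0 ≤ w)
    (hy : ∀ m K : ℕ, 1 ≤ m → (K : ℝ) < (a * m : ℕ) * ((p : ℝ) - 1) * w + 1 →
      oneSubZeta p ^ K ∣ y m)
    {α : ι → F} {β : κ → F} (hαβ : ∀ i j, α i ≠ β j)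
    (hsum : ∀ m, 1 ≤ m → τ (y m) = ∑ j, β j ^ m - ∑ i, α i ^ m) :
    (∀ i, adicAbs v (α i) ≤ adicAbs v (p : F) ^ (a * w)) ∧
      ∀ j, adicAbs v (β j) ≤ adicAbs v (p : F) ^ (a * w) := by
  have hp : 0 < adicAbs v (p : F) :=
    (adicAbs v).pos (Nat.cast_ne_zero.2 (Fact.out : p.Prime).ne_zero)
  refine abv_le_of_abv_sum_pow_sub_sum_pow_le _ hαβ (Real.rpow_pos_of_pos hp _) fun m hm => ?_
  rw [← hsum m hm, ← Real.rpow_natCast, ← Real.rpow_mul hp.le]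
  refine adicAbs_le_of_oneSubZeta_pow_dvd v
    (fun x => (RingOfIntegers.isIntegral x).map τ.toIntAlgHom) (by positivity) fun K hK =>
      hy m K hm (hK.trans_eq ?_)
  push_cast
  ring

lemma le_ordIn_div_of_oneSubZeta_pow_dvd_sum_pow (σ : CycInt p →+* ℂ) {y : ℕ → CycInt p}
    (ha : 1 ≤ a) {w : ℝ} (hw : 0 ≤ w)
    (hy : ∀ m K : ℕ, 1 ≤ m → (K : ℝ) < (a * m : ℕ) * ((p : ℝ) - 1) * w + 1 →
      oneSubZeta p ^ K ∣ y m)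
    {α : ι → ℂ} {β : κ → ℂ} (hα0 : ∀ i, α i ≠ 0) (hβ0 : ∀ j, β j ≠ 0) (hαβ : ∀ i j, α i ≠ β j)
    (hsum : ∀ m, 1 ≤ m → σ (y m) = ∑ j, β j ^ m - ∑ i, α i ^ m)
    (hα : ∀ i, IsIntegral ℤ (α i)) (hβ : ∀ j, IsIntegral ℤ (β j))
    (F : Subfield ℂ) [NumberField F] (hσF : ∀ x, σ x ∈ F) (hαF : ∀ i, α i ∈ F)
    (hβF : ∀ j, β j ∈ F) (I : Ideal (𝓞 F)) [I.IsPrime] (hpI : (p : 𝓞 F) ∈ I) :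
    (∀ i, w ≤ (ordIn F I (α i) : ℝ) / ((ordIn F I (p : ℂ) : ℝ) * (a : ℝ))) ∧
      ∀ j, w ≤ (ordIn F I (β j) : ℝ) / ((ordIn F I (p : ℂ) : ℝ) * (a : ℝ)) := by
  have hp0 := (Fact.out : p.Prime).ne_zero
  let v : HeightOneSpectrum (𝓞 F) := ⟨I, inferInstance, fun hI =>
    Nat.cast_ne_zero.2 hp0 ((Submodule.mem_bot (𝓞 F)).1 (hI ▸ hpI))⟩
  have hintF {x : F} (hx : IsIntegral ℤ (x : ℂ)) : IsIntegral ℤ x :=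
    (isIntegral_algHom_iff F.subtype.toIntAlgHom Subtype.val_injective).1 hx
  obtain ⟨hvα, hvβ⟩ := adicAbs_le_of_oneSubZeta_pow_dvd_sum_pow (α := fun i => (⟨α i, hαF i⟩ : F))
    (β := fun j => (⟨β j, hβF j⟩ : F)) v (σ.codRestrict F hσF) hw hy
    (fun i j h => hαβ i j (congrArg Subtype.val h))
    (fun m hm => Subtype.ext (by simpa using hsum m hm))
  exact ⟨fun i => le_ordIn_div_of_adicAbs_le F v hp0 hpI ha
      (fun h => hα0 i (congrArg Subtype.val h)) (hintF (hα i)) (hvα i),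
    fun j => le_ordIn_div_of_adicAbs_le F v hp0 hpI ha
      (fun h => hβ0 j (congrArg Subtype.val h)) (hintF (hβ j)) (hvβ j)⟩

end AdicPowerSums

/-! ### The tensor power sums of the family -/

section Character

variable {p : ℕ} [Fact p.Prime]

lemma addChar_apply_eq_pow_val {M : Type*} [Monoid M] (Θ : AddChar (ZMod p) M) (z : ZMod p) :
    Θ z = Θ 1 ^ z.val := by
  rw [← AddChar.map_nsmul_eq_pow, nsmul_one, ZMod.natCast_zmod_val]

lemma addChar_apply_one_pow {M : Type*} [Monoid M] (Θ : AddChar (ZMod p) M) : Θ 1 ^ p = 1 := by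
  rw [← AddChar.map_nsmul_eq_pow, nsmul_one, ZMod.natCast_self, AddChar.map_zero_eq_one]

lemma isPrimitiveRoot_addChar_apply_one {M : Type*} [CommMonoid M] {Θ : AddChar (ZMod p) M}
    (hΘ : Θ ≠ 1) : IsPrimitiveRoot (Θ 1) p := by
  have hne : Θ 1 ≠ 1 := fun h => hΘ <| DFunLike.ext _ _ fun z => by
    rw [addChar_apply_eq_pow_val, h, one_pow, AddChar.one_apply]
  exact IsPrimitiveRoot.iff_orderOf.2 (orderOf_eq_prime (addChar_apply_one_pow Θ) hne)

lemma exists_cyclotomicField_algHom {ξ : ℂ} (hξ : IsPrimitiveRoot ξ p) :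
    ∃ σ : CyclotomicField p ℚ →ₐ[ℚ] ℂ,
      σ (algebraMap (CycInt p) (CyclotomicField p ℚ) (zetaInt p)) = ξ := by
  have hp := (Fact.out : p.Prime).pos
  let e := (isPrimitiveRoot_zeta p).embeddingsEquivPrimitiveRoots ℂ
    (Polynomial.cyclotomic.irreducible_rat hp)
  refine ⟨e.symm ⟨ξ, (mem_primitiveRoots hp).2 hξ⟩, ?_⟩
  exact congrArg Subtype.val (e.apply_symm_apply ⟨ξ, (mem_primitiveRoots hp).2 hξ⟩)

lemma cyclotomicField_map_mem {L : Type*} [Field L] [Algebra ℚ L]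
    (σ : CyclotomicField p ℚ →ₐ[ℚ] L) {F : Subfield L}
    (h : σ (algebraMap (CycInt p) (CyclotomicField p ℚ) (zetaInt p)) ∈ F)
    (x : CyclotomicField p ℚ) : σ x ∈ F := by
  have hx : x ∈ Algebra.adjoin ℚ {IsCyclotomicExtension.zeta p ℚ (CyclotomicField p ℚ)} := by
    rw [IsCyclotomicExtension.adjoin_primitive_root_eq_top (isPrimitiveRoot_zeta p)]
    trivial
  induction hx using Algebra.adjoin_induction with
  | mem x hx => rwa [Set.mem_singleton_iff.1 hx]
  | algebraMap r => simp
  | add x y _ _ hx hy => exact (map_add σ x y).symm ▸ add_mem hx hy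
  | mul x y _ _ hx hy => exact (map_mul σ x y).symm ▸ mul_mem hx hy

lemma map_traceChar {K L : Type*} [Field K] [Field L] [Algebra (CycInt p) K] {σ : K →+* L}
    {Θ : AddChar (ZMod p) L} (h : σ (algebraMap (CycInt p) K (zetaInt p)) = Θ 1) (d : ℕ)
    (z : Omg p) : σ (algebraMap (CycInt p) K (traceChar p d z)) = Θ (traceZmod p d z) := by
  rw [traceChar, map_pow, map_pow, h, ← addChar_apply_eq_pow_val]

end Character

section TensorPower

variable {K : Type} [Field K] {n s : ℕ}

/-- The coefficients of `∑ i, Ḡ(x i, t)`, a Laurent polynomial in `k` independent copies of the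
`x`-variables and one copy of the `t`-variables; its terms are the pairs of a copy and a term
of `Ḡ = f̄ + P̄`. -/
def tensorCoeff (k : ℕ) (f : (Fin n → ℤ) →₀ K) (P : ((Fin n → ℤ) × (Fin s → ℤ)) →₀ K) :
    Fin k × (f.support ⊕ P.support) → K :=
  fun j => Sum.elim (fun u => f u.1) (fun g => P g.1) j.2

/-- The exponents in the copies of the `x`-variables of the terms of `∑ i, Ḡ(x i, t)`. -/
def tensorExpX (k : ℕ) (f : (Fin n → ℤ) →₀ K) (P : ((Fin n → ℤ) × (Fin s → ℤ)) →₀ K) :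
    Fin k × (f.support ⊕ P.support) → Fin k × Fin n → ℤ :=
  fun j i => if i.1 = j.1 then Sum.elim (fun u => u.1 i.2) (fun g => g.1.1 i.2) j.2 else 0

/-- The exponents in the `t`-variables of the terms of `∑ i, Ḡ(x i, t)`. They are truncated to
natural numbers, which loses nothing as `P̄` is polynomial in `t`. -/
def tensorExpT (k : ℕ) (f : (Fin n → ℤ) →₀ K) (P : ((Fin n → ℤ) × (Fin s → ℤ)) →₀ K) :
    Fin k × (f.support ⊕ P.support) → Fin s → ℕ :=
  fun j z => Sum.elim (fun _ => 0) (fun g => (g.1.2 z).toNat) j.2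

lemma laurentMon_tensorExpX (k : ℕ) (f : (Fin n → ℤ) →₀ K)
    (P : ((Fin n → ℤ) × (Fin s → ℤ)) →₀ K) (x : Fin k × Fin n → K) (i : Fin k)
    (e : f.support ⊕ P.support) : laurentMon x (tensorExpX k f P (i, e)) =
      mon (fun l => x (i, l)) (Sum.elim (fun u => u.1) (fun g => g.1.1) e) := by
  rw [laurentMon, Fintype.prod_prod_type, Finset.prod_eq_single i]
  · rw [mon]
    exact Finset.prod_congr rfl fun l _ => by rcases e with e | e <;> simp [tensorExpX]
  · intro i' _ hi'
    simp [tensorExpX, hi']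
  · simp

lemma sum_tensorCoeff_mul_eq_sum_Gval (k : ℕ) (f : (Fin n → ℤ) →₀ K)
    {P : ((Fin n → ℤ) × (Fin s → ℤ)) →₀ K} (hPnn : ∀ gm ∈ P.support, ∀ j, (0 : ℤ) ≤ gm.2 j)
    (x : Fin k × Fin n → K) (t : Fin s → K) :
    ∑ j, tensorCoeff k f P j * laurentMon x (tensorExpX k f P j) *
      ∏ z, t z ^ tensorExpT k f P j z = ∑ i, Gval f P (fun l => x (i, l)) t := by
  rw [Fintype.sum_prod_type]
  refine Finset.sum_congr rfl fun i _ => ?_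
  rw [Fintype.sum_sum_type, Gval, Finsupp.sum, Finsupp.sum]
  congr 1
  · rw [← Finset.sum_coe_sort f.support (fun u => f u * mon (fun l => x (i, l)) u)]
    refine Finset.sum_congr rfl fun e _ => ?_
    rw [laurentMon_tensorExpX]
    simp [tensorCoeff, tensorExpT]
  · rw [← Finset.sum_coe_sort P.support
      (fun u => P u * mon (fun l => x (i, l)) u.1 * mon t u.2)]
    refine Finset.sum_congr rfl fun e _ => ?_
    have hmon : ∏ z, t z ^ (e.1.2 z).toNat = mon t e.1.2 := Finset.prod_congr rfl fun z _ => by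
      rw [← zpow_natCast, Int.toNat_of_nonneg (hPnn _ e.2 z)]
    rw [laurentMon_tensorExpX, ← hmon]
    rfl

lemma Gval_pow_fixed {p d : ℕ} [Fact p.Prime] [CharP K p] {f : (Fin n → ℤ) →₀ K}
    {P : ((Fin n → ℤ) × (Fin s → ℤ)) →₀ K} (hf : ∀ μ, f μ ^ p ^ d = f μ)
    (hP : ∀ gm, P gm ^ p ^ d = P gm) {x : Fin n → K} {t : Fin s → K}
    (hx : ∀ i, x i ^ p ^ d = x i) (ht : ∀ i, t i ^ p ^ d = t i) :
    Gval f P x t ^ p ^ d = Gval f P x t := by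
  have hmon {l : ℕ} {y : Fin l → K} (hy : ∀ i, y i ^ p ^ d = y i) (u : Fin l → ℤ) :
      mon y u ^ p ^ d = mon y u := laurentMon_pow_fixed hy u
  rw [Gval, Finsupp.sum, Finsupp.sum, add_pow_char_pow, sum_pow_char_pow, sum_pow_char_pow]
  congr 1
  · exact Finset.sum_congr rfl fun e _ => by rw [mul_pow, hf, hmon hx]
  · exact Finset.sum_congr rfl fun e _ => by rw [mul_pow, mul_pow, hP, hmon hx, hmon ht]

end TensorPower

section NormalizedSum

variable {p : ℕ} [Fact p.Prime] {n s : ℕ}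

lemma torSum_eq_sum_torus (Θ : AddChar (ZMod p) ℂ) (f : (Fin n → ℤ) →₀ Omg p)
    (P : ((Fin n → ℤ) × (Fin s → ℤ)) →₀ Omg p) {d : ℕ} (hd : 1 ≤ d) (t : Fin s → Omg p) :
    torSum p Θ f P d t = ∑ x ∈ torus (Fin n) p d, Θ (traceZmod p d (Gval f P x t)) := by
  rw [torSum, ← finsum_mem_coe_finset]
  refine finsum_congr fun x => finsum_congr_Prop ?_ fun _ => rfl
  simp only [Finset.mem_coe, mem_torus hd, and_comm]

lemma Naff_eq_sum_affinePoints {a : ℕ} (Θ : AddChar (ZMod p) ℂ) (f : (Fin n → ℤ) →₀ Omg p)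
    (P : ((Fin n → ℤ) × (Fin s → ℤ)) →₀ Omg p) (k : ℕ) {m : ℕ} (hd : 1 ≤ a * m) :
    Naff p a Θ f P k m =
      ∑ t ∈ affinePoints (Fin s) p (a * m), ((-1 : ℂ) ^ n * torSum p Θ f P (a * m) t) ^ k := by
  rw [Naff, ← finsum_mem_coe_finset]
  refine finsum_congr fun t => finsum_congr_Prop ?_ fun _ => rfl
  simp only [Finset.mem_coe, mem_affinePoints hd]

lemma sum_torus_pow {M : Type*} [CommSemiring M] (k d : ℕ) (g : (Fin n → Omg p) → M) :
    (∑ x ∈ torus (Fin n) p d, g x) ^ k =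
      ∑ x ∈ torus (Fin k × Fin n) p d, ∏ i, g fun l => x (i, l) := by
  rw [Finset.sum_pow']
  refine Finset.sum_nbij' (fun y i => y i.1 i.2) (fun x i l => x (i, l)) ?_ ?_ (fun _ _ => rfl)
    (fun _ _ => rfl) fun _ _ => rfl
  · intro y hy
    simp only [torus, Fintype.mem_piFinset] at hy ⊢
    exact fun i => hy i.1 i.2
  · intro x hx
    simp only [torus, Fintype.mem_piFinset] at hx ⊢
    exact fun i l => hx (i, l)

lemma traceChar_sum_Gval {d k : ℕ} (hd : 1 ≤ d) {f : (Fin n → ℤ) →₀ Omg p}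
    {P : ((Fin n → ℤ) × (Fin s → ℤ)) →₀ Omg p} (hf : ∀ μ, f μ ^ p ^ d = f μ)
    (hP : ∀ gm, P gm ^ p ^ d = P gm) {x : Fin k × Fin n → Omg p}
    (hx : x ∈ torus (Fin k × Fin n) p d) {t : Fin s → Omg p} (ht : ∀ z, t z ^ p ^ d = t z) :
    traceChar p d (∑ i, Gval f P (fun l => x (i, l)) t) =
      ∏ i, traceChar p d (Gval f P (fun l => x (i, l)) t) :=
  traceChar_sum _ fun i _ => Gval_pow_fixed hf hP (fun l => ((mem_torus hd).1 hx (i, l)).2) ht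

variable (p) in
/-- The sum `(-1)^(s+1) N_m`, as an element of `ℤ[ζ_p]`: expanding the `k`-th power turns it into a
single exponential sum over `k` copies of the torus and one affine space. -/
def tensorSum (a k : ℕ) (f : (Fin n → ℤ) →₀ Omg p) (P : ((Fin n → ℤ) × (Fin s → ℤ)) →₀ Omg p)
    (m : ℕ) : CycInt p :=
  (-1) ^ (s + 1 + n * k) *
    familySum p (tensorCoeff k f P) (tensorExpX k f P) (tensorExpT k f P) (a * m)

variable {a k : ℕ} (ha : 1 ≤ a) {f : (Fin n → ℤ) →₀ Omg p}
  {P : ((Fin n → ℤ) × (Fin s → ℤ)) →₀ Omg p} (hf : ∀ μ, f μ ^ p ^ a = f μ)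
  (hP : ∀ gm, P gm ^ p ^ a = P gm)

include hf hP in
lemma tensorCoeff_pow_fixed (j : Fin k × (f.support ⊕ P.support)) :
    tensorCoeff k f P j ^ p ^ a = tensorCoeff k f P j := by
  obtain ⟨-, e | e⟩ := j
  exacts [hf _, hP _]

include ha hf hP

lemma map_tensorSum (hPnn : ∀ gm ∈ P.support, ∀ j, (0 : ℤ) ≤ gm.2 j) {Θ : AddChar (ZMod p) ℂ}
    {σ : CyclotomicField p ℚ →+* ℂ}
    (hσ : σ (algebraMap (CycInt p) (CyclotomicField p ℚ) (zetaInt p)) = Θ 1) {m : ℕ} (hm : 1 ≤ m) :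
    σ (algebraMap (CycInt p) (CyclotomicField p ℚ) (tensorSum p a k f P m)) =
      (-1) ^ (s + 1) * Naff p a Θ f P k m := by
  have hd : 1 ≤ a * m := Nat.mul_pos ha hm
  rw [Naff_eq_sum_affinePoints Θ f P k hd, tensorSum, familySum, Finset.sum_comm, pow_add,
    mul_assoc]
  simp only [map_mul, map_pow, map_neg, map_one, map_sum, mul_pow, ← pow_mul, ← Finset.mul_sum]
  congr 2
  refine Finset.sum_congr rfl fun t ht => ?_
  rw [torSum_eq_sum_torus Θ f P hd, sum_torus_pow]
  refine Finset.sum_congr rfl fun x hx => ?_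
  rw [sum_tensorCoeff_mul_eq_sum_Gval k f hPnn, traceChar_sum_Gval hd
    (fun u => pow_pow_mul_eq_self (hf u) m) (fun u => pow_pow_mul_eq_self (hP u) m) hx
    ((mem_affinePoints hd).1 ht), map_prod, map_prod]
  exact Finset.prod_congr rfl fun i _ => map_traceChar hσ _ _

lemma hasRationalZeta_tensorSum : HasRationalZeta fun m =>
    algebraMap (CycInt p) (CyclotomicField p ℚ) (tensorSum p a k f P m) := by
  have h := hasRationalZeta_familySum ha (tensorCoeff_pow_fixed (k := k) hf hP)
    (tensorExpX k f P) (tensorExpT k f P)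
  simp only [tensorSum, map_mul, map_pow, map_neg, map_one]
  rcases neg_one_pow_eq_or (CyclotomicField p ℚ) (s + 1 + n * k) with hε | hε
  · simpa [hε] using h
  · simpa [hε] using h.neg

end NormalizedSum

/-! ### The weight of the relative polytope -/

section RelativePolytope

lemma exists_sum_smul_eq_smul_mem {E J : Type*} [AddCommGroup E] [Module ℝ E] [Fintype J]
    {Γ : Set E} (hΓ : Convex ℝ Γ) (h0 : (0 : E) ∈ Γ) {r : J → ℝ} (hr : ∀ j, 0 ≤ r j) {g : J → E}
    (hg : ∀ j, g j ∈ Γ) : ∃ y ∈ Γ, ∑ j, r j • g j = (∑ j, r j) • y := by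
  rcases (Finset.sum_nonneg fun j _ => hr j).eq_or_lt' with hS | hS
  · have hzero := (Finset.sum_eq_zero_iff_of_nonneg fun j _ => hr j).1 hS
    refine ⟨0, h0, ?_⟩
    rw [smul_zero]
    exact Finset.sum_eq_zero fun j hj => by rw [hzero j hj, zero_smul]
  · refine ⟨Finset.univ.centerMass r g, hΓ.centerMass_mem (fun j _ => hr j) hS fun j _ => hg j, ?_⟩
    rw [Finset.centerMass, smul_inv_smul₀ hS.ne']

lemma wMin_nonneg {s : ℕ} (Γ : Set (Fin s → ℝ)) : 0 ≤ wMin Γ :=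
  Real.sInf_nonneg fun _ ⟨_, _, _, hr⟩ => hr ▸ gauge_nonneg _

lemma isWeightBound_wMin {s : ℕ} {Γ : Set (Fin s → ℝ)} (hΓ : Convex ℝ Γ) (h0 : 0 ∈ Γ) {J : Type*}
    [Fintype J] {γ : J → Fin s → ℕ} (hγ : ∀ j, (fun z => (γ j z : ℝ)) ∈ Γ) :
    IsWeightBound γ (wMin Γ) := by
  intro r hr u hu h
  obtain ⟨y, hy, hyr⟩ := exists_sum_smul_eq_smul_mem hΓ h0 hr hγ
  have hS : 0 ≤ ∑ j, r j := Finset.sum_nonneg fun j _ => hr j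
  have huy : toR (fun z => (u z : ℤ)) = (∑ j, r j) • y := by
    rw [← hyr]
    ext z
    simp [toR, ← h z]
  calc wMin Γ ≤ gauge Γ (toR fun z => (u z : ℤ)) :=
        csInf_le ⟨0, fun _ ⟨_, _, _, hx⟩ => hx ▸ gauge_nonneg _⟩
          ⟨_, fun z => mod_cast hu z, ⟨_, hS, y, hy, huy⟩, rfl⟩
    _ ≤ ∑ j, r j := gauge_le_of_mem hS (huy ▸ Set.smul_mem_smul_set hy)

variable {K : Type} [Field K] {n s : ℕ} {f : (Fin n → ℤ) →₀ K}
  {P : ((Fin n → ℤ) × (Fin s → ℤ)) →₀ K}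

lemma zero_mem_relPoly (f : (Fin n → ℤ) →₀ K) (P : ((Fin n → ℤ) × (Fin s → ℤ)) →₀ K) :
    0 ∈ relPoly f P :=
  subset_convexHull _ _ (Set.mem_insert _ _)

lemma toR_mem_relPoly {g : (Fin n → ℤ) × (Fin s → ℤ)} (hg : g ∈ P.support)
    (hw : gauge (NewtonPoly f) (toR g.1) < 1) : toR g.2 ∈ relPoly f P := by
  have hmem : (1 - gauge (NewtonPoly f) (toR g.1))⁻¹ • toR g.2 ∈ relPoly f P :=
    subset_convexHull _ _ (Set.mem_insert_of_mem _ ⟨g, hg, rfl⟩)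
  have hw0 := gauge_nonneg (s := NewtonPoly f) (toR g.1)
  have := (convex_convexHull ℝ _).smul_mem_of_zero_mem (zero_mem_relPoly f P) hmem
    (t := 1 - gauge (NewtonPoly f) (toR g.1)) ⟨by linarith, by linarith⟩
  rwa [smul_inv_smul₀ (by linarith)] at this

lemma isWeightBound_tensorExpT (k : ℕ) (hPnn : ∀ gm ∈ P.support, ∀ j, (0 : ℤ) ≤ gm.2 j)
    (hwt : ∀ gm ∈ P.support, gauge (NewtonPoly f) (toR gm.1) < 1) :
    IsWeightBound (tensorExpT k f P) (wMin (relPoly f P)) := by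
  refine isWeightBound_wMin (convex_convexHull ℝ _) (zero_mem_relPoly f P) ?_
  rintro ⟨-, e | e⟩
  · simpa [tensorExpT] using! zero_mem_relPoly f P
  · have hcast (z : Fin s) : ((e.1.2 z).toNat : ℝ) = e.1.2 z :=
      mod_cast congrArg (Int.cast : ℤ → ℝ) (Int.toNat_of_nonneg (hPnn _ e.2 z))
    simpa [tensorExpT, hcast] using! toR_mem_relPoly e.2 (hwt _ e.2)

lemma exists_one_le_exponent (hPnn : ∀ gm ∈ P.support, ∀ j, (0 : ℤ) ≤ gm.2 j)
    (hwne : ∃ u : Fin s → ℤ, (∀ i, (1 : ℤ) ≤ u i) ∧ toR u ∈ coneOf (relPoly f P)) (z : Fin s) :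
    ∃ gm ∈ P.support, 1 ≤ gm.2 z := by
  by_contra! hlt
  have hsub : relPoly f P ⊆ {v | v z = 0} := by
    refine convexHull_min ?_ (convex_hyperplane (LinearMap.proj (R := ℝ) z).isLinear 0)
    rintro v (rfl | ⟨gm, hgm, rfl⟩)
    · rfl
    · have : gm.2 z = 0 := le_antisymm (Int.lt_add_one_iff.1 (hlt gm hgm)) (hPnn gm hgm z)
      simp [toR, this]
  obtain ⟨u, hu, c, -, y, hy, huy⟩ := hwne
  have huz : u z = 0 := by simpa [toR, show y z = 0 from hsub hy] using congrFun huy z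
  exact absurd (hu z) (by simp [huz])

lemma exists_one_le_tensorExpT {k : ℕ} (hk : 1 ≤ k)
    (hPnn : ∀ gm ∈ P.support, ∀ j, (0 : ℤ) ≤ gm.2 j)
    (hwne : ∃ u : Fin s → ℤ, (∀ i, (1 : ℤ) ≤ u i) ∧ toR u ∈ coneOf (relPoly f P)) (z : Fin s) :
    ∃ j, 1 ≤ tensorExpT k f P j z := by
  obtain ⟨gm, hgm, hz⟩ := exists_one_le_exponent hPnn hwne z
  exact ⟨(⟨0, hk⟩, .inr ⟨gm, hgm⟩), Int.toNat_le_toNat hz⟩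

end RelativePolytope

theorem oneSubZeta_pow_dvd_tensorSum {p a n s k : ℕ} [Fact p.Prime] (ha : 1 ≤ a) (hk : 1 ≤ k)
    {f : (Fin n → ℤ) →₀ Omg p} (hf : ∀ μ, f μ ^ p ^ a = f μ)
    {P : ((Fin n → ℤ) × (Fin s → ℤ)) →₀ Omg p} (hP : ∀ gm, P gm ^ p ^ a = P gm)
    (hPnn : ∀ gm ∈ P.support, ∀ j, (0 : ℤ) ≤ gm.2 j)
    (hwt : ∀ gm ∈ P.support, gauge (NewtonPoly f) (toR gm.1) < 1)
    (hwne : ∃ u : Fin s → ℤ, (∀ i, (1 : ℤ) ≤ u i) ∧ toR u ∈ coneOf (relPoly f P)) {m K : ℕ}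
    (hm : 1 ≤ m) (hK : (K : ℝ) < (a * m : ℕ) * ((p : ℝ) - 1) * wMin (relPoly f P) + 1) :
    oneSubZeta p ^ K ∣ tensorSum p a k f P m :=
  (oneSubZeta_pow_dvd_familySum (Nat.mul_pos ha hm)
    (fun j => pow_pow_mul_eq_self (tensorCoeff_pow_fixed hf hP j) m) _
    (isWeightBound_tensorExpT k hPnn hwt) (exists_one_le_tensorExpT hk hPnn hwne) hK).mul_left _

/-! ### Rationality, integrality and divisibility -/

theorem exists_reciprocal_roots_Naff {p a n s k : ℕ} [Fact p.Prime] (ha : 1 ≤ a)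
    {f : (Fin n → ℤ) →₀ Omg p} (hf : ∀ μ, f μ ^ p ^ a = f μ)
    {P : ((Fin n → ℤ) × (Fin s → ℤ)) →₀ Omg p} (hP : ∀ gm, P gm ^ p ^ a = P gm)
    (hPnn : ∀ gm ∈ P.support, ∀ j, (0 : ℤ) ≤ gm.2 j) {Θ : AddChar (ZMod p) ℂ}
    {σ : CyclotomicField p ℚ →ₐ[ℚ] ℂ}
    (hσ : σ (algebraMap (CycInt p) (CyclotomicField p ℚ) (zetaInt p)) = Θ 1) :
    ∃ (R S : ℕ) (α : Fin R → ℂ) (β : Fin S → ℂ),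
      (∀ i, α i ≠ 0) ∧ (∀ j, β j ≠ 0) ∧ (∀ i j, α i ≠ β j) ∧
      (∀ m : ℕ, (∏ i, (1 - Polynomial.C (α i) * Polynomial.X)).coeff m ∈ σ.toRingHom.fieldRange) ∧
      (∀ m : ℕ, (∏ j, (1 - Polynomial.C (β j) * Polynomial.X)).coeff m ∈ σ.toRingHom.fieldRange) ∧
      (∀ m : ℕ, 1 ≤ m →
        (-1 : ℂ) ^ (s + 1) * Naff p a Θ f P k m = ∑ j, β j ^ m - ∑ i, α i ^ m) ∧
      (∀ i, IsIntegral ℤ (α i)) ∧ ∀ j, IsIntegral ℤ (β j) := by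
  obtain ⟨R, S, α, β, hα0, hβ0, hαβ, hα, hβ, hsum⟩ :=
    (hasRationalZeta_tensorSum (k := k) ha hf hP).exists_reciprocal_roots σ.toRingHom
  refine ⟨R, S, α, β, hα0, hβ0, hαβ, hα, hβ, fun m hm => ?_, isIntegral_of_sum_pow_sub_sum_pow
    (isIntegral_of_prod_one_sub_coeff_mem_fieldRange σ hα)
    (isIntegral_of_prod_one_sub_coeff_mem_fieldRange σ hβ) hαβ fun m hm => ?_⟩
  · rw [← hsum m hm]
    exact (map_tensorSum ha hf hP hPnn (σ := σ.toRingHom) hσ hm).symm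
  · rw [← hsum m hm]
    exact (NumberField.RingOfIntegers.isIntegral_coe _).map (σ.restrictScalars ℤ)

theorem tensor_power_affine_rational_and_divisibility_general
    (p a n s k : ℕ) [Fact p.Prime] (ha : 1 ≤ a) (hk : 1 ≤ k)
    (ζ : ℂ) (hζ : IsPrimitiveRoot ζ p) (Θ : AddChar (ZMod p) ℂ) (hΘ : Θ ≠ 1)
    (f : (Fin n → ℤ) →₀ Omg p) (hf : ∀ μ, f μ ^ p ^ a = f μ)
    (P : ((Fin n → ℤ) × (Fin s → ℤ)) →₀ Omg p) (hP : ∀ gm, P gm ^ p ^ a = P gm)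
    (hPnn : ∀ gm ∈ P.support, ∀ j, (0 : ℤ) ≤ gm.2 j)
    (hwt : ∀ gm ∈ P.support, gauge (NewtonPoly f) (toR gm.1) < 1)
    (hwne : ∃ u : Fin s → ℤ, (∀ i, (1 : ℤ) ≤ u i) ∧ toR u ∈ coneOf (relPoly f P)) :
    ∃ (R S : ℕ) (α : Fin R → ℂ) (β : Fin S → ℂ),
      (∀ i, α i ≠ 0) ∧ (∀ j, β j ≠ 0) ∧ (∀ i j, α i ≠ β j) ∧
      (∀ m : ℕ, (∏ i, (1 - Polynomial.C (α i) * Polynomial.X)).coeff m ∈ cyclo ζ) ∧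
      (∀ m : ℕ, (∏ j, (1 - Polynomial.C (β j) * Polynomial.X)).coeff m ∈ cyclo ζ) ∧
      (∀ m : ℕ, 1 ≤ m →
        (-1 : ℂ) ^ (s + 1) * Naff p a Θ f P k m = ∑ j, β j ^ m - ∑ i, α i ^ m) ∧
      (∀ i, IsIntegral ℤ (α i)) ∧ (∀ j, IsIntegral ℤ (β j)) ∧
      ∀ F : Subfield ℂ, FiniteDimensional ℚ F → ζ ∈ F →
        (∀ i, α i ∈ F) → (∀ j, β j ∈ F) →
        ∀ Pid : Ideal (NumberField.RingOfIntegers F), Pid.IsMaximal →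
          (p : NumberField.RingOfIntegers F) ∈ Pid →
          (∀ i, wMin (relPoly f P) ≤
            (ordIn F Pid (α i) : ℝ) / ((ordIn F Pid ((p : ℂ)) : ℝ) * (a : ℝ))) ∧
          (∀ j, wMin (relPoly f P) ≤
            (ordIn F Pid (β j) : ℝ) / ((ordIn F Pid ((p : ℂ)) : ℝ) * (a : ℝ))) := by
  obtain ⟨σ, hσ⟩ := exists_cyclotomicField_algHom (isPrimitiveRoot_addChar_apply_one hΘ)
  have hσF {F : Subfield ℂ} (hF : ζ ∈ F) (x : CyclotomicField p ℚ) : σ x ∈ F := by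
    obtain ⟨i, -, hi⟩ := hζ.eq_pow_of_pow_eq_one (addChar_apply_one_pow Θ)
    exact cyclotomicField_map_mem σ (hσ ▸ hi ▸ pow_mem hF i) x
  have hcyclo : σ.toRingHom.fieldRange ≤ cyclo ζ := by
    rintro _ ⟨x, rfl⟩
    exact hσF (Subfield.subset_closure (Set.mem_singleton ζ)) x
  obtain ⟨R, S, α, β, hα0, hβ0, hαβ, hα, hβ, hsum, hαint, hβint⟩ :=
    exists_reciprocal_roots_Naff (k := k) ha hf hP hPnn hσ
  refine ⟨R, S, α, β, hα0, hβ0, hαβ, fun m => hcyclo (hα m), fun m => hcyclo (hβ m), hsum,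
    hαint, hβint, fun F hF hζF hαF hβF I hI hpI => ?_⟩
  have : NumberField F := { to_charZero := inferInstance, to_finiteDimensional := hF }
  exact le_ordIn_div_of_oneSubZeta_pow_dvd_sum_pow
    (σ.toRingHom.comp (algebraMap (CycInt p) (CyclotomicField p ℚ))) ha (wMin_nonneg _)
    (fun m K => oneSubZeta_pow_dvd_tensorSum ha hk hf hP hPnn hwt hwne) hα0 hβ0 hαβ
    (fun m hm => (map_tensorSum ha hf hP hPnn hσ hm).trans (hsum m hm)) hαint hβint F
    (fun x => hσF hζF _) hαF hβF I hpI

/-- rationality and `p`-adic divisibility over the affine base: the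
reciprocal zeros and poles are algebraic integers with `ord_q ≥ w(Γ)` for every choice
of number field `F ⊇ ℚ(ζ_p)` containing them and every maximal ideal `𝔭 | p` of `𝒪_F`,
where `ord_q = v_𝔭/(e·a)` and `e = v_𝔭(p)` is the absolute ramification index. -/
theorem tensor_power_affine_rational_and_divisibility
    (p a n s k : ℕ) [Fact p.Prime] (ha : 1 ≤ a) (hn : 1 ≤ n) (hs : 1 ≤ s) (hk : 1 ≤ k)
    (ζ : ℂ) (hζ : IsPrimitiveRoot ζ p)
    (Θ : AddChar (ZMod p) ℂ) (hΘ : Θ ≠ 1) (hΘval : ∀ z, Θ z ∈ cyclo ζ)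
    (f : (Fin n → ℤ) →₀ Omg p) (hf : ∀ μ, f μ ^ p ^ a = f μ)
    (P : ((Fin n → ℤ) × (Fin s → ℤ)) →₀ Omg p) (hP : ∀ gm, P gm ^ p ^ a = P gm)
    (hPnn : ∀ gm ∈ P.support, ∀ j, (0 : ℤ) ≤ gm.2 j)
    (hdim : Submodule.span ℝ (NewtonPoly f) = ⊤)
    (hnd : Nondeg f)
    (hwt : ∀ gm ∈ P.support, gauge (NewtonPoly f) (toR gm.1) < 1)
    (hΓ : relPoly f P ≠ {0})
    (hwne : ∃ u : Fin s → ℤ, (∀ i, (1 : ℤ) ≤ u i) ∧ toR u ∈ coneOf (relPoly f P))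
    :
    ∃ (R S : ℕ) (α : Fin R → ℂ) (β : Fin S → ℂ),
      (∀ i, α i ≠ 0) ∧ (∀ j, β j ≠ 0) ∧ (∀ i j, α i ≠ β j) ∧
      (∀ m : ℕ, (∏ i, (1 - Polynomial.C (α i) * Polynomial.X)).coeff m ∈ cyclo ζ) ∧
      (∀ m : ℕ, (∏ j, (1 - Polynomial.C (β j) * Polynomial.X)).coeff m ∈ cyclo ζ) ∧
      (∀ m : ℕ, 1 ≤ m →
        (-1 : ℂ) ^ (s + 1) * Naff p a Θ f P k m = ∑ j, β j ^ m - ∑ i, α i ^ m) ∧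
      (∀ i, IsIntegral ℤ (α i)) ∧ (∀ j, IsIntegral ℤ (β j)) ∧
      ∀ F : Subfield ℂ, FiniteDimensional ℚ F → ζ ∈ F →
        (∀ i, α i ∈ F) → (∀ j, β j ∈ F) →
        ∀ Pid : Ideal (NumberField.RingOfIntegers F), Pid.IsMaximal →
          (p : NumberField.RingOfIntegers F) ∈ Pid →
          (∀ i, wMin (relPoly f P) ≤
            (ordIn F Pid (α i) : ℝ) / ((ordIn F Pid ((p : ℂ)) : ℝ) * (a : ℝ))) ∧
          (∀ j, wMin (relPoly f P) ≤
            (ordIn F Pid (β j) : ℝ) / ((ordIn F Pid ((p : ℂ)) : ℝ) * (a : ℝ))) := by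
  exact tensor_power_affine_rational_and_divisibility_general p a n s k ha hk ζ hζ Θ hΘ f hf P hP
    hPnn hwt hwne

end HS
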